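/- Every simple hexagon can be partitioned into strictly convex quadrilaterals using at most 3 Steiner points placed in its interior (i.e., there is a decomposition of the hexagon into strictly convex quadrilaterals whose vertex set consists of the 6 hexagon vertices plus at most 3 interior points). -/

import Mathlib

open scoped BigOperators

/-- Points in the plane. -/
abbrev Pt := ℝ × ℝ

/-- 2×2 determinant (cross product) of two plane vectors. -/
noncomputable def det2 (p q : Pt) : ℝ := p.1 * q.2 - p.2 * q.1

/-- Open half-plane strictly to the left of the directed line from `p` to `q`. -/
def Lhp (p q : Pt) : Set Pt := {x | 0 < det2 (q - p) (x - p)}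

/-- Open half-plane strictly to the right of the directed line from `p` to `q`. -/
def Rhp (p q : Pt) : Set Pt := {x | det2 (q - p) (x - p) < 0}

/-- The boundary of the polygon with vertices `v 0, …, v (n-1)`:
the union of its (cyclically consecutive) edges. -/
def polyBoundary {n : ℕ} [NeZero n] (v : Fin n → Pt) : Set Pt :=
  ⋃ i : Fin n, segment ℝ (v i) (v (i + 1))

/-- `v` describes a simple polygon: at least 3 distinct vertices, and two distinct
edges may only meet at a common endpoint. -/
def IsSimplePolygon {n : ℕ} [NeZero n] (v : Fin n → Pt) : Prop :=
  3 ≤ n ∧ Function.Injective v ∧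
    ∀ i j : Fin n, i ≠ j →
      segment ℝ (v i) (v (i + 1)) ∩ segment ℝ (v j) (v (j + 1)) ⊆
        ({v i, v (i + 1)} ∩ {v j, v (j + 1)} : Set Pt)

/-- The interior of the polygon: the union of the bounded connected components of the
complement of the boundary. -/
def polyInterior {n : ℕ} [NeZero n] (v : Fin n → Pt) : Set Pt :=
  {x | x ∉ polyBoundary v ∧
    Bornology.IsBounded (connectedComponentIn (polyBoundary v)ᶜ x)}

/-- The (closed) polygonal region: interior together with boundary. -/
def polyRegion {n : ℕ} [NeZero n] (v : Fin n → Pt) : Set Pt :=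
  polyBoundary v ∪ polyInterior v

/-- Twice the signed area of the polygon. -/
noncomputable def signedArea2 {n : ℕ} [NeZero n] (v : Fin n → Pt) : ℝ :=
  ∑ i : Fin n, det2 (v i) (v (i + 1))

/-- The vertices are listed in counterclockwise order. -/
def IsCCW {n : ℕ} [NeZero n] (v : Fin n → Pt) : Prop := 0 < signedArea2 v

/-- The vertex `v i` of a counterclockwise polygon is strictly convex
(interior angle strictly less than 180°). -/
def StrictlyConvexAt {n : ℕ} [NeZero n] (v : Fin n → Pt) (i : Fin n) : Prop :=
  0 < det2 (v i - v (i - 1)) (v (i + 1) - v i)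

/-- The vertex `v i` of a counterclockwise polygon is reflex
(interior angle greater than or equal to 180°). -/
def ReflexAt {n : ℕ} [NeZero n] (v : Fin n → Pt) (i : Fin n) : Prop :=
  det2 (v i - v (i - 1)) (v (i + 1) - v i) ≤ 0

/-- The wedge of vertex `v i`:  `L(v⁻, v) ∩ R(v⁺, v) ∩ interior P`. -/
def Wedge {n : ℕ} [NeZero n] (v : Fin n → Pt) (i : Fin n) : Set Pt :=
  Lhp (v (i - 1)) (v i) ∩ Rhp (v (i + 1)) (v i) ∩ polyInterior v

/-- `x` sees `y` inside the polygon `v`: the segment `xy` is contained in the region. -/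
def Sees {n : ℕ} [NeZero n] (v : Fin n → Pt) (x y : Pt) : Prop :=
  segment ℝ x y ⊆ polyRegion v

/-- The kernel of the polygon: the points of the region that see every point of it. -/
def polyKernel {n : ℕ} [NeZero n] (v : Fin n → Pt) : Set Pt :=
  {x ∈ polyRegion v | ∀ y ∈ polyRegion v, segment ℝ x y ⊆ polyRegion v}

/-- The open triangle on three points. -/
def openTriangle (a b c : Pt) : Set Pt := interior (convexHull ℝ {a, b, c})

/-- `a b c d` (in counterclockwise order) form a strictly convex quadrilateral. -/
def StrictConvexQuad (a b c d : Pt) : Prop :=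
  0 < det2 (b - a) (c - b) ∧ 0 < det2 (c - b) (d - c) ∧
    0 < det2 (d - c) (a - d) ∧ 0 < det2 (a - d) (b - a)

/-- The closed region of a quadrilateral cell. -/
noncomputable def quadSet (q : Pt × Pt × Pt × Pt) : Set Pt :=
  convexHull ℝ {q.1, q.2.1, q.2.2.1, q.2.2.2}

/-- The closed region of a triangular cell. -/
noncomputable def triSet (t : Pt × Pt × Pt) : Set Pt :=
  convexHull ℝ {t.1, t.2.1, t.2.2}

/-- The vertices of a quadrilateral cell. -/
noncomputable def quadVerts (q : Pt × Pt × Pt × Pt) : Finset Pt :=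
  {q.1, q.2.1, q.2.2.1, q.2.2.2}

/-- The vertices of a triangular cell. -/
noncomputable def triVerts (t : Pt × Pt × Pt) : Finset Pt :=
  {t.1, t.2.1, t.2.2}

/-- A strictly convex quadrangulation of a finite planar point set `S`:
a decomposition of `conv S` into strictly convex quadrilaterals and at most one
(nondegenerate) triangle, with pairwise disjoint interiors, whose vertex set contains
`S`, and such that no point of `S` is interior to a cell. -/
structure ConvexQuadrangulation (S : Finset Pt) where
  quads : Finset (Pt × Pt × Pt × Pt)
  tris : Finset (Pt × Pt × Pt)
  tris_card : tris.card ≤ 1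
  quads_convex : ∀ q ∈ quads, StrictConvexQuad q.1 q.2.1 q.2.2.1 q.2.2.2
  tris_nondeg : ∀ t ∈ tris, 0 < det2 (t.2.1 - t.1) (t.2.2 - t.2.1)
  covers : ((⋃ q ∈ quads, quadSet q) ∪ ⋃ t ∈ tris, triSet t) = convexHull ℝ (S : Set Pt)
  cells_disjoint : ((quadSet '' quads) ∪ (triSet '' tris)).Pairwise
    fun A B => interior A ∩ interior B = ∅
  verts_cover : (S : Set Pt) ⊆
    ((quads.biUnion quadVerts ∪ tris.biUnion triVerts : Finset Pt) : Set Pt)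
  no_pt_in_quad_interior : ∀ q ∈ quads, ∀ p ∈ S, p ∉ interior (quadSet q)
  no_pt_in_tri_interior : ∀ t ∈ tris, ∀ p ∈ S, p ∉ interior (triSet t)

/-- The Steiner points of a quadrangulation: vertices of the decomposition not in `S`. -/
noncomputable def steinerPoints (S : Finset Pt) (Q : ConvexQuadrangulation S) : Finset Pt :=
  (Q.quads.biUnion quadVerts ∪ Q.tris.biUnion triVerts) \ S

/-!
A simple polygon has a side of each edge on which its winding number is `±1`, and cutting along
internal diagonals triangulates it. Up to rotation there are four triangulations of a hexagon. Each
of them is first viewed as a quadrangulation whose quadrilaterals are degenerate, with some vertices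
coinciding or angles equal to 180°: the Steiner points sit at vertices of the hexagon or at
midpoints of diagonals. Moving them by an infinitesimal amount in suitable directions makes all
quadrilaterals strictly convex. That the convex cells tile the polygon is checked by additivity of
winding numbers: the boundaries of the cells add up to the boundary of the polygon.
-/

open Filter Topology

/-! ### Determinants and orientation -/

lemma det2_self (p : Pt) : det2 p p = 0 := by simp only [det2]; ring

lemma det2_zero_right (p : Pt) : det2 p 0 = 0 := by
  simp only [det2, Prod.snd_zero, Prod.fst_zero, mul_zero, sub_zero]

lemma det2_swap (p q : Pt) : det2 q p = -det2 p q := by simp only [det2]; ring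

lemma det2_add_left (p q r : Pt) : det2 (p + q) r = det2 p r + det2 q r := by
  simp only [det2, Prod.fst_add, Prod.snd_add]; ring

lemma det2_add_right (p q r : Pt) : det2 p (q + r) = det2 p q + det2 p r := by
  simp only [det2, Prod.fst_add, Prod.snd_add]; ring

lemma det2_smul_left (t : ℝ) (p q : Pt) : det2 (t • p) q = t * det2 p q := by
  simp only [det2, Prod.smul_fst, Prod.smul_snd, smul_eq_mul]; ring

lemma det2_smul_right (t : ℝ) (p w : Pt) : det2 p (t • w) = t * det2 p w := by
  simp only [det2, Prod.smul_fst, Prod.smul_snd, smul_eq_mul]; ring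

lemma det2_sub_rev_left (a b d : Pt) : det2 (a - b) d = -det2 (b - a) d := by
  simp only [det2, Prod.fst_sub, Prod.snd_sub]; ring

lemma det2_midpoint_sub_left (a b d : Pt) : det2 (midpoint ℝ a b - a) d = det2 (b - a) d / 2 := by
  rw [midpoint_sub_left, det2_smul_left, invOf_eq_inv, inv_mul_eq_div]

lemma det2_plucker (a b c e : Pt) :
    det2 a b * det2 c e - det2 a c * det2 b e + det2 a e * det2 b c = 0 := by
  simp only [det2]; ring

lemma tendsto_det2 {α : Type*} {l : Filter α} {f g : α → Pt} {a b : Pt}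
    (hf : Tendsto f l (𝓝 a)) (hg : Tendsto g l (𝓝 b)) :
    Tendsto (fun t => det2 (f t) (g t)) l (𝓝 (det2 a b)) := by
  have hc : Continuous fun p : Pt × Pt => det2 p.1 p.2 := by unfold det2; fun_prop
  exact (hc.tendsto (a, b)).comp (hf.prodMk_nhds hg)

/-- The Euclidean inner product of two plane vectors. -/
noncomputable def dot2 (p q : Pt) : ℝ := p.1 * q.1 + p.2 * q.2

/-- Twice the signed area of the triangle `a b x`; positive when `x` lies to the left of the
directed line from `a` to `b`. -/
noncomputable def orient (a b x : Pt) : ℝ := det2 (b - a) (x - a)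

lemma orient_eq (a b x : Pt) :
    orient a b x = (b.1 - a.1) * (x.2 - a.2) - (b.2 - a.2) * (x.1 - a.1) := rfl

lemma orient_left (a b : Pt) : orient a b a = 0 := by rw [orient_eq]; ring

lemma orient_right (a b : Pt) : orient a b b = 0 := by rw [orient_eq]; ring

lemma orient_rotate (a b c : Pt) : orient b c a = orient a b c := by simp only [orient_eq]; ring

lemma orient_swap (a b x : Pt) : orient b a x = -orient a b x := by simp only [orient_eq]; ring

lemma det2_sub_sub (a b x : Pt) : det2 (a - x) (b - x) = orient a b x := by
  simp only [orient, det2, Prod.fst_sub, Prod.snd_sub]; ring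

lemma orient_smul_add_smul (a b x y : Pt) {s t : ℝ} (h : s + t = 1) :
    orient a b (s • x + t • y) = s * orient a b x + t * orient a b y := by
  obtain rfl : s = 1 - t := by linarith
  simp only [orient_eq, Prod.fst_add, Prod.snd_add, Prod.smul_fst, Prod.smul_snd, smul_eq_mul]
  ring

lemma orient_add (a b m w : Pt) : orient a b (m + w) = orient a b m + det2 (b - a) w := by
  simp only [orient, det2, Prod.fst_sub, Prod.snd_sub, Prod.fst_add, Prod.snd_add]; ring

lemma orient_add_smul_self (o a d : Pt) (t : ℝ) : orient o a (o + t • d) = t * det2 (a - o) d := by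
  rw [orient_add, orient_left, det2_smul_right, zero_add]

lemma orient_self_add_smul (o a d : Pt) (t : ℝ) : orient o (o + t • d) a = t * det2 d (a - o) := by
  rw [← orient_rotate, orient_swap, orient_rotate, orient_add_smul_self, det2_swap, mul_neg,
    neg_neg]

lemma orient_midpoint (a b x y : Pt) :
    orient a b (midpoint ℝ x y) = (orient a b x + orient a b y) / 2 := by
  rw [midpoint_eq_smul_add, smul_add, orient_smul_add_smul _ _ _ _ invOf_two_add_invOf_two,
    invOf_eq_inv]
  ring

lemma tendsto_orient {α : Type*} {l : Filter α} {f g h : α → Pt} {a b c : Pt}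
    (hf : Tendsto f l (𝓝 a)) (hg : Tendsto g l (𝓝 b)) (hh : Tendsto h l (𝓝 c)) :
    Tendsto (fun t => orient (f t) (g t) (h t)) l (𝓝 (orient a b c)) := by
  have hc : Continuous fun p : Pt × Pt × Pt => orient p.1 p.2.1 p.2.2 := by
    unfold orient det2; fun_prop
  exact (hc.tendsto (a, b, c)).comp (hf.prodMk_nhds (hg.prodMk_nhds hh))

lemma continuous_orient (a b : Pt) : Continuous (orient a b) := by
  unfold orient det2; fun_prop

lemma mem_segment_iff_orient_dot2 {a b x : Pt} :
    x ∈ segment ℝ a b ↔ orient a b x = 0 ∧ dot2 (a - x) (b - x) ≤ 0 := by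
  constructor
  · rintro ⟨s, t, hs, ht, hst, rfl⟩
    refine ⟨by rw [orient_smul_add_smul a b a b hst, orient_left, orient_right]; ring, ?_⟩
    have key : dot2 (a - (s • a + t • b)) (b - (s • a + t • b)) =
        -(s * t * ((a.1 - b.1) ^ 2 + (a.2 - b.2) ^ 2)) := by
      obtain rfl : s = 1 - t := by linarith
      simp only [dot2, Prod.fst_sub, Prod.snd_sub, Prod.fst_add, Prod.snd_add, Prod.smul_fst,
        Prod.smul_snd, smul_eq_mul]
      ring
    rw [key]
    exact neg_nonpos.2 (by positivity)
  · rintro ⟨h0, h1⟩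
    rcases eq_or_ne a x with rfl | hax
    · exact left_mem_segment ℝ _ _
    have hN : 0 < dot2 (a - x) (a - x) := by
      refine lt_of_le_of_ne (add_nonneg (mul_self_nonneg _) (mul_self_nonneg _)) fun h => hax ?_
      obtain ⟨h1, h2⟩ := mul_self_add_mul_self_eq_zero.1 h.symm
      exact Prod.ext (sub_eq_zero.1 h1) (sub_eq_zero.1 h2)
    have hD : 0 < dot2 (a - x) (a - x) - dot2 (a - x) (b - x) := by linarith
    refine ⟨-dot2 (a - x) (b - x) / (dot2 (a - x) (a - x) - dot2 (a - x) (b - x)),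
      dot2 (a - x) (a - x) / (dot2 (a - x) (a - x) - dot2 (a - x) (b - x)),
      div_nonneg (neg_nonneg.2 h1) hD.le, div_nonneg hN.le hD.le, by field_simp; ring, ?_⟩
    rw [orient_eq] at h0
    ext
    · simp only [Prod.fst_add, Prod.smul_fst, smul_eq_mul]
      field_simp
      simp only [dot2, Prod.fst_sub, Prod.snd_sub]
      linear_combination (x.2 - a.2) * h0
    · simp only [Prod.snd_add, Prod.smul_snd, smul_eq_mul]
      field_simp
      simp only [dot2, Prod.fst_sub, Prod.snd_sub]
      linear_combination (a.1 - x.1) * h0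

/-! ### Winding numbers -/

/-- The complex number `conj p * q`, whose argument is the oriented angle from `p` to `q`. -/
noncomputable def dotCross (p q : Pt) : ℂ := ⟨dot2 p q, det2 p q⟩

/-- The oriented angle in `(-π, π]` under which the segment from `a` to `b` is seen from `x`. -/
noncomputable def subtendedAngle (a b x : Pt) : ℝ := (dotCross (a - x) (b - x)).arg

lemma dotCross_eq_conj_mul (p q : Pt) : dotCross p q =
    (starRingEnd ℂ) (Complex.equivRealProd.symm p) * Complex.equivRealProd.symm q := by
  apply Complex.ext
  · simp [dotCross, dot2, Complex.equivRealProd]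
  · simp [dotCross, det2, Complex.equivRealProd]; ring

lemma dotCross_swap (p q : Pt) : dotCross q p = (starRingEnd ℂ) (dotCross p q) := by
  rw [dotCross_eq_conj_mul, dotCross_eq_conj_mul, map_mul, Complex.conj_conj, mul_comm]

lemma coe_arg_dotCross {p q : Pt} (hp : p ≠ 0) (hq : q ≠ 0) :
    ((dotCross p q).arg : Real.Angle) =
      (Complex.equivRealProd.symm q).arg - (Complex.equivRealProd.symm p).arg := by
  have ne_zero {r : Pt} (hr : r ≠ 0) : Complex.equivRealProd.symm r ≠ 0 := fun h =>
    hr (Complex.equivRealProd.symm.injective (h.trans (Complex.ext rfl rfl)))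
  rw [dotCross_eq_conj_mul,
    Complex.arg_mul_coe_angle ((map_ne_zero (starRingEnd ℂ)).2 (ne_zero hp)) (ne_zero hq),
    Complex.arg_conj_coe_angle]
  abel

lemma dotCross_mem_slitPlane {a b x : Pt} (h : x ∉ segment ℝ a b) :
    dotCross (a - x) (b - x) ∈ Complex.slitPlane := by
  rw [Complex.mem_slitPlane_iff]
  by_contra! hc
  exact h (mem_segment_iff_orient_dot2.2 ⟨(det2_sub_sub a b x).symm.trans hc.2, hc.1⟩)

lemma continuous_dotCross_sub (a b : Pt) :
    Continuous fun x : Pt => dotCross (a - x) (b - x) := by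
  have h : Continuous fun x : Pt => (dot2 (a - x) (b - x), det2 (a - x) (b - x)) := by
    unfold dot2 det2; fun_prop
  exact Complex.equivRealProdCLM.symm.continuous.comp h

lemma subtendedAngle_swap {a b x : Pt} (h : x ∉ segment ℝ a b) :
    subtendedAngle b a x = -subtendedAngle a b x := by
  rw [subtendedAngle, dotCross_swap, Complex.arg_conj,
    if_neg (Complex.slitPlane_arg_ne_pi (dotCross_mem_slitPlane h)), subtendedAngle]

lemma continuousAt_subtendedAngle {a b x : Pt} (h : x ∉ segment ℝ a b) :
    ContinuousAt (subtendedAngle a b) x :=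
  ContinuousAt.comp (f := fun y : Pt => dotCross (a - y) (b - y))
    (Complex.continuousAt_arg (dotCross_mem_slitPlane h))
    (continuous_dotCross_sub a b).continuousAt

lemma not_mem_segment_of_orient_ne_zero {a b x : Pt} (h : orient a b x ≠ 0) :
    x ∉ segment ℝ a b := fun hx => h (mem_segment_iff_orient_dot2.1 hx).1

lemma subtendedAngle_lt_pi {a b x : Pt} (h : x ∉ segment ℝ a b) :
    subtendedAngle a b x < Real.pi :=
  (Complex.arg_le_pi _).lt_of_ne (Complex.slitPlane_arg_ne_pi (dotCross_mem_slitPlane h))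

lemma subtendedAngle_pos {a b x : Pt} (h : 0 < orient a b x) : 0 < subtendedAngle a b x := by
  have him : 0 < (dotCross (a - x) (b - x)).im := h.trans_eq (det2_sub_sub a b x).symm
  exact (Complex.arg_nonneg_iff.2 him.le).lt_of_ne' fun h0 =>
    him.ne' (Complex.arg_eq_zero_iff.1 h0).2

section Winding

variable {n : ℕ} [NeZero n] {v : Fin n → Pt}

/-- The total angle swept by the closed polygon `v` as seen from `x`. -/
noncomputable def windingAngle (v : Fin n → Pt) (x : Pt) : ℝ :=
  ∑ i : Fin n, subtendedAngle (v i) (v (i + 1)) x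

/-- The winding number of the closed polygon `v` about `x`; rounding makes it an integer also
when `x` is on the boundary, where its value is meaningless. -/
noncomputable def windingNumber (v : Fin n → Pt) (x : Pt) : ℤ :=
  round (windingAngle v x / (2 * Real.pi))

lemma sum_sub_shift_eq_zero {M : Type*} [AddCommGroup M] (g : Fin n → M) :
    ∑ i : Fin n, (g (i + 1) - g i) = 0 := by
  rw [Finset.sum_sub_distrib, sub_eq_zero]
  exact Equiv.sum_comp (Equiv.addRight (1 : Fin n)) g

lemma exists_windingAngle_eq_two_pi_mul {x : Pt} (hx : ∀ i, v i ≠ x) :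
    ∃ k : ℤ, windingAngle v x = 2 * Real.pi * k := by
  let θ : Fin n → Real.Angle := fun i => (Complex.equivRealProd.symm (v i - x)).arg
  have hθ (i : Fin n) :
      (subtendedAngle (v i) (v (i + 1)) x : Real.Angle) = θ (i + 1) - θ i :=
    coe_arg_dotCross (sub_ne_zero.2 (hx i)) (sub_ne_zero.2 (hx (i + 1)))
  have h : (windingAngle v x : Real.Angle) = (0 : ℝ) := by
    rw [windingAngle, ← Real.Angle.coe_coeHom, map_sum]
    simp only [Real.Angle.coe_coeHom, hθ, sum_sub_shift_eq_zero, Real.Angle.coe_zero]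
  obtain ⟨k, hk⟩ := Real.Angle.angle_eq_iff_two_pi_dvd_sub.1 h
  exact ⟨k, by linarith⟩

lemma dot2_pos_ne_zero {u p : Pt} (h : 0 < dot2 u p) : u ≠ 0 ∧ p ≠ 0 := by
  constructor <;> rintro rfl <;> simp [dot2] at h

lemma subtendedAngle_eq_arg_sub_arg {a b x u : Pt} (ha : 0 < dot2 u (a - x))
    (hb : 0 < dot2 u (b - x)) :
    subtendedAngle a b x = (dotCross u (b - x)).arg - (dotCross u (a - x)).arg := by
  obtain ⟨hu, ha0⟩ := dot2_pos_ne_zero ha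
  have hb0 := (dot2_pos_ne_zero hb).2
  have hangle : (subtendedAngle a b x : Real.Angle) =
      ((dotCross u (b - x)).arg - (dotCross u (a - x)).arg : ℝ) := by
    rw [subtendedAngle, Real.Angle.coe_sub, coe_arg_dotCross ha0 hb0, coe_arg_dotCross hu hb0,
      coe_arg_dotCross hu ha0]
    abel
  have abs_arg_lt {p : Pt} (hp : 0 < dot2 u p) : |(dotCross u p).arg| < Real.pi / 2 :=
    Complex.abs_arg_lt_pi_div_two_iff.2 (.inl hp)
  obtain ⟨hb1, hb2⟩ := abs_lt.1 (abs_arg_lt hb)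
  obtain ⟨ha1, ha2⟩ := abs_lt.1 (abs_arg_lt ha)
  have hreal := congrArg Real.Angle.toReal hangle
  rwa [subtendedAngle, Real.Angle.toReal_coe_eq_self_iff_mem_Ioc.2
      ⟨Complex.neg_pi_lt_arg _, Complex.arg_le_pi _⟩,
    Real.Angle.toReal_coe_eq_self_iff_mem_Ioc.2 ⟨by linarith, by linarith⟩] at hreal

lemma windingAngle_eq_zero_of_dot2_pos {x u : Pt} (h : ∀ i, 0 < dot2 u (v i - x)) :
    windingAngle v x = 0 := by
  rw [windingAngle, Finset.sum_congr rfl fun i _ => subtendedAngle_eq_arg_sub_arg (h i) (h (i + 1))]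
  exact sum_sub_shift_eq_zero fun i => (dotCross u (v i - x)).arg

lemma windingNumber_eq_zero_of_dot2_pos {x u : Pt} (h : ∀ i, 0 < dot2 u (v i - x)) :
    windingNumber v x = 0 := by
  rw [windingNumber, windingAngle_eq_zero_of_dot2_pos h, zero_div, round_zero]

lemma segment_subset_polyBoundary (v : Fin n → Pt) (i : Fin n) :
    segment ℝ (v i) (v (i + 1)) ⊆ polyBoundary v :=
  Set.subset_iUnion (fun i : Fin n => segment ℝ (v i) (v (i + 1))) i

lemma vertex_mem_polyBoundary (v : Fin n → Pt) (i : Fin n) : v i ∈ polyBoundary v :=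
  segment_subset_polyBoundary v i (left_mem_segment ℝ _ _)

lemma windingAngle_eq_two_pi_mul {x : Pt} (hx : x ∉ polyBoundary v) :
    windingAngle v x = 2 * Real.pi * windingNumber v x := by
  obtain ⟨k, hk⟩ : ∃ k : ℤ, windingAngle v x = 2 * Real.pi * k :=
    exists_windingAngle_eq_two_pi_mul fun i h => hx (h ▸ vertex_mem_polyBoundary v i)
  rw [windingNumber, hk, mul_div_cancel_left₀ _ (by positivity), round_intCast]

lemma isClosed_segment (a b : Pt) : IsClosed (segment ℝ a b) := by
  rw [segment_eq_image_lineMap]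
  exact (isCompact_Icc.image AffineMap.lineMap_continuous).isClosed

lemma isClosed_polyBoundary (v : Fin n → Pt) : IsClosed (polyBoundary v) :=
  isClosed_iUnion_of_finite fun _ => isClosed_segment _ _

lemma continuousAt_windingAngle {x : Pt} (hx : x ∉ polyBoundary v) :
    ContinuousAt (windingAngle v) x :=
  tendsto_finsetSum _ fun i _ =>
    continuousAt_subtendedAngle fun h => hx (segment_subset_polyBoundary v i h)

lemma continuousOn_windingNumber (v : Fin n → Pt) :
    ContinuousOn (windingNumber v) (polyBoundary v)ᶜ := by
  rw [Int.isClosedEmbedding_coe_real.isInducing.continuousOn_iff]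
  have h : ContinuousOn (fun x => windingAngle v x / (2 * Real.pi)) (polyBoundary v)ᶜ :=
    fun x hx => ((continuousAt_windingAngle hx).div_const _).continuousWithinAt
  refine h.congr fun x hx => ?_
  rw [Function.comp_apply, eq_div_iff (by positivity), windingAngle_eq_two_pi_mul hx, mul_comm]

lemma windingNumber_eq_of_isPreconnected {S : Set Pt} (hS : IsPreconnected S)
    (hSv : S ⊆ (polyBoundary v)ᶜ) {x y : Pt} (hx : x ∈ S) (hy : y ∈ S) :
    windingNumber v x = windingNumber v y :=
  hS.constant ((continuousOn_windingNumber v).mono hSv) hx hy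

lemma isOpen_windingNumber_eq (v : Fin n → Pt) (k : ℤ) :
    IsOpen {x | x ∉ polyBoundary v ∧ windingNumber v x = k} :=
  (continuousOn_windingNumber v).isOpen_inter_preimage (isClosed_polyBoundary v).isOpen_compl
    (isOpen_discrete {k})

end Winding

/-! ### Sides of an edge -/

/-- The open half-plane of points on the side of the line `a b` given by the sign of `e`: left of
the directed line if `e` is positive, right of it if `e` is negative. -/
def openSide (e : ℝ) (a b : Pt) : Set Pt := {x | 0 < e * orient a b x}

/-- The vector `p` rotated by a right angle counterclockwise. -/
noncomputable def perp (p : Pt) : Pt := (-p.2, p.1)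

lemma isOpen_openSide (e : ℝ) (a b : Pt) : IsOpen (openSide e a b) :=
  isOpen_lt continuous_const (continuous_const.mul (continuous_orient a b))

lemma convex_openSide (e : ℝ) (a b : Pt) : Convex ℝ (openSide e a b) := by
  intro x hx y hy s t hs ht hst
  have h := (convex_Ioi (0 : ℝ)) hx hy hs ht hst
  simp only [smul_eq_mul, Set.mem_Ioi] at h
  simp only [openSide, Set.mem_ofPred_eq, orient_smul_add_smul a b x y hst]
  linarith

lemma dot2_self_sub_pos {a b : Pt} (h : a ≠ b) : 0 < dot2 (b - a) (b - a) := by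
  refine lt_of_le_of_ne (add_nonneg (mul_self_nonneg _) (mul_self_nonneg _)) fun h0 => h ?_
  obtain ⟨h1, h2⟩ := mul_self_add_mul_self_eq_zero.1 h0.symm
  exact (Prod.ext (sub_eq_zero.1 h1) (sub_eq_zero.1 h2)).symm

lemma det2_perp (p : Pt) : det2 p (perp p) = dot2 p p := by
  simp only [det2, dot2, perp]; ring

lemma tendsto_add_smul_nhdsGT (m w : Pt) :
    Tendsto (fun t : ℝ => m + t • w) (𝓝[>] 0) (𝓝 m) := by
  have h : Tendsto (fun t : ℝ => m + t • w) (𝓝 0) (𝓝 (m + (0 : ℝ) • w)) :=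
    Continuous.tendsto (by fun_prop) _
  rw [zero_smul, add_zero] at h
  exact h.mono_left nhdsWithin_le_nhds

lemma mem_closure_openSide {e : ℝ} (he : e ≠ 0) {a b m : Pt} (hab : a ≠ b)
    (hm : orient a b m = 0) : m ∈ closure (openSide e a b) := by
  refine mem_closure_of_tendsto (tendsto_add_smul_nhdsGT m (e • perp (b - a))) ?_
  filter_upwards [self_mem_nhdsWithin] with t ht
  have ht : 0 < t := ht
  have hpos : 0 < e ^ 2 * (t * dot2 (b - a) (b - a)) := by
    have := dot2_self_sub_pos hab
    positivity
  rw [openSide, Set.mem_ofPred_eq, orient_add, hm, det2_smul_right, det2_smul_right, det2_perp]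
  linarith

lemma dot2_neg_of_mem_openSegment {a b m : Pt} (hab : a ≠ b) (hm : m ∈ openSegment ℝ a b) :
    dot2 (a - m) (b - m) < 0 := by
  obtain ⟨s, t, hs, ht, hst, rfl⟩ := hm
  have h := mul_pos (mul_pos hs ht) (dot2_self_sub_pos hab)
  obtain rfl : s = 1 - t := by linarith
  simp only [dot2, Prod.fst_sub, Prod.snd_sub, Prod.fst_add, Prod.snd_add, Prod.smul_fst,
    Prod.smul_snd, smul_eq_mul] at h ⊢
  linarith

lemma eventually_dot2_neg {a b m : Pt} (hab : a ≠ b) (hm : m ∈ openSegment ℝ a b) :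
    ∀ᶠ x in 𝓝 m, dot2 (a - x) (b - x) < 0 :=
  (Complex.continuous_re.comp (continuous_dotCross_sub a b)).continuousAt.eventually_lt
    continuousAt_const (dot2_neg_of_mem_openSegment hab hm)

lemma pi_div_two_lt_subtendedAngle {a b x : Pt} (hpos : 0 < orient a b x)
    (hdot : dot2 (a - x) (b - x) < 0) : Real.pi / 2 < subtendedAngle a b x := by
  have h : ¬ |subtendedAngle a b x| ≤ Real.pi / 2 := by
    rw [subtendedAngle, Complex.abs_arg_le_pi_div_two_iff]
    exact hdot.not_ge
  rwa [abs_of_pos (subtendedAngle_pos hpos), not_le] at h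

lemma subtendedAngle_sub_mem_Ioo {a b x y : Pt} (hx : 0 < orient a b x) (hy : orient a b y < 0)
    (hxd : dot2 (a - x) (b - x) < 0) (hyd : dot2 (a - y) (b - y) < 0) :
    subtendedAngle a b x - subtendedAngle a b y ∈ Set.Ioo Real.pi (2 * Real.pi) := by
  have hy_seg : y ∉ segment ℝ b a :=
    segment_symm ℝ a b ▸ not_mem_segment_of_orient_ne_zero hy.ne
  have hx_gt := pi_div_two_lt_subtendedAngle hx hxd
  have hx_lt := subtendedAngle_lt_pi (not_mem_segment_of_orient_ne_zero hx.ne')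
  have hy_gt : Real.pi / 2 < subtendedAngle b a y := by
    refine pi_div_two_lt_subtendedAngle (by rw [orient_swap]; linarith) ?_
    simpa only [dot2, mul_comm] using hyd
  have hy_lt := subtendedAngle_lt_pi hy_seg
  rw [subtendedAngle_swap hy_seg]
  constructor <;> linarith

section SimplePolygon

variable {n : ℕ} [NeZero n] {v : Fin n → Pt}

lemma add_one_ne_self (hn : 2 ≤ n) (i : Fin n) : i + 1 ≠ i := by
  rw [Ne, add_eq_left, Fin.ext_iff, Fin.val_one', Nat.mod_eq_of_lt (by omega), Fin.val_zero]
  exact one_ne_zero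

lemma add_one_add_one_ne_self (hn : 3 ≤ n) (i : Fin n) : i + 1 + 1 ≠ i := by
  rw [Ne, add_assoc, add_eq_left, Fin.ext_iff, Fin.val_add, Fin.val_one',
    Nat.mod_eq_of_lt (by omega : 1 < n), Nat.mod_eq_of_lt (by omega), Fin.val_zero]
  exact two_ne_zero

lemma IsSimplePolygon.ne_add_one (hv : IsSimplePolygon v) (i : Fin n) : v i ≠ v (i + 1) :=
  fun h => add_one_ne_self (Nat.le_of_succ_le hv.1) i (hv.2.1 h).symm

lemma ne_of_mem_openSegment {a b m : Pt} (hab : a ≠ b) (h : m ∈ openSegment ℝ a b) :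
    m ≠ a ∧ m ≠ b :=
  ⟨fun e => hab (left_mem_openSegment_iff.1 (e ▸ h)),
    fun e => hab (right_mem_openSegment_iff.1 (e ▸ h))⟩

lemma IsSimplePolygon.not_mem_segment_of_mem_openSegment (hv : IsSimplePolygon v) {i j : Fin n}
    (hij : j ≠ i) {m : Pt} (hm : m ∈ openSegment ℝ (v i) (v (i + 1))) :
    m ∉ segment ℝ (v j) (v (j + 1)) := by
  intro hmj
  have h := (hv.2.2 i j hij.symm ⟨openSegment_subset_segment _ _ _ hm, hmj⟩).1
  have hne := ne_of_mem_openSegment (hv.ne_add_one i) hm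
  exact h.elim hne.1 hne.2

lemma eventually_not_mem_polyBoundary {i : Fin n} {m : Pt}
    (hother : ∀ j, j ≠ i → m ∉ segment ℝ (v j) (v (j + 1))) :
    ∀ᶠ y in 𝓝 m, orient (v i) (v (i + 1)) y ≠ 0 → y ∉ polyBoundary v := by
  have h : ∀ᶠ y in 𝓝 m, ∀ j, j ≠ i → y ∉ segment ℝ (v j) (v (j + 1)) :=
    eventually_all.2 fun j => eventually_imp_distrib_left.2 fun hj =>
      (isClosed_segment _ _).isOpen_compl.mem_nhds (hother j hj)
  filter_upwards [h] with y hy ho hb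
  obtain ⟨j, hj⟩ := Set.mem_iUnion.1 hb
  rcases eq_or_ne j i with rfl | hji
  · exact not_mem_segment_of_orient_ne_zero ho hj
  · exact hy j hji hj

/-- Across the edge `i` only the summand of that edge jumps, by almost `2π`: the others vary
continuously near `m`. -/
lemma IsSimplePolygon.exists_nhds_windingNumber_jump (hv : IsSimplePolygon v) {i : Fin n} {m : Pt}
    (hm : m ∈ openSegment ℝ (v i) (v (i + 1))) :
    ∃ U ∈ 𝓝 m, (∀ x ∈ U, orient (v i) (v (i + 1)) x ≠ 0 → x ∉ polyBoundary v) ∧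
      ∀ x ∈ U, ∀ y ∈ U, 0 < orient (v i) (v (i + 1)) x → orient (v i) (v (i + 1)) y < 0 →
        windingNumber v x = windingNumber v y + 1 := by
  have hother (j : Fin n) (hj : j ≠ i) := hv.not_mem_segment_of_mem_openSegment hj hm
  set S : Pt → ℝ := fun x => ∑ j ∈ Finset.univ.erase i, subtendedAngle (v j) (v (j + 1)) x
  have hS : ∀ᶠ x in 𝓝 m, |S x - S m| < Real.pi / 4 := by
    have hcont : ContinuousAt S m := tendsto_finsetSum _ fun j hj =>
      continuousAt_subtendedAngle (hother j (Finset.ne_of_mem_erase hj))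
    exact Metric.tendsto_nhds.1 hcont (Real.pi / 4) (by positivity)
  have hsplit (z : Pt) : windingAngle v z = S z + subtendedAngle (v i) (v (i + 1)) z :=
    (Finset.sum_erase_add _ _ (Finset.mem_univ i)).symm
  refine ⟨_, (eventually_not_mem_polyBoundary hother).and
    (hS.and (eventually_dot2_neg (hv.ne_add_one i) hm)), fun x hx => hx.1, ?_⟩
  rintro x ⟨hxb, hxS, hxd⟩ y ⟨hyb, hyS, hyd⟩ hx hy
  obtain ⟨hgt, hlt⟩ := subtendedAngle_sub_mem_Ioo hx hy hxd hyd
  rw [abs_lt] at hxS hyS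
  have hdiff : 2 * Real.pi * (windingNumber v x - windingNumber v y) = S x - S y +
      (subtendedAngle (v i) (v (i + 1)) x - subtendedAngle (v i) (v (i + 1)) y) := by
    rw [mul_sub, ← windingAngle_eq_two_pi_mul (hxb hx.ne'),
      ← windingAngle_eq_two_pi_mul (hyb hy.ne), hsplit, hsplit]
    ring
  have hpos : (0 : ℝ) < windingNumber v x - windingNumber v y := by
    nlinarith [Real.pi_pos]
  have hlt_two : (windingNumber v x - windingNumber v y : ℝ) < 2 := by
    nlinarith [Real.pi_pos]
  have hpos_int : 0 < windingNumber v x - windingNumber v y := mod_cast hpos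
  have hlt_two_int : windingNumber v x - windingNumber v y < 2 := mod_cast hlt_two
  omega

end SimplePolygon

section LinkedSides

variable {n : ℕ} [NeZero n] {v : Fin n → Pt}

/-- The parts of small neighbourhoods of `m` and `m'` on the side `e` of the edges `i` and `i'`
are joined by a connected set avoiding the boundary. -/
def SideLinked (v : Fin n → Pt) (e : ℝ) (i : Fin n) (m : Pt) (i' : Fin n) (m' : Pt) : Prop :=
  ∃ T : Set Pt, IsPreconnected T ∧ T ⊆ (polyBoundary v)ᶜ ∧
    T ∈ 𝓝[openSide e (v i) (v (i + 1))] m ∧ T ∈ 𝓝[openSide e (v i') (v (i' + 1))] m'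

lemma SideLinked.symm {e : ℝ} {i i' : Fin n} {m m' : Pt} (h : SideLinked v e i m i' m') :
    SideLinked v e i' m' i m := by
  obtain ⟨T, hT, hTv, hm, hm'⟩ := h
  exact ⟨T, hT, hTv, hm', hm⟩

lemma orient_eq_zero_of_mem_segment {a b x : Pt} (h : x ∈ segment ℝ a b) : orient a b x = 0 :=
  (mem_segment_iff_orient_dot2.1 h).1

lemma SideLinked.trans (hv : IsSimplePolygon v) {e : ℝ} (he : e ≠ 0) {i i' i'' : Fin n}
    {m m' m'' : Pt} (hm : m' ∈ openSegment ℝ (v i') (v (i' + 1)))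
    (h : SideLinked v e i m i' m') (h' : SideLinked v e i' m' i'' m'') :
    SideLinked v e i m i'' m'' := by
  obtain ⟨T, hT, hTv, hTm, hTm'⟩ := h
  obtain ⟨T', hT', hTv', hT'm', hT'm''⟩ := h'
  have hcl := mem_closure_openSide he (hv.ne_add_one i')
    (orient_eq_zero_of_mem_segment (openSegment_subset_segment _ _ _ hm))
  have := mem_closure_iff_nhdsWithin_neBot.1 hcl
  obtain ⟨x, hx, hx'⟩ := Filter.nonempty_of_mem (Filter.inter_mem hTm' hT'm')
  exact ⟨T ∪ T', hT.union x hx hx' hT', Set.union_subset hTv hTv',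
    mem_of_superset hTm Set.subset_union_left, mem_of_superset hT'm'' Set.subset_union_right⟩

lemma not_mem_segment_of_mem_openSide {e : ℝ} {a b x : Pt} (h : x ∈ openSide e a b) :
    x ∉ segment ℝ a b :=
  not_mem_segment_of_orient_ne_zero fun h0 => by simp [openSide, h0] at h

lemma ball_inter_openSide_mem_nhdsWithin {e r : ℝ} {a b m x : Pt} (hm : m ∈ Metric.ball x r) :
    Metric.ball x r ∩ openSide e a b ∈ 𝓝[openSide e a b] m :=
  inter_mem (mem_nhdsWithin_of_mem_nhds (Metric.isOpen_ball.mem_nhds hm)) self_mem_nhdsWithin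

lemma IsSimplePolygon.sideLinked_of_mem_same_edge (hv : IsSimplePolygon v) {e : ℝ} (he : e ≠ 0)
    {i : Fin n} {m m' : Pt} (hm : m ∈ openSegment ℝ (v i) (v (i + 1)))
    (hm' : m' ∈ openSegment ℝ (v i) (v (i + 1))) : SideLinked v e i m i m' := by
  refine (convex_openSegment (v i) (v (i + 1))).isPreconnected.induction₂
    (fun x y => SideLinked v e i x i y) (fun x hx => ?_)
    (fun x y z _ hy _ => SideLinked.trans hv he hy) (fun x y _ _ => SideLinked.symm) hm hm'
  obtain ⟨r, hr, hball⟩ := Metric.eventually_nhds_iff_ball.1 (eventually_not_mem_polyBoundary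
    fun _ hj => hv.not_mem_segment_of_mem_openSegment hj hx)
  filter_upwards [mem_nhdsWithin_of_mem_nhds (Metric.ball_mem_nhds x hr)] with y hy
  refine ⟨Metric.ball x r ∩ openSide e (v i) (v (i + 1)),
    ((convex_ball x r).inter (convex_openSide _ _ _)).isPreconnected, fun z hz => ?_,
    ball_inter_openSide_mem_nhdsWithin (Metric.mem_ball_self hr),
    ball_inter_openSide_mem_nhdsWithin hy⟩
  exact hball z hz.1 (right_ne_zero_of_mul (show 0 < e * _ from hz.2).ne')

lemma dot2_pos_of_not_mem_segment {a b c : Pt} (h0 : orient a b c = 0) (ha : a ∉ segment ℝ b c)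
    (hc : c ∉ segment ℝ a b) : 0 < dot2 (b - a) (c - b) := by
  rw [mem_segment_iff_orient_dot2, orient_rotate] at ha
  rw [mem_segment_iff_orient_dot2] at hc
  simp only [h0, true_and, not_le] at ha hc
  by_contra! hneg
  have lagrange : dot2 (b - a) (b - a) * dot2 (c - b) (c - b) = dot2 (b - a) (c - b) ^ 2 := by
    simp only [orient, det2, dot2, Prod.fst_sub, Prod.snd_sub] at h0 ⊢
    linear_combination ((b.1 - a.1) * (c.2 - a.2) - (b.2 - a.2) * (c.1 - a.1)) * h0
  have hp : dot2 (b - a) (c - a) = dot2 (b - a) (b - a) + dot2 (b - a) (c - b) := by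
    simp only [dot2, Prod.fst_sub, Prod.snd_sub]; ring
  have hq : dot2 (a - c) (b - c) = dot2 (c - b) (c - b) + dot2 (b - a) (c - b) := by
    simp only [dot2, Prod.fst_sub, Prod.snd_sub]; ring
  nlinarith [mul_pos ha hc]

lemma IsSimplePolygon.dot2_pos_of_orient_eq_zero (hv : IsSimplePolygon v) {i : Fin n}
    (h0 : orient (v i) (v (i + 1)) (v (i + 1 + 1)) = 0) :
    0 < dot2 (v (i + 1) - v i) (v (i + 1 + 1) - v (i + 1)) := by
  have hi := hv.2.2 i (i + 1) (add_one_ne_self (Nat.le_of_succ_le hv.1) i).symm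
  have hne : v i ≠ v (i + 1 + 1) := fun h => add_one_add_one_ne_self hv.1 i (hv.2.1 h).symm
  refine dot2_pos_of_not_mem_segment h0 (fun h => ?_) fun h => ?_
  · exact (hi ⟨left_mem_segment _ _ _, h⟩).2.elim (hv.ne_add_one i) hne
  · exact (hi ⟨h, right_mem_segment _ _ _⟩).1.elim hne.symm (hv.ne_add_one (i + 1)).symm

lemma IsSimplePolygon.eventually_not_mem_polyBoundary_of_vertex (hv : IsSimplePolygon v)
    (i : Fin n) : ∀ᶠ y in 𝓝 (v (i + 1)), y ∉ segment ℝ (v i) (v (i + 1)) →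
      y ∉ segment ℝ (v (i + 1)) (v (i + 1 + 1)) → y ∉ polyBoundary v := by
  have h : ∀ᶠ y in 𝓝 (v (i + 1)), ∀ j, j ≠ i → j ≠ i + 1 → y ∉ segment ℝ (v j) (v (j + 1)) := by
    refine eventually_all.2 fun j => eventually_imp_distrib_left.2 fun hj =>
      eventually_imp_distrib_left.2 fun hj' => (isClosed_segment _ _).isOpen_compl.mem_nhds ?_
    intro h
    rcases (hv.2.2 j (i + 1) hj' ⟨h, left_mem_segment _ _ _⟩).1 with h | h
    · exact hj' (hv.2.1 h).symm
    · exact hj (add_right_cancel (hv.2.1 h)).symm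
  filter_upwards [h] with y hy h1 h2 hb
  obtain ⟨j, hj⟩ := Set.mem_iUnion.1 hb
  rcases eq_or_ne j i with rfl | hji
  · exact h1 hj
  rcases eq_or_ne j (i + 1) with rfl | hji'
  · exact h2 hj
  · exact hy j hji hji' hj

lemma exists_mem_openSegment_ball (a b : Pt) {r : ℝ} (hr : 0 < r) :
    ∃ m ∈ openSegment ℝ a b, m ∈ Metric.ball b r := by
  obtain ⟨m, hr, hm⟩ := mem_closure_iff_nhds.1
    (segment_subset_closure_openSegment (right_mem_segment ℝ a b)) _ (Metric.ball_mem_nhds b hr)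
  exact ⟨m, hm, hr⟩

lemma orient_smul_add_smul_left (a b c : Pt) {s t : ℝ} (hst : s + t = 1) :
    orient b c (s • a + t • b) = s * orient a b c := by
  rw [orient_smul_add_smul _ _ _ _ hst, orient_left, orient_rotate]; ring

lemma orient_smul_add_smul_right (a b c : Pt) {s t : ℝ} (hst : s + t = 1) :
    orient a b (s • b + t • c) = t * orient a b c := by
  rw [orient_smul_add_smul _ _ _ _ hst, orient_right]; ring

lemma exists_isPreconnected_corner_of_pos {e r : ℝ} {a b c m m' : Pt}
    (h : 0 < e * orient a b c) (hm : m ∈ openSegment ℝ a b) (hmr : m ∈ Metric.ball b r)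
    (hm' : m' ∈ openSegment ℝ b c) (hmr' : m' ∈ Metric.ball b r) :
    ∃ T, IsPreconnected T ∧ T ⊆ Metric.ball b r \ (segment ℝ a b ∪ segment ℝ b c) ∧
      T ∈ 𝓝[openSide e a b] m ∧ T ∈ 𝓝[openSide e b c] m' := by
  have hm_side : m ∈ openSide e b c := by
    obtain ⟨s, t, hs, -, hst, rfl⟩ := hm
    have := mul_pos hs h
    rw [openSide, Set.mem_ofPred_eq, orient_smul_add_smul_left _ _ _ hst]
    linarith
  have hm_side' : m' ∈ openSide e a b := by
    obtain ⟨s, t, -, ht, hst, rfl⟩ := hm'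
    have := mul_pos ht h
    rw [openSide, Set.mem_ofPred_eq, orient_smul_add_smul_right _ _ _ hst]
    linarith
  refine ⟨Metric.ball b r ∩ (openSide e a b ∩ openSide e b c),
    ((convex_ball b r).inter ((convex_openSide e a b).inter
      (convex_openSide e b c))).isPreconnected, fun y hy => ⟨hy.1, ?_⟩, ?_, ?_⟩
  · exact fun hy' => hy'.elim (not_mem_segment_of_mem_openSide hy.2.1)
      (not_mem_segment_of_mem_openSide hy.2.2)
  · filter_upwards [ball_inter_openSide_mem_nhdsWithin hmr,
      mem_nhdsWithin_of_mem_nhds ((isOpen_openSide e b c).mem_nhds hm_side)] with y h1 h2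
    exact ⟨h1.1, h1.2, h2⟩
  · filter_upwards [ball_inter_openSide_mem_nhdsWithin hmr',
      mem_nhdsWithin_of_mem_nhds ((isOpen_openSide e a b).mem_nhds hm_side')] with y h1 h2
    exact ⟨h1.1, h2, h1.2⟩

lemma exists_det2_pos_of_nonpos {e : ℝ} {a b c : Pt} (he : e ≠ 0) (hab : a ≠ b)
    (h : e * orient a b c ≤ 0) (hfold : orient a b c = 0 → 0 < dot2 (b - a) (c - b)) :
    ∃ w, 0 < e * det2 (b - a) w ∧ 0 < e * det2 (c - b) w := by
  rcases h.lt_or_eq with hneg | hzero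
  · refine ⟨(b - a) + (b - c), ?_, ?_⟩ <;>
    · simp only [orient, det2, Prod.fst_sub, Prod.snd_sub, Prod.fst_add, Prod.snd_add] at hneg ⊢
      linarith
  · have hdot := hfold ((mul_eq_zero.1 hzero).resolve_left he)
    refine ⟨e • perp (b - a), ?_, ?_⟩
    · rw [det2_smul_right, det2_perp, ← mul_assoc]
      exact mul_pos (mul_self_pos.2 he) (dot2_self_sub_pos hab)
    · have hrot : det2 (c - b) (perp (b - a)) = dot2 (b - a) (c - b) := by
        simp only [det2, dot2, perp]; ring
      rw [det2_smul_right, hrot, ← mul_assoc]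
      exact mul_pos (mul_self_pos.2 he) hdot

lemma exists_isPreconnected_corner_of_nonpos {e r : ℝ} {a b c w m m' : Pt}
    (h : e * orient a b c ≤ 0) (hw : 0 < e * det2 (b - a) w) (hw' : 0 < e * det2 (c - b) w)
    (hmr : m ∈ Metric.ball b r) (hmr' : m' ∈ Metric.ball b r) :
    ∃ T, IsPreconnected T ∧ T ⊆ Metric.ball b r \ (segment ℝ a b ∪ segment ℝ b c) ∧
      T ∈ 𝓝[openSide e a b] m ∧ T ∈ 𝓝[openSide e b c] m' := by
  obtain ⟨τ, hτr, hτ⟩ := (((tendsto_add_smul_nhdsGT b w).eventually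
    (Metric.ball_mem_nhds b (Metric.pos_of_mem_ball hmr))).and self_mem_nhdsWithin).exists
  have hτ_pos : 0 < τ := hτ
  have hz : b + τ • w ∈ openSide e a b := by
    have := mul_pos hτ_pos hw
    rw [openSide, Set.mem_ofPred_eq, orient_add, orient_right, det2_smul_right]
    linarith
  have hz' : b + τ • w ∈ openSide e b c := by
    have := mul_pos hτ_pos hw'
    rw [openSide, Set.mem_ofPred_eq, orient_add, orient_left, det2_smul_right]
    linarith
  have hpre (p q : Pt) : IsPreconnected (Metric.ball b r ∩ openSide e p q) :=
    ((convex_ball b r).inter (convex_openSide e p q)).isPreconnected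
  have hunion : IsPreconnected
      (Metric.ball b r ∩ openSide e a b ∪ Metric.ball b r ∩ openSide e b c) :=
    IsPreconnected.union (b + τ • w) ⟨hτr, hz⟩ ⟨hτr, hz'⟩ (hpre a b) (hpre b c)
  refine ⟨_, hunion, ?_,
    mem_of_superset (ball_inter_openSide_mem_nhdsWithin hmr) Set.subset_union_left,
    mem_of_superset (ball_inter_openSide_mem_nhdsWithin hmr') Set.subset_union_right⟩
  have hdisj_left : ∀ y ∈ segment ℝ a b, y ∉ openSide e b c := by
    rintro y ⟨s, t, hs, -, hst, rfl⟩
    rw [openSide, Set.mem_ofPred_eq, orient_smul_add_smul_left _ _ _ hst, not_lt, mul_left_comm]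
    exact mul_nonpos_of_nonneg_of_nonpos hs h
  have hdisj_right : ∀ y ∈ segment ℝ b c, y ∉ openSide e a b := by
    rintro y ⟨s, t, -, ht, hst, rfl⟩
    rw [openSide, Set.mem_ofPred_eq, orient_smul_add_smul_right _ _ _ hst, not_lt, mul_left_comm]
    exact mul_nonpos_of_nonneg_of_nonpos ht h
  rintro y (⟨hyr, hy⟩ | ⟨hyr, hy⟩)
  · exact ⟨hyr, fun hy' => hy'.elim (not_mem_segment_of_mem_openSide hy)
      fun h' => hdisj_right y h' hy⟩
  · exact ⟨hyr, fun hy' => hy'.elim (fun h' => hdisj_left y h' hy)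
      (not_mem_segment_of_mem_openSide hy)⟩

lemma IsSimplePolygon.exists_sideLinked_add_one (hv : IsSimplePolygon v) {e : ℝ} (he : e ≠ 0)
    (i : Fin n) : ∃ m ∈ openSegment ℝ (v i) (v (i + 1)),
      ∃ m' ∈ openSegment ℝ (v (i + 1)) (v (i + 1 + 1)), SideLinked v e i m (i + 1) m' := by
  obtain ⟨r, hr, hball⟩ := Metric.eventually_nhds_iff_ball.1
    (hv.eventually_not_mem_polyBoundary_of_vertex i)
  obtain ⟨m, hm, hmr⟩ := exists_mem_openSegment_ball (v i) (v (i + 1)) hr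
  obtain ⟨m', hm', hmr'⟩ := exists_mem_openSegment_ball (v (i + 1 + 1)) (v (i + 1)) hr
  rw [openSegment_symm] at hm'
  refine ⟨m, hm, m', hm', ?_⟩
  obtain ⟨T, hT, hTsub, hTm, hTm'⟩ : ∃ T, IsPreconnected T ∧ T ⊆ Metric.ball (v (i + 1)) r \
      (segment ℝ (v i) (v (i + 1)) ∪ segment ℝ (v (i + 1)) (v (i + 1 + 1))) ∧
      T ∈ 𝓝[openSide e (v i) (v (i + 1))] m ∧
      T ∈ 𝓝[openSide e (v (i + 1)) (v (i + 1 + 1))] m' := by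
    rcases lt_or_ge 0 (e * orient (v i) (v (i + 1)) (v (i + 1 + 1))) with hpos | hneg
    · exact exists_isPreconnected_corner_of_pos hpos hm hmr hm' hmr'
    · obtain ⟨w, hw, hw'⟩ := exists_det2_pos_of_nonpos he (hv.ne_add_one i) hneg
        hv.dot2_pos_of_orient_eq_zero
      exact exists_isPreconnected_corner_of_nonpos hneg hw hw' hmr hmr'
  refine ⟨T, hT, fun y hy => ?_, hTm, hTm'⟩
  obtain ⟨hyr, hy'⟩ := hTsub hy
  exact hball y hyr (fun h => hy' (.inl h)) fun h => hy' (.inr h)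

lemma forall_of_add_one {P : Fin n → Prop} {i : Fin n} (hi : P i) (hstep : ∀ j, P j → P (j + 1))
    (j : Fin n) : P j := by
  have h (k : ℕ) : P (i + Fin.ofNat n k) := by
    induction k with
    | zero => simpa only [Fin.ofNat_zero, add_zero] using hi
    | succ k ih =>
      have hk : i + Fin.ofNat n (k + 1) = i + Fin.ofNat n k + 1 := by
        rw [add_assoc]
        congr 1
        ext
        simp [Fin.val_add]
      exact hk ▸ hstep _ ih
  simpa only [Fin.ofNat_val_eq_self, add_sub_cancel] using h (j - i).val

lemma IsSimplePolygon.sideLinked (hv : IsSimplePolygon v) {e : ℝ} (he : e ≠ 0) {i j : Fin n}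
    {m m' : Pt} (hm : m ∈ openSegment ℝ (v i) (v (i + 1)))
    (hm' : m' ∈ openSegment ℝ (v j) (v (j + 1))) : SideLinked v e i m j m' := by
  refine forall_of_add_one (P := fun j => ∀ m' ∈ openSegment ℝ (v j) (v (j + 1)),
    SideLinked v e i m j m') (fun m' => hv.sideLinked_of_mem_same_edge he hm) ?_ j m' hm'
  intro j ih m' hm'
  obtain ⟨p, hp, q, hq, hpq⟩ := hv.exists_sideLinked_add_one he j
  exact ((ih p hp).trans hv he hp hpq).trans hv he hq (hv.sideLinked_of_mem_same_edge he hq hm')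

end LinkedSides

/-! ### The Jordan curve theorem for polygons -/

section Jordan

variable {n : ℕ} [NeZero n] {v : Fin n → Pt}

lemma isLinearMap_dot2 (u : Pt) : IsLinearMap ℝ (dot2 u) where
  map_add p q := by simp only [dot2, Prod.fst_add, Prod.snd_add]; ring
  map_smul c p := by simp only [dot2, Prod.smul_fst, Prod.smul_snd, smul_eq_mul]; ring

lemma not_mem_polyBoundary_of_dot2_pos {x u : Pt} (h : ∀ i, 0 < dot2 u (v i - x)) :
    x ∉ polyBoundary v := by
  intro hx
  obtain ⟨i, hi⟩ := Set.mem_iUnion.1 hx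
  have hmem (j : Fin n) : v j ∈ {y | dot2 u x < dot2 u y} := by
    have := h j
    rw [(isLinearMap_dot2 u).map_sub] at this
    exact sub_pos.1 this
  exact lt_irrefl (dot2 u x)
    ((convex_halfSpace_gt (isLinearMap_dot2 u) _).segment_subset (hmem i) (hmem (i + 1)) hi)

lemma exists_forall_lt_norm_windingNumber_eq_zero (v : Fin n → Pt) :
    ∃ R : ℝ, ∀ x : Pt, R < ‖x‖ → x ∉ polyBoundary v ∧ windingNumber v x = 0 := by
  refine ⟨2 * ∑ i, ‖v i‖, fun x hx => ?_⟩
  have h (i : Fin n) : 0 < dot2 (-x) (v i - x) := by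
    have hi : ‖v i‖ ≤ ∑ i, ‖v i‖ :=
      Finset.single_le_sum (f := fun i => ‖v i‖) (fun _ _ => norm_nonneg _) (Finset.mem_univ i)
    have hself : ‖x‖ ^ 2 ≤ dot2 x x := by
      rw [Prod.norm_def, dot2]
      rcases max_choice ‖x.1‖ ‖x.2‖ with h | h <;> rw [h, Real.norm_eq_abs, sq_abs] <;>
        nlinarith [sq_nonneg x.1, sq_nonneg x.2]
    have hmul {s t : ℝ} (hs : |s| ≤ ‖x‖) (ht : |t| ≤ ‖v i‖) : s * t ≤ ‖x‖ * ‖v i‖ :=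
      (le_abs_self _).trans (abs_mul s t ▸ mul_le_mul hs ht (abs_nonneg _) (norm_nonneg _))
    have h1 := hmul (norm_fst_le x) (norm_fst_le (v i))
    have h2 := hmul (norm_snd_le x) (norm_snd_le (v i))
    have hpos : 0 < ‖x‖ * (‖x‖ - 2 * ‖v i‖) :=
      mul_pos (by linarith [norm_nonneg (v i)]) (by linarith)
    simp only [dot2, Prod.fst_neg, Prod.snd_neg, Prod.fst_sub, Prod.snd_sub] at hself ⊢
    linarith
  exact ⟨not_mem_polyBoundary_of_dot2_pos h, windingNumber_eq_zero_of_dot2_pos h⟩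

lemma IsSimplePolygon.vertex_ne_of_mem_openSegment (hv : IsSimplePolygon v) {i : Fin n} {m : Pt}
    (hm : m ∈ openSegment ℝ (v i) (v (i + 1))) (j : Fin n) : v j ≠ m := by
  rintro rfl
  rcases eq_or_ne j i with rfl | hj
  · exact (ne_of_mem_openSegment (hv.ne_add_one j) hm).1 rfl
  · exact hv.not_mem_segment_of_mem_openSegment hj hm (left_mem_segment _ _ _)

lemma subset_connectedComponentIn_of_mem {S T : Set Pt} {x z : Pt}
    (hT : IsPreconnected T) (hTS : T ⊆ S) (hz : z ∈ T) (hzx : z ∈ connectedComponentIn S x) :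
    T ⊆ connectedComponentIn S x :=
  connectedComponentIn_eq hzx ▸ hT.subset_connectedComponentIn hz hTS

/-- Removing only the vertices leaves the plane connected, so a component that is not the whole
complement of the vertices accumulates at some edge. -/
lemma IsSimplePolygon.exists_mem_openSegment_closure (hv : IsSimplePolygon v) {x : Pt}
    (hx : x ∉ polyBoundary v) : ∃ i, ∃ m ∈ openSegment ℝ (v i) (v (i + 1)),
      m ∈ closure (connectedComponentIn (polyBoundary v)ᶜ x) := by
  set C := connectedComponentIn (polyBoundary v)ᶜ x
  have hxC : x ∈ C := mem_connectedComponentIn hx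
  by_contra! hcon
  have hconn : IsConnected (Set.range v)ᶜ := by
    refine Set.Countable.isConnected_compl_of_one_lt_rank ?_ (Set.finite_range v).countable
    rw [← Module.finrank_eq_rank, Module.finrank_prod, Module.finrank_self]
    norm_num
  have hsub : (Set.range v)ᶜ ⊆ C := by
    refine hconn.isPreconnected.subset_of_closure_inter_subset
      (isClosed_polyBoundary v).isOpen_compl.connectedComponentIn ⟨x, ?_, hxC⟩ ?_
    · rintro ⟨i, rfl⟩
      exact hx (vertex_mem_polyBoundary v i)
    · rintro y ⟨hy, hyV⟩
      have hyb : y ∉ polyBoundary v := by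
        intro hb
        obtain ⟨i, hi⟩ := Set.mem_iUnion.1 hb
        rw [← insert_endpoints_openSegment] at hi
        rcases hi with h | h | h
        · exact hyV ⟨i, h.symm⟩
        · exact hyV ⟨i + 1, h.symm⟩
        · exact hcon i y h hy
      have hins : IsPreconnected (insert y C) :=
        isPreconnected_connectedComponentIn.subset_closure (Set.subset_insert y C)
          (Set.insert_subset hy subset_closure)
      exact subset_connectedComponentIn_of_mem hins
        (Set.insert_subset hyb (connectedComponentIn_subset _ _)) (Set.mem_insert_of_mem y hxC) hxC
        (Set.mem_insert y C)
  have hm := midpoint_mem_openSegment (𝕜 := ℝ) (v 0) (v (0 + 1))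
  refine connectedComponentIn_subset _ _ (hsub ?_)
    (segment_subset_polyBoundary v 0 (openSegment_subset_segment _ _ _ hm))
  rintro ⟨j, hj⟩
  exact hv.vertex_ne_of_mem_openSegment hm j hj

/-- The component of `x` in the complement of the boundary contains all points close to any inner
point of an edge on the side `e` of that edge. -/
def TouchesSide (v : Fin n → Pt) (e : ℝ) (x : Pt) : Prop :=
  ∀ i, ∀ m ∈ openSegment ℝ (v i) (v (i + 1)),
    connectedComponentIn (polyBoundary v)ᶜ x ∈ 𝓝[openSide e (v i) (v (i + 1))] m

lemma IsSimplePolygon.touchesSide_of_frequently (hv : IsSimplePolygon v) {e : ℝ} (he : e ≠ 0)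
    {x m : Pt} {i : Fin n} (hm : m ∈ openSegment ℝ (v i) (v (i + 1)))
    (hfreq : ∃ᶠ y in 𝓝[openSide e (v i) (v (i + 1))] m,
      y ∈ connectedComponentIn (polyBoundary v)ᶜ x) : TouchesSide v e x := by
  intro j m' hm'
  obtain ⟨T, hT, hTv, hTm, hTm'⟩ := hv.sideLinked he hm hm'
  obtain ⟨z, hzx, hzT⟩ := (hfreq.and_eventually hTm).exists
  exact mem_of_superset hTm' (subset_connectedComponentIn_of_mem hT hTv hzT hzx)

lemma IsSimplePolygon.touchesSide_one_or_neg_one (hv : IsSimplePolygon v) {x : Pt}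
    (hx : x ∉ polyBoundary v) : TouchesSide v 1 x ∨ TouchesSide v (-1) x := by
  obtain ⟨i, m, hm, hmC⟩ := hv.exists_mem_openSegment_closure hx
  have hsides : ∃ᶠ y in 𝓝 m,
      (y ∈ connectedComponentIn (polyBoundary v)ᶜ x ∧ y ∈ openSide 1 (v i) (v (i + 1))) ∨
      (y ∈ connectedComponentIn (polyBoundary v)ᶜ x ∧ y ∈ openSide (-1) (v i) (v (i + 1))) := by
    refine ((mem_closure_iff_frequently.1 hmC).and_eventually
      (eventually_dot2_neg (hv.ne_add_one i) hm)).mono ?_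
    rintro y ⟨hy, hd⟩
    rcases lt_trichotomy (orient (v i) (v (i + 1)) y) 0 with h | h | h
    · exact .inr ⟨hy, by rw [openSide, Set.mem_ofPred_eq]; linarith⟩
    · exact absurd (segment_subset_polyBoundary v i (mem_segment_iff_orient_dot2.2 ⟨h, hd.le⟩))
        (connectedComponentIn_subset _ _ hy)
    · exact .inl ⟨hy, by rw [openSide, Set.mem_ofPred_eq]; linarith⟩
  refine (frequently_or_distrib.1 hsides).imp (fun h => ?_) fun h => ?_
  · exact hv.touchesSide_of_frequently one_ne_zero hm (frequently_nhdsWithin_iff.2 h)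
  · exact hv.touchesSide_of_frequently (neg_ne_zero.2 one_ne_zero) hm
      (frequently_nhdsWithin_iff.2 h)

lemma TouchesSide.exists_mem (hv : IsSimplePolygon v) {e : ℝ} (he : e ≠ 0) {x : Pt}
    (h : TouchesSide v e x) {i : Fin n} {m : Pt} (hm : m ∈ openSegment ℝ (v i) (v (i + 1)))
    {U : Set Pt} (hU : U ∈ 𝓝[openSide e (v i) (v (i + 1))] m) :
    ∃ z ∈ U, z ∈ openSide e (v i) (v (i + 1)) ∧
      z ∈ connectedComponentIn (polyBoundary v)ᶜ x := by
  have := mem_closure_iff_nhdsWithin_neBot.1 (mem_closure_openSide he (hv.ne_add_one i)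
    (orient_eq_zero_of_mem_segment (openSegment_subset_segment _ _ _ hm)))
  obtain ⟨z, hzx, hzU, hz⟩ := Filter.nonempty_of_mem
    (inter_mem (h i m hm) (inter_mem hU self_mem_nhdsWithin))
  exact ⟨z, hzU, hz, hzx⟩

lemma TouchesSide.connectedComponentIn_eq (hv : IsSimplePolygon v) {e : ℝ} (he : e ≠ 0)
    {x y : Pt} (hx : TouchesSide v e x) (hy : TouchesSide v e y) :
    connectedComponentIn (polyBoundary v)ᶜ x = connectedComponentIn (polyBoundary v)ᶜ y := by
  have hm := midpoint_mem_openSegment (𝕜 := ℝ) (v 0) (v (0 + 1))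
  obtain ⟨z, hzx, -, hzy⟩ := hy.exists_mem hv he hm (hx 0 _ hm)
  rw [_root_.connectedComponentIn_eq hzx, _root_.connectedComponentIn_eq hzy]

lemma windingNumber_eq_of_mem_connectedComponentIn {x y : Pt} (hx : x ∉ polyBoundary v)
    (hy : y ∈ connectedComponentIn (polyBoundary v)ᶜ x) :
    windingNumber v y = windingNumber v x :=
  windingNumber_eq_of_isPreconnected isPreconnected_connectedComponentIn
    (connectedComponentIn_subset _ _) hy (mem_connectedComponentIn hx)

lemma TouchesSide.windingNumber_eq_add_one (hv : IsSimplePolygon v) {x y : Pt}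
    (hxb : x ∉ polyBoundary v) (hyb : y ∉ polyBoundary v) (hx : TouchesSide v 1 x)
    (hy : TouchesSide v (-1) y) : windingNumber v x = windingNumber v y + 1 := by
  have hm := midpoint_mem_openSegment (𝕜 := ℝ) (v 0) (v (0 + 1))
  obtain ⟨U, hU, -, hjump⟩ := hv.exists_nhds_windingNumber_jump hm
  obtain ⟨p, hpU, hp, hpx⟩ :=
    hx.exists_mem hv one_ne_zero hm (mem_nhdsWithin_of_mem_nhds hU)
  obtain ⟨q, hqU, hq, hqy⟩ :=
    hy.exists_mem hv (neg_ne_zero.2 one_ne_zero) hm (mem_nhdsWithin_of_mem_nhds hU)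
  rw [openSide, Set.mem_ofPred_eq] at hp hq
  rw [← windingNumber_eq_of_mem_connectedComponentIn hxb hpx,
    ← windingNumber_eq_of_mem_connectedComponentIn hyb hqy]
  exact hjump p hpU q hqU (by linarith) (by linarith)

lemma IsSimplePolygon.connectedComponentIn_eq_of_windingNumber_eq (hv : IsSimplePolygon v)
    {x y : Pt} (hx : x ∉ polyBoundary v) (hy : y ∉ polyBoundary v)
    (h : windingNumber v x = windingNumber v y) :
    connectedComponentIn (polyBoundary v)ᶜ x = connectedComponentIn (polyBoundary v)ᶜ y := by
  rcases hv.touchesSide_one_or_neg_one hx with hx' | hx' <;>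
    rcases hv.touchesSide_one_or_neg_one hy with hy' | hy'
  · exact hx'.connectedComponentIn_eq hv one_ne_zero hy'
  · have := hx'.windingNumber_eq_add_one hv hx hy hy'
    omega
  · have := hy'.windingNumber_eq_add_one hv hy hx hx'
    omega
  · exact hx'.connectedComponentIn_eq hv (neg_ne_zero.2 one_ne_zero) hy'

lemma IsSimplePolygon.mem_polyInterior_iff (hv : IsSimplePolygon v) {x : Pt} :
    x ∈ polyInterior v ↔ x ∉ polyBoundary v ∧ windingNumber v x ≠ 0 := by
  obtain ⟨R, hR⟩ := exists_forall_lt_norm_windingNumber_eq_zero v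
  refine and_congr_right fun hx => ?_
  rw [isBounded_iff_forall_norm_le]
  constructor
  · rintro ⟨M, hM⟩ h0
    obtain ⟨y, hy⟩ := NormedSpace.exists_lt_norm ℝ Pt (max R M)
    obtain ⟨hyb, hy0⟩ := hR y ((le_max_left R M).trans_lt hy)
    have hyx : y ∈ connectedComponentIn (polyBoundary v)ᶜ x := by
      rw [hv.connectedComponentIn_eq_of_windingNumber_eq hx hyb (h0.trans hy0.symm)]
      exact mem_connectedComponentIn hyb
    exact (hM y hyx).not_gt ((le_max_right R M).trans_lt hy)
  · intro h0
    refine ⟨R, fun y hy => ?_⟩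
    by_contra! hlt
    exact h0 (windingNumber_eq_of_mem_connectedComponentIn hx hy ▸ (hR y hlt).2)

/-- The polygonal Jordan curve theorem for `v`, in terms of winding numbers: these are `0` outside
and `σ = ±1` inside, and the boundary is adherent to both sides. The sign `σ` is the orientation
of `v`. -/
structure HasOrientation (v : Fin n → Pt) (σ : ℤ) : Prop where
  sign : σ = 1 ∨ σ = -1
  windingNumber_eq : ∀ x, x ∉ polyBoundary v → windingNumber v x = 0 ∨ windingNumber v x = σ
  mem_polyInterior_iff : ∀ x, x ∈ polyInterior v ↔ x ∉ polyBoundary v ∧ windingNumber v x ≠ 0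
  subset_closure_interior : polyBoundary v ⊆ closure (polyInterior v)
  subset_closure_exterior :
    polyBoundary v ⊆ closure {x | x ∉ polyBoundary v ∧ windingNumber v x = 0}

lemma IsSimplePolygon.exists_sign_windingNumber_eq (hv : IsSimplePolygon v) :
    ∃ σ : ℤ, (σ = 1 ∨ σ = -1) ∧
      ∀ x, x ∉ polyBoundary v → windingNumber v x = 0 ∨ windingNumber v x = σ := by
  obtain ⟨R, hR⟩ := exists_forall_lt_norm_windingNumber_eq_zero v
  obtain ⟨y, hy⟩ := NormedSpace.exists_lt_norm ℝ Pt R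
  obtain ⟨hyb, hy0⟩ := hR y hy
  have hsame {e : ℝ} (he : e ≠ 0) (hye : TouchesSide v e y) {x : Pt} (hx : x ∉ polyBoundary v)
      (hxe : TouchesSide v e x) : windingNumber v x = 0 := by
    rw [← hy0]
    refine (windingNumber_eq_of_mem_connectedComponentIn hx ?_).symm
    exact hxe.connectedComponentIn_eq hv he hye ▸ mem_connectedComponentIn hyb
  rcases hv.touchesSide_one_or_neg_one hyb with hye | hye
  · refine ⟨-1, .inr rfl, fun x hx => ?_⟩
    refine (hv.touchesSide_one_or_neg_one hx).imp (hsame one_ne_zero hye hx) fun hxe => ?_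
    have := hye.windingNumber_eq_add_one hv hyb hx hxe
    omega
  · refine ⟨1, .inl rfl, fun x hx => ?_⟩
    refine (hv.touchesSide_one_or_neg_one hx).symm.imp
      (hsame (neg_ne_zero.2 one_ne_zero) hye hx) fun hxe => ?_
    have := hxe.windingNumber_eq_add_one hv hx hyb hye
    omega

lemma IsSimplePolygon.exists_windingNumber_jump_of_mem_nhds (hv : IsSimplePolygon v) {i : Fin n}
    {m : Pt} (hm : m ∈ openSegment ℝ (v i) (v (i + 1))) {W : Set Pt} (hW : W ∈ 𝓝 m) :
    ∃ x ∈ W, ∃ y ∈ W, (0 < orient (v i) (v (i + 1)) x ∧ x ∉ polyBoundary v) ∧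
      (orient (v i) (v (i + 1)) y < 0 ∧ y ∉ polyBoundary v) ∧
      windingNumber v x = windingNumber v y + 1 := by
  obtain ⟨U, hU, hUb, hjump⟩ := hv.exists_nhds_windingNumber_jump hm
  have hside {e : ℝ} (he : e ≠ 0) :
      ∃ z, (z ∈ W ∧ z ∈ U) ∧ 0 < e * orient (v i) (v (i + 1)) z :=
    mem_closure_iff_nhds.1 (mem_closure_openSide he (hv.ne_add_one i)
      (orient_eq_zero_of_mem_segment (openSegment_subset_segment _ _ _ hm))) _ (inter_mem hW hU)
  obtain ⟨x, ⟨hxW, hxU⟩, hx⟩ := hside one_ne_zero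
  obtain ⟨y, ⟨hyW, hyU⟩, hy⟩ := hside (neg_ne_zero.2 one_ne_zero)
  rw [one_mul] at hx
  rw [neg_one_mul, neg_pos] at hy
  exact ⟨x, hxW, y, hyW, ⟨hx, hUb x hxU hx.ne'⟩, ⟨hy, hUb y hyU hy.ne⟩, hjump x hxU y hyU hx hy⟩

lemma polyBoundary_subset_of_openSegment_subset {S : Set Pt} (hS : IsClosed S)
    (h : ∀ i, openSegment ℝ (v i) (v (i + 1)) ⊆ S) : polyBoundary v ⊆ S :=
  Set.iUnion_subset fun i =>
    segment_subset_closure_openSegment.trans (closure_minimal (h i) hS)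

theorem IsSimplePolygon.exists_hasOrientation (hv : IsSimplePolygon v) :
    ∃ σ, HasOrientation v σ := by
  obtain ⟨σ, hσ, hval⟩ := hv.exists_sign_windingNumber_eq
  have hclosure : ∀ i, ∀ m ∈ openSegment ℝ (v i) (v (i + 1)), ∀ W ∈ 𝓝 m,
      (∃ x ∈ W, x ∈ polyInterior v) ∧
        ∃ x ∈ W, x ∈ {x | x ∉ polyBoundary v ∧ windingNumber v x = 0} := by
    intro i m hm W hW
    obtain ⟨x, hxW, y, hyW, ⟨-, hx⟩, ⟨-, hy⟩, hxy⟩ :=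
      hv.exists_windingNumber_jump_of_mem_nhds hm hW
    simp only [hv.mem_polyInterior_iff]
    by_cases h0 : windingNumber v x = 0
    · exact ⟨⟨y, hyW, hy, by omega⟩, x, hxW, hx, h0⟩
    · refine ⟨⟨x, hxW, hx, h0⟩, y, hyW, hy, ?_⟩
      have := hval x hx
      have := hval y hy
      omega
  refine ⟨σ, hσ, hval, fun x => hv.mem_polyInterior_iff, ?_, ?_⟩ <;>
    refine polyBoundary_subset_of_openSegment_subset isClosed_closure fun i m hm =>
      mem_closure_iff_nhds.2 fun W hW => ?_
  · exact (hclosure i m hm W hW).1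
  · exact (hclosure i m hm W hW).2

end Jordan

/-! ### Internal diagonals -/

/-- The barycentric coordinate of `x` at the vertex `a` of the triangle `a b c`. The coordinates
at `b` and `c` are `baryCoord b c a` and `baryCoord c a b`. -/
noncomputable def baryCoord (a b c x : Pt) : ℝ := orient b c x / orient a b c

lemma continuous_baryCoord (a b c : Pt) : Continuous (baryCoord a b c) :=
  (continuous_orient b c).div_const _

lemma baryCoord_smul_add_smul (a b c x y : Pt) {s t : ℝ} (h : s + t = 1) :
    baryCoord a b c (s • x + t • y) = s * baryCoord a b c x + t * baryCoord a b c y := by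
  rw [baryCoord, orient_smul_add_smul _ _ _ _ h, baryCoord, baryCoord]
  ring

lemma baryCoord_self {a b c : Pt} (h : orient a b c ≠ 0) : baryCoord a b c a = 1 := by
  rw [baryCoord, orient_rotate, div_self h]

lemma baryCoord_left (a b c : Pt) : baryCoord a b c b = 0 := by
  rw [baryCoord, orient_left, zero_div]

lemma baryCoord_right (a b c : Pt) : baryCoord a b c c = 0 := by
  rw [baryCoord, orient_right, zero_div]

lemma baryCoord_add_add {a b c : Pt} (h : orient a b c ≠ 0) (x : Pt) :
    baryCoord a b c x + baryCoord b c a x + baryCoord c a b x = 1 := by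
  rw [baryCoord, baryCoord, baryCoord, orient_rotate a b c, ← orient_rotate c a b, ← add_div,
    ← add_div, div_eq_one_iff_eq h]
  simp only [orient_eq]
  ring

lemma baryCoord_smul_add {a b c : Pt} (h : orient a b c ≠ 0) (x : Pt) :
    baryCoord a b c x • a + baryCoord b c a x • b + baryCoord c a b x • c = x := by
  rw [baryCoord, baryCoord, baryCoord, orient_rotate a b c, ← orient_rotate c a b]
  ext <;>
  · simp only [Prod.fst_add, Prod.snd_add, Prod.smul_fst, Prod.smul_snd, smul_eq_mul]
    field_simp
    simp only [orient_eq]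
    ring

lemma convex_preimage_baryCoord (a b c : Pt) {S : Set ℝ} (hS : Convex ℝ S) :
    Convex ℝ (baryCoord a b c ⁻¹' S) := by
  intro x hx y hy s t hs ht hst
  rw [Set.mem_preimage, baryCoord_smul_add_smul _ _ _ _ _ hst]
  exact hS hx hy hs ht hst

lemma mem_segment_of_baryCoord_eq_zero {a b c x : Pt} (h : orient a b c ≠ 0)
    (ha : 0 ≤ baryCoord a b c x) (hb : 0 ≤ baryCoord b c a x) (hc : baryCoord c a b x = 0) :
    x ∈ segment ℝ a b := by
  have hsum := baryCoord_add_add h x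
  have hx := baryCoord_smul_add h x
  rw [hc, add_zero] at hsum
  rw [hc, zero_smul, add_zero] at hx
  exact ⟨_, _, ha, hb, hsum, hx⟩

lemma baryCoord_eq_zero_of_mem_segment {a b c x : Pt} (hx : x ∈ segment ℝ a b) :
    baryCoord c a b x = 0 := by
  rw [baryCoord, orient_eq_zero_of_mem_segment hx, zero_div]

lemma subtendedAngle_neg {a b x : Pt} (h : orient a b x < 0) : subtendedAngle a b x < 0 := by
  have hpos : 0 < subtendedAngle b a x := by
    refine subtendedAngle_pos ?_
    rw [orient_swap]
    exact neg_pos.2 h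
  rwa [subtendedAngle_swap (not_mem_segment_of_orient_ne_zero h.ne), neg_pos] at hpos

lemma sum_subtendedAngle_ne_zero {a b c x : Pt} (ha : 0 < baryCoord a b c x)
    (hb : 0 < baryCoord b c a x) (hc : 0 < baryCoord c a b x) :
    subtendedAngle a b x + subtendedAngle b c x + subtendedAngle c a x ≠ 0 := by
  rw [baryCoord] at ha hb hc
  rw [orient_rotate a b c] at hb
  rw [← orient_rotate c a b] at hc
  rcases div_pos_iff.1 ha with ⟨h1, hD⟩ | ⟨h1, hD⟩
  · have h2 := subtendedAngle_pos ((div_pos_iff_of_pos_right hD).1 hb)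
    have h3 := subtendedAngle_pos ((div_pos_iff_of_pos_right hD).1 hc)
    linarith [subtendedAngle_pos h1]
  · have neg_of {z : ℝ} (hz : 0 < z / orient a b c) : z < 0 := by
      rwa [lt_div_iff_of_neg hD, zero_mul] at hz
    have h2 := subtendedAngle_neg (neg_of hb)
    have h3 := subtendedAngle_neg (neg_of hc)
    linarith [subtendedAngle_neg h1]

section Diagonal

variable {n : ℕ} [NeZero n] {v : Fin n → Pt}

lemma IsSimplePolygon.exists_extreme_vertex (hv : IsSimplePolygon v) :
    ∃ u : Pt, ∃ i, ∀ j ≠ i + 1, dot2 u (v j) < dot2 u (v (i + 1)) := by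
  obtain ⟨k, -, hk⟩ := Finset.univ.exists_max_image (fun k => dot2 (v k) (v k))
    ⟨0, Finset.mem_univ 0⟩
  refine ⟨v k, k - 1, fun j hj => ?_⟩
  rw [sub_add_cancel] at hj ⊢
  have hne : 0 < dot2 (v k - v j) (v k - v j) := dot2_self_sub_pos (hv.2.1.ne hj)
  have := hk j (Finset.mem_univ j)
  simp only [dot2, Prod.fst_sub, Prod.snd_sub] at *
  linarith

lemma IsSimplePolygon.orient_ne_zero_of_extreme (hv : IsSimplePolygon v) {u : Pt} {i : Fin n}
    (hi : ∀ j ≠ i + 1, dot2 u (v j) < dot2 u (v (i + 1))) :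
    orient (v i) (v (i + 1)) (v (i + 1 + 1)) ≠ 0 := by
  intro h0
  have hdot := hv.dot2_pos_of_orient_eq_zero h0
  have hi0 := hi i (add_one_ne_self (Nat.le_of_succ_le hv.1) i).symm
  have hi2 := hi (i + 1 + 1) (add_one_ne_self (Nat.le_of_succ_le hv.1) (i + 1))
  set p := v (i + 1) - v i with hp
  set q := v (i + 1 + 1) - v (i + 1) with hq
  have hup : 0 < dot2 u p := by rw [hp, (isLinearMap_dot2 u).map_sub]; linarith
  have huq : dot2 u q < 0 := by rw [hq, (isLinearMap_dot2 u).map_sub]; linarith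
  have hpq : det2 p q = 0 := by
    simp only [orient_eq] at h0
    simp only [hp, hq, det2, Prod.fst_sub, Prod.snd_sub]
    linarith
  have hlag : dot2 u p * dot2 p q = dot2 u q * dot2 p p + det2 u p * det2 p q := by
    simp only [dot2, det2]
    ring
  have hpp : 0 ≤ dot2 p p := add_nonneg (mul_self_nonneg _) (mul_self_nonneg _)
  rw [hpq, mul_zero, add_zero] at hlag
  exact (mul_pos hup hdot).not_ge (hlag ▸ mul_nonpos_of_nonpos_of_nonneg huq.le hpp)

lemma IsSimplePolygon.windingAngle_eq_of_dot2_pos (hv : IsSimplePolygon v) {u y : Pt} {i : Fin n}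
    (hy : ∀ j ≠ i + 1, 0 < dot2 u (v j - y)) :
    windingAngle v y = subtendedAngle (v i) (v (i + 1)) y +
      subtendedAngle (v (i + 1)) (v (i + 1 + 1)) y + subtendedAngle (v (i + 1 + 1)) (v i) y := by
  have hne (j : Fin n) : j + 1 ≠ j := add_one_ne_self (Nat.le_of_succ_le hv.1) j
  let θ : Fin n → ℝ := fun j => (dotCross u (v j - y)).arg
  have hθ (j : Fin n) (hj : j ≠ i + 1) (hj' : j ≠ i) :
      subtendedAngle (v j) (v (j + 1)) y - (θ (j + 1) - θ j) = 0 :=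
    sub_eq_zero.2 (subtendedAngle_eq_arg_sub_arg (hy j hj) (hy (j + 1) (by simpa using hj')))
  have hsum : windingAngle v y =
      ∑ j, (subtendedAngle (v j) (v (j + 1)) y - (θ (j + 1) - θ j)) := by
    rw [Finset.sum_sub_distrib, sum_sub_shift_eq_zero, sub_zero, windingAngle]
  have hclose : subtendedAngle (v (i + 1 + 1)) (v i) y = θ i - θ (i + 1 + 1) :=
    subtendedAngle_eq_arg_sub_arg (hy _ (hne _)) (hy _ (hne _).symm)
  rw [hsum, Fintype.sum_eq_add i (i + 1) (hne i).symm fun j hj => hθ j hj.2 hj.1, hclose]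
  ring

lemma IsSimplePolygon.eventually_windingNumber_ne_zero (hv : IsSimplePolygon v) {u : Pt}
    {i : Fin n} (hi : ∀ j ≠ i + 1, dot2 u (v j) < dot2 u (v (i + 1))) :
    ∀ᶠ y in 𝓝 (v (i + 1)), 0 < baryCoord (v i) (v (i + 1)) (v (i + 1 + 1)) y →
      0 < baryCoord (v (i + 1 + 1)) (v i) (v (i + 1)) y → y ∉ polyBoundary v →
      windingNumber v y ≠ 0 := by
  have hD := hv.orient_ne_zero_of_extreme hi
  have hfar : ∀ᶠ y in 𝓝 (v (i + 1)), ∀ j ≠ i + 1, 0 < dot2 (-u) (v j - y) := by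
    refine eventually_all.2 fun j => ?_
    by_cases hj : j = i + 1
    · exact .of_forall fun _ h => absurd hj h
    have hcont : Continuous fun y => dot2 (-u) (v j - y) := by
      unfold dot2
      fun_prop
    refine (hcont.continuousAt.eventually (lt_mem_nhds ?_)).mono fun y hy _ => hy
    have := hi j hj
    simp only [dot2, Prod.fst_neg, Prod.snd_neg, Prod.fst_sub, Prod.snd_sub] at this ⊢
    linarith
  have hpos : ∀ᶠ y in 𝓝 (v (i + 1)), 0 < baryCoord (v (i + 1)) (v (i + 1 + 1)) (v i) y := by
    refine (continuous_baryCoord _ _ _).continuousAt.eventually (lt_mem_nhds ?_)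
    rw [baryCoord_self (orient_rotate (v i) _ _ ▸ hD)]
    exact one_pos
  filter_upwards [hfar, hpos] with y hy hb ha hc hyv h0
  have hsum := windingAngle_eq_two_pi_mul hyv
  rw [h0, Int.cast_zero, mul_zero, hv.windingAngle_eq_of_dot2_pos hy] at hsum
  exact sum_subtendedAngle_ne_zero ha hb hc hsum

lemma IsSimplePolygon.eq_or_eq_of_mem_segment (hv : IsSimplePolygon v) {j k : Fin n}
    (h : v j ∈ segment ℝ (v k) (v (k + 1))) : j = k ∨ j = k + 1 := by
  rcases eq_or_ne k j with rfl | hkj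
  · exact .inl rfl
  · exact (hv.2.2 k j hkj ⟨h, left_mem_segment _ _ _⟩).1.imp (hv.2.1 ·) (hv.2.1 ·)

/-- The open segment from `v i` to `v j` is an internal diagonal of the polygon. This excludes
equal and consecutive indices, since vertices and edges are not in the interior. -/
def IsInternalDiagonal (v : Fin n → Pt) (i j : Fin n) : Prop :=
  openSegment ℝ (v i) (v j) ⊆ polyInterior v

lemma IsInternalDiagonal.symm {i j : Fin n} (h : IsInternalDiagonal v i j) :
    IsInternalDiagonal v j i := by
  rwa [IsInternalDiagonal, openSegment_symm]

lemma IsInternalDiagonal.ne {i j : Fin n} (h : IsInternalDiagonal v i j) : j ≠ i := by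
  rintro rfl
  rw [IsInternalDiagonal, openSegment_same, Set.singleton_subset_iff] at h
  exact h.1 (vertex_mem_polyBoundary v j)

lemma IsInternalDiagonal.ne_add_one {i j : Fin n} (h : IsInternalDiagonal v i j) : j ≠ i + 1 := by
  rintro rfl
  have hm := midpoint_mem_openSegment (𝕜 := ℝ) (v i) (v (i + 1))
  exact (h hm).1 (segment_subset_polyBoundary v i (openSegment_subset_segment _ _ _ hm))

lemma mem_openSegment_of_mem_segment_of_mem_openSegment {p q y z : Pt} (hy : y ∈ segment ℝ p q)
    (hyq : y ≠ q) (hz : z ∈ openSegment ℝ y q) : z ∈ openSegment ℝ p q := by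
  obtain ⟨s, t, hs, ht, hst, rfl⟩ := hy
  obtain ⟨s', t', hs', ht', hst', rfl⟩ := hz
  have hs0 : s ≠ 0 := by
    rintro rfl
    rw [zero_add] at hst
    exact hyq (by rw [hst, zero_smul, one_smul, zero_add])
  refine ⟨s' * s, s' * t + t', by positivity, by positivity, ?_, by module⟩
  rw [← add_assoc, ← mul_add, hst, mul_one, hst']

lemma exists_mem_openSegment_eq_zero {E : Type*} [AddCommGroup E] [Module ℝ E]
    [TopologicalSpace E] [ContinuousAdd E] [ContinuousSMul ℝ E] {f : E → ℝ}
    (hf : Continuous f) {x y : E} (hx : 0 < f x) (hy : f y < 0) :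
    ∃ z ∈ openSegment ℝ x y, f z = 0 := by
  obtain ⟨z, hz, hz0⟩ : (0 : ℝ) ∈ f '' segment ℝ x y :=
    (convex_segment x y).isPreconnected.intermediate_value (right_mem_segment _ _ _)
      (left_mem_segment _ _ _) hf.continuousOn ⟨hy.le, hx.le⟩
  exact ⟨z, mem_openSegment_of_ne_left_right (by rintro rfl; exact hx.ne' hz0)
    (by rintro rfl; exact hy.ne hz0) hz, hz0⟩

/-- A segment leaving a corner must cross one of the two edges at that corner. -/
lemma IsSimplePolygon.baryCoord_nonneg_of_mem_edge (hv : IsSimplePolygon v) {i k j : Fin n}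
    {y : Pt} (hD : orient (v i) (v (i + 1)) (v (i + 1 + 1)) ≠ 0)
    (ha : 0 < baryCoord (v i) (v (i + 1)) (v (i + 1 + 1)) y)
    (hb : 0 ≤ baryCoord (v (i + 1)) (v (i + 1 + 1)) (v i) y)
    (hc : 0 < baryCoord (v (i + 1 + 1)) (v i) (v (i + 1)) y)
    (hy : y ∈ segment ℝ (v k) (v (k + 1))) (hj : j = k ∨ j = k + 1)
    (hbj : baryCoord (v (i + 1)) (v (i + 1 + 1)) (v i) y ≤
      baryCoord (v (i + 1)) (v (i + 1 + 1)) (v i) (v j)) :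
    0 ≤ baryCoord (v i) (v (i + 1)) (v (i + 1 + 1)) (v j) ∧
      0 ≤ baryCoord (v (i + 1 + 1)) (v i) (v (i + 1)) (v j) := by
  by_contra hcon
  set f : Pt → ℝ := fun z => min (baryCoord (v i) (v (i + 1)) (v (i + 1 + 1)) z)
    (baryCoord (v (i + 1 + 1)) (v i) (v (i + 1)) z) with hf
  have hfy : 0 < f y := lt_min ha hc
  have hfj : f (v j) < 0 := by rwa [← not_le, hf, le_min_iff]
  obtain ⟨z, hz, hz0⟩ := exists_mem_openSegment_eq_zero
    ((continuous_baryCoord _ _ _).min (continuous_baryCoord _ _ _)) hfy hfj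
  have hzb : 0 ≤ baryCoord (v (i + 1)) (v (i + 1 + 1)) (v i) z := by
    obtain ⟨s, t, hs, ht, hst, rfl⟩ := hz
    rw [baryCoord_smul_add_smul _ _ _ _ _ hst]
    exact add_nonneg (mul_nonneg hs.le hb) (mul_nonneg ht.le (hb.trans hbj))
  have hzk : z ∈ openSegment ℝ (v k) (v (k + 1)) := by
    have hyj : y ≠ v j := by rintro rfl; exact hfj.not_gt hfy
    rcases hj with rfl | rfl
    · rw [segment_symm] at hy
      rw [openSegment_symm]
      exact mem_openSegment_of_mem_segment_of_mem_openSegment hy hyj hz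
    · exact mem_openSegment_of_mem_segment_of_mem_openSegment hy hyj hz
  rcases min_eq_iff.1 hz0 with ⟨hza, hzc⟩ | ⟨hzc, hza⟩
  · refine hv.not_mem_segment_of_mem_openSegment (j := i + 1) ?_ hzk
      (mem_segment_of_baryCoord_eq_zero (orient_rotate (v i) _ _ ▸ hD) hzb (hza ▸ hzc) hza)
    rintro rfl
    exact ha.ne' (baryCoord_eq_zero_of_mem_segment hy)
  · refine hv.not_mem_segment_of_mem_openSegment (j := i) ?_ hzk
      (mem_segment_of_baryCoord_eq_zero hD (hzc ▸ hza) hzb hzc)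
    rintro rfl
    exact hc.ne' (baryCoord_eq_zero_of_mem_segment hy)

/-- The vertex `v j` lies in the closed triangle cut off at the corner `v (i + 1)`, without being
one of the three corners of that triangle. -/
def ObstructsEar (v : Fin n → Pt) (i j : Fin n) : Prop :=
  (j ≠ i ∧ j ≠ i + 1 ∧ j ≠ i + 1 + 1) ∧
    0 ≤ baryCoord (v i) (v (i + 1)) (v (i + 1 + 1)) (v j) ∧
    0 ≤ baryCoord (v (i + 1)) (v (i + 1 + 1)) (v i) (v j) ∧
    0 ≤ baryCoord (v (i + 1 + 1)) (v i) (v (i + 1)) (v j)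

lemma IsSimplePolygon.obstructsEar_or_eq (hv : IsSimplePolygon v) {i k j : Fin n} {y : Pt}
    (hD : orient (v i) (v (i + 1)) (v (i + 1 + 1)) ≠ 0)
    (ha : 0 < baryCoord (v i) (v (i + 1)) (v (i + 1 + 1)) y)
    (hb : 0 ≤ baryCoord (v (i + 1)) (v (i + 1 + 1)) (v i) y)
    (hc : 0 < baryCoord (v (i + 1 + 1)) (v i) (v (i + 1)) y)
    (hy : y ∈ segment ℝ (v k) (v (k + 1))) (hj : j = k ∨ j = k + 1)
    (hbj : baryCoord (v (i + 1)) (v (i + 1 + 1)) (v i) y ≤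
      baryCoord (v (i + 1)) (v (i + 1 + 1)) (v i) (v j)) :
    ObstructsEar v i j ∨ j = i ∨ j = i + 1 + 1 := by
  obtain ⟨haj, hcj⟩ := hv.baryCoord_nonneg_of_mem_edge hD ha hb hc hy hj hbj
  have hj' : j ≠ i + 1 := by
    rintro rfl
    rcases hj with rfl | hj
    · exact ha.ne' (baryCoord_eq_zero_of_mem_segment hy)
    · obtain rfl := add_right_cancel hj
      exact hc.ne' (baryCoord_eq_zero_of_mem_segment hy)
  by_cases h : j = i ∨ j = i + 1 + 1
  · exact .inr h
  · rw [not_or] at h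
    exact .inl ⟨⟨h.1, hj', h.2⟩, haj, hb.trans hbj, hcj⟩

lemma IsSimplePolygon.exists_obstructsEar (hv : IsSimplePolygon v) {i : Fin n} {y : Pt}
    (hD : orient (v i) (v (i + 1)) (v (i + 1 + 1)) ≠ 0)
    (ha : 0 < baryCoord (v i) (v (i + 1)) (v (i + 1 + 1)) y)
    (hb : 0 < baryCoord (v (i + 1)) (v (i + 1 + 1)) (v i) y)
    (hc : 0 < baryCoord (v (i + 1 + 1)) (v i) (v (i + 1)) y) (hy : y ∈ polyBoundary v) :
    ∃ j, ObstructsEar v i j ∧ baryCoord (v (i + 1)) (v (i + 1 + 1)) (v i) y ≤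
      baryCoord (v (i + 1)) (v (i + 1 + 1)) (v i) (v j) := by
  obtain ⟨k, hk⟩ := Set.mem_iUnion.1 hy
  obtain ⟨j, hj, hbj⟩ : ∃ j, (j = k ∨ j = k + 1) ∧
      baryCoord (v (i + 1)) (v (i + 1 + 1)) (v i) y ≤
        baryCoord (v (i + 1)) (v (i + 1 + 1)) (v i) (v j) := by
    obtain ⟨s, t, hs, ht, hst, h⟩ := hk
    have hle : baryCoord (v (i + 1)) (v (i + 1 + 1)) (v i) y ≤
        max (baryCoord (v (i + 1)) (v (i + 1 + 1)) (v i) (v k))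
          (baryCoord (v (i + 1)) (v (i + 1 + 1)) (v i) (v (k + 1))) := by
      rw [← h, baryCoord_smul_add_smul _ _ _ _ _ hst]
      exact Convex.combo_le_max _ _ hs ht hst
    exact (le_max_iff.1 hle).elim (fun h => ⟨k, .inl rfl, h⟩) fun h => ⟨k + 1, .inr rfl, h⟩
  refine ⟨j, (hv.obstructsEar_or_eq hD ha hb.le hc hk hj hbj).resolve_right ?_, hbj⟩
  rintro (rfl | rfl)
  · exact (hb.trans_le hbj).ne' (baryCoord_right _ _ _)
  · exact (hb.trans_le hbj).ne' (baryCoord_left _ _ _)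

lemma IsSimplePolygon.subset_polyInterior_of_convex (hv : IsSimplePolygon v) {u : Pt} {i : Fin n}
    (hi : ∀ j ≠ i + 1, dot2 u (v j) < dot2 u (v (i + 1))) {T : Set Pt} (hT : Convex ℝ T)
    (hTpos : ∀ y ∈ T, 0 < baryCoord (v i) (v (i + 1)) (v (i + 1 + 1)) y ∧
      0 < baryCoord (v (i + 1 + 1)) (v i) (v (i + 1)) y)
    (hTv : ∀ y ∈ T, y ∉ polyBoundary v) (hcl : v (i + 1) ∈ closure T) : T ⊆ polyInterior v := by
  obtain ⟨z, hz, hzT⟩ := mem_closure_iff_nhds.1 hcl _ (hv.eventually_windingNumber_ne_zero hi)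
  have hz0 : windingNumber v z ≠ 0 := hz (hTpos z hzT).1 (hTpos z hzT).2 (hTv z hzT)
  intro y hy
  rw [hv.mem_polyInterior_iff, windingNumber_eq_of_isPreconnected hT.isPreconnected hTv hy hzT]
  exact ⟨hTv y hy, hz0⟩

lemma IsSimplePolygon.exists_isInternalDiagonal_of_obstructsEar (hv : IsSimplePolygon v) {u : Pt}
    {i : Fin n} (hi : ∀ j ≠ i + 1, dot2 u (v j) < dot2 u (v (i + 1)))
    (h : ∃ j, ObstructsEar v i j) : ∃ j, IsInternalDiagonal v (i + 1) j := by
  have hD := hv.orient_ne_zero_of_extreme hi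
  obtain ⟨j, hj, hmax⟩ := Set.exists_max_image {j | ObstructsEar v i j}
    (fun j => baryCoord (v (i + 1)) (v (i + 1 + 1)) (v i) (v j)) (Set.toFinite _) h
  obtain ⟨⟨hj0, hj1, hj2⟩, haj, hbj, hcj⟩ := hj
  have haj' : 0 < baryCoord (v i) (v (i + 1)) (v (i + 1 + 1)) (v j) :=
    haj.lt_of_ne' fun h0 => (hv.eq_or_eq_of_mem_segment (mem_segment_of_baryCoord_eq_zero
      (orient_rotate (v i) _ _ ▸ hD) hbj hcj h0)).elim hj1 hj2
  have hcj' : 0 < baryCoord (v (i + 1 + 1)) (v i) (v (i + 1)) (v j) :=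
    hcj.lt_of_ne' fun h0 => (hv.eq_or_eq_of_mem_segment
      (mem_segment_of_baryCoord_eq_zero hD haj hbj h0)).elim hj0 hj1
  have hb1 : baryCoord (v (i + 1)) (v (i + 1 + 1)) (v i) (v (i + 1)) = 1 :=
    baryCoord_self (orient_rotate (v i) _ _ ▸ hD)
  have hcoord : ∀ y ∈ openSegment ℝ (v (i + 1)) (v j),
      0 < baryCoord (v i) (v (i + 1)) (v (i + 1 + 1)) y ∧
      baryCoord (v (i + 1)) (v (i + 1 + 1)) (v i) (v j) <
        baryCoord (v (i + 1)) (v (i + 1 + 1)) (v i) y ∧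
      0 < baryCoord (v (i + 1 + 1)) (v i) (v (i + 1)) y := by
    rintro y ⟨s, t, hs, ht, hst, rfl⟩
    have hsum := baryCoord_add_add hD (v j)
    simp only [baryCoord_smul_add_smul _ _ _ _ _ hst, baryCoord_left, baryCoord_right, hb1]
    exact ⟨by positivity, by nlinarith, by positivity⟩
  refine ⟨j, hv.subset_polyInterior_of_convex hi (convex_openSegment _ _)
    (fun y hy => ⟨(hcoord y hy).1, (hcoord y hy).2.2⟩) (fun y hy hyv => ?_)
    (segment_subset_closure_openSegment (left_mem_segment _ _ _))⟩
  obtain ⟨hay, hby, hcy⟩ := hcoord y hy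
  obtain ⟨l, hl, hle⟩ := hv.exists_obstructsEar hD hay (hbj.trans_lt hby) hcy hyv
  exact (hby.trans_le hle).not_ge (hmax l hl)

lemma IsSimplePolygon.not_mem_polyBoundary_of_not_obstructsEar (hv : IsSimplePolygon v)
    {i : Fin n} (h3 : i + 1 + 1 + 1 ≠ i) (hD : orient (v i) (v (i + 1)) (v (i + 1 + 1)) ≠ 0)
    (h : ∀ j, ¬ ObstructsEar v i j) {y : Pt}
    (ha : 0 < baryCoord (v i) (v (i + 1)) (v (i + 1 + 1)) y)
    (hb : 0 ≤ baryCoord (v (i + 1)) (v (i + 1 + 1)) (v i) y)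
    (hc : 0 < baryCoord (v (i + 1 + 1)) (v i) (v (i + 1)) y) : y ∉ polyBoundary v := by
  intro hyv
  rcases hb.lt_or_eq with hb0 | hb0
  · obtain ⟨j, hj, -⟩ := hv.exists_obstructsEar hD ha hb0 hc hyv
    exact h j hj
  obtain ⟨k, hk⟩ := Set.mem_iUnion.1 hyv
  have hend {j : Fin n} (hj : j = k ∨ j = k + 1)
      (hj0 : 0 ≤ baryCoord (v (i + 1)) (v (i + 1 + 1)) (v i) (v j)) : j = i ∨ j = i + 1 + 1 :=
    (hv.obstructsEar_or_eq hD ha hb hc hk hj (hb0 ▸ hj0)).resolve_left (h j)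
  have hle {j : Fin n} (hj : j = k ∨ j = k + 1) :
      baryCoord (v (i + 1)) (v (i + 1 + 1)) (v i) (v j) ≤ 0 := by
    by_contra! hpos
    rcases hend hj hpos.le with rfl | rfl
    · exact hpos.ne' (baryCoord_right _ _ _)
    · exact hpos.ne' (baryCoord_left _ _ _)
  have hne {j : Fin n} (hj : j = k ∨ j = k + 1) : v j ≠ y := by
    rintro rfl
    rcases hend hj hb with rfl | rfl
    · exact hc.ne' (baryCoord_left _ _ _)
    · exact ha.ne' (baryCoord_right _ _ _)
  obtain ⟨s, t, hs, ht, hst, rfl⟩ :=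
    mem_openSegment_of_ne_left_right (hne (.inl rfl)) (hne (.inr rfl)) hk
  rw [baryCoord_smul_add_smul _ _ _ _ _ hst] at hb0
  have hk0 := hle (.inl rfl)
  have hk1 := hle (.inr rfl)
  have hz := mul_nonpos_of_nonneg_of_nonpos hs.le hk0
  have hz' := mul_nonpos_of_nonneg_of_nonpos ht.le hk1
  have hk0' := hend (.inl rfl) (nonneg_of_mul_nonneg_right (by linarith) hs)
  have hk1' := hend (.inr rfl) (nonneg_of_mul_nonneg_right (by linarith) ht)
  rcases hk0' with rfl | rfl <;> rcases hk1' with hk1' | hk1'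
  · exact add_one_ne_self (by have := hv.1; omega) _ hk1'
  · exact add_one_ne_self (by have := hv.1; omega) _ (add_right_cancel hk1').symm
  · exact h3 hk1'
  · exact add_one_ne_self (by have := hv.1; omega) _ hk1'

theorem IsSimplePolygon.exists_isInternalDiagonal (hv : IsSimplePolygon v)
    (h3 : ∀ i : Fin n, i + 1 + 1 + 1 ≠ i) : ∃ i j, IsInternalDiagonal v i j := by
  obtain ⟨u, i, hi⟩ := hv.exists_extreme_vertex
  by_cases h : ∃ j, ObstructsEar v i j
  · exact ⟨i + 1, hv.exists_isInternalDiagonal_of_obstructsEar hi h⟩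
  rw [not_exists] at h
  refine ⟨i, i + 1 + 1, fun y hy => ?_⟩
  have hD := hv.orient_ne_zero_of_extreme hi
  set T : Set Pt := baryCoord (v i) (v (i + 1)) (v (i + 1 + 1)) ⁻¹' Set.Ioi 0 ∩
    baryCoord (v (i + 1)) (v (i + 1 + 1)) (v i) ⁻¹' Set.Ici 0 ∩
    baryCoord (v (i + 1 + 1)) (v i) (v (i + 1)) ⁻¹' Set.Ioi 0
  have hT : Convex ℝ T := ((convex_preimage_baryCoord _ _ _ (convex_Ioi 0)).inter
    (convex_preimage_baryCoord _ _ _ (convex_Ici 0))).inter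
    (convex_preimage_baryCoord _ _ _ (convex_Ioi 0))
  have ha1 := baryCoord_self hD
  have hb1 := baryCoord_self (orient_rotate (v i) _ _ ▸ hD)
  have hc1 := baryCoord_self ((orient_rotate _ (v i) _).symm ▸ hD)
  have hyT : y ∈ T := by
    obtain ⟨s, t, hs, ht, hst, rfl⟩ := hy
    refine ⟨⟨?_, ?_⟩, ?_⟩ <;>
      simp [baryCoord_smul_add_smul _ _ _ _ _ hst, baryCoord_left, baryCoord_right, ha1, hc1, hs,
        ht]
  have hsub : openSegment ℝ (v (i + 1)) y ⊆ T := by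
    obtain ⟨⟨hay, hby⟩, hcy⟩ := hyT
    rintro z ⟨s, t, hs, ht, hst, rfl⟩
    refine ⟨⟨?_, ?_⟩, ?_⟩ <;>
      simp only [Set.mem_preimage, baryCoord_smul_add_smul _ _ _ _ _ hst, baryCoord_left,
        baryCoord_right, hb1, Set.mem_Ioi, Set.mem_Ici, mul_zero, zero_add, mul_one]
    · exact mul_pos ht hay
    · exact add_nonneg hs.le (mul_nonneg ht.le hby)
    · exact mul_pos ht hcy
  exact hv.subset_polyInterior_of_convex hi hT (fun y hy => ⟨hy.1.1, hy.2⟩)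
    (fun y hy => hv.not_mem_polyBoundary_of_not_obstructsEar (h3 i) hD h hy.1.1 hy.1.2 hy.2)
    (closure_mono hsub (segment_subset_closure_openSegment (left_mem_segment _ _ _))) hyT

end Diagonal

/-! ### Splitting along diagonals -/

section CyclicShift

variable {n : ℕ} [NeZero n] {v : Fin n → Pt}

/-- The polygon `v` with its vertices relabelled so that the numbering starts at `v i`. -/
def cyclicShift (v : Fin n → Pt) (i : Fin n) : Fin n → Pt := fun k => v (i + k)

lemma cyclicShift_cyclicShift (v : Fin n → Pt) (i j : Fin n) :
    cyclicShift (cyclicShift v i) j = cyclicShift v (i + j) := by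
  funext k
  simp only [cyclicShift, add_assoc]

lemma polyBoundary_cyclicShift (v : Fin n → Pt) (i : Fin n) :
    polyBoundary (cyclicShift v i) = polyBoundary v := by
  simp only [polyBoundary, cyclicShift, ← add_assoc]
  exact (Equiv.addLeft i).surjective.iUnion_comp fun k => segment ℝ (v k) (v (k + 1))

lemma windingNumber_cyclicShift (v : Fin n → Pt) (i : Fin n) :
    windingNumber (cyclicShift v i) = windingNumber v := by
  funext x
  have h : windingAngle (cyclicShift v i) x = windingAngle v x := by
    simp only [windingAngle, cyclicShift, ← add_assoc]
    exact Equiv.sum_comp (Equiv.addLeft i) fun k => subtendedAngle (v k) (v (k + 1)) x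
  rw [windingNumber, windingNumber, h]

lemma polyInterior_cyclicShift (v : Fin n → Pt) (i : Fin n) :
    polyInterior (cyclicShift v i) = polyInterior v := by
  simp only [polyInterior, polyBoundary_cyclicShift]

lemma polyRegion_cyclicShift (v : Fin n → Pt) (i : Fin n) :
    polyRegion (cyclicShift v i) = polyRegion v := by
  simp only [polyRegion, polyBoundary_cyclicShift, polyInterior_cyclicShift]

lemma range_cyclicShift (v : Fin n → Pt) (i : Fin n) :
    Set.range (cyclicShift v i) = Set.range v :=
  (Equiv.addLeft i).surjective.range_comp v

lemma IsSimplePolygon.shift (hv : IsSimplePolygon v) (i : Fin n) :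
    IsSimplePolygon (cyclicShift v i) := by
  refine ⟨hv.1, hv.2.1.comp (add_right_injective i), fun j k hjk => ?_⟩
  simp only [cyclicShift, ← add_assoc]
  exact hv.2.2 _ _ fun h => hjk (add_left_cancel h)

lemma HasOrientation.shift {σ : ℤ} (h : HasOrientation v σ) (i : Fin n) :
    HasOrientation (cyclicShift v i) σ := by
  refine ⟨h.sign, ?_, ?_, ?_, ?_⟩ <;>
    simp only [polyBoundary_cyclicShift, polyInterior_cyclicShift, windingNumber_cyclicShift]
  exacts [h.windingNumber_eq, h.mem_polyInterior_iff, h.subset_closure_interior,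
    h.subset_closure_exterior]

lemma IsInternalDiagonal.shift {i j : Fin n} (h : IsInternalDiagonal v i (i + j)) :
    IsInternalDiagonal (cyclicShift v i) 0 j := by
  simpa only [IsInternalDiagonal, polyInterior_cyclicShift, cyclicShift, add_zero] using h

end CyclicShift

/-- The polygon `v` traversed in the opposite direction, starting at the same vertex. -/
def reversal {n : ℕ} (v : Fin n → Pt) : Fin n → Pt := fun k => v (-k)

lemma range_reversal {n : ℕ} (v : Fin n → Pt) : Set.range (reversal v) = Set.range v :=
  (Equiv.neg (Fin n)).surjective.range_comp v

section Reversal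

variable {n : ℕ} [NeZero n] {v : Fin n → Pt}

/-- The edge of `v` which is the edge `k` of `reversal v`. -/
def reversedEdge (n : ℕ) [NeZero n] : Fin n ≃ Fin n :=
  (Equiv.addRight 1).trans (Equiv.neg (Fin n))

lemma reversal_apply (v : Fin n → Pt) (k : Fin n) :
    reversal v k = v (reversedEdge n k + 1) :=
  congrArg v <| show -k = -(k + 1) + 1 by abel

lemma reversal_add_one (v : Fin n → Pt) (k : Fin n) :
    reversal v (k + 1) = v (reversedEdge n k) := rfl

lemma segment_reversal (v : Fin n → Pt) (k : Fin n) :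
    segment ℝ (reversal v k) (reversal v (k + 1)) =
      segment ℝ (v (reversedEdge n k)) (v (reversedEdge n k + 1)) := by
  rw [reversal_apply, reversal_add_one, segment_symm]

lemma polyBoundary_reversal (v : Fin n → Pt) : polyBoundary (reversal v) = polyBoundary v := by
  simp only [polyBoundary, segment_reversal]
  exact (reversedEdge n).surjective.iUnion_comp fun k => segment ℝ (v k) (v (k + 1))

lemma polyInterior_reversal (v : Fin n → Pt) : polyInterior (reversal v) = polyInterior v := by
  simp only [polyInterior, polyBoundary_reversal]

lemma polyRegion_reversal (v : Fin n → Pt) : polyRegion (reversal v) = polyRegion v := by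
  simp only [polyRegion, polyBoundary_reversal, polyInterior_reversal]

lemma windingNumber_reversal {x : Pt} (hx : x ∉ polyBoundary v) :
    windingNumber (reversal v) x = -windingNumber v x := by
  have hx' : x ∉ polyBoundary (reversal v) := polyBoundary_reversal v ▸ hx
  have hedge (k : Fin n) :
      subtendedAngle (reversal v k) (reversal v (k + 1)) x =
        -subtendedAngle (v (reversedEdge n k)) (v (reversedEdge n k + 1)) x := by
    rw [reversal_apply, reversal_add_one]
    exact subtendedAngle_swap fun h => hx (segment_subset_polyBoundary v _ h)
  have hangle : windingAngle (reversal v) x = -windingAngle v x := by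
    simp only [windingAngle, hedge, Finset.sum_neg_distrib]
    rw [Equiv.sum_comp (reversedEdge n) fun i => subtendedAngle (v i) (v (i + 1)) x]
  rw [windingAngle_eq_two_pi_mul hx, windingAngle_eq_two_pi_mul hx', ← mul_neg] at hangle
  exact_mod_cast mul_left_cancel₀ Real.two_pi_pos.ne' hangle

lemma IsSimplePolygon.reverse (hv : IsSimplePolygon v) : IsSimplePolygon (reversal v) := by
  refine ⟨hv.1, hv.2.1.comp neg_injective, fun j k hjk => ?_⟩
  rw [segment_reversal, segment_reversal, reversal_add_one, reversal_add_one, reversal_apply,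
    reversal_apply, Set.pair_comm, Set.pair_comm (v (reversedEdge n k + 1))]
  exact hv.2.2 _ _ ((reversedEdge n).injective.ne hjk)

lemma HasOrientation.reverse {σ : ℤ} (h : HasOrientation v σ) :
    HasOrientation (reversal v) (-σ) where
  sign := h.sign.symm.imp (fun hσ => by rw [hσ, neg_neg]) fun hσ => by rw [hσ]
  windingNumber_eq x hx := by
    rw [polyBoundary_reversal] at hx
    rw [windingNumber_reversal hx, neg_eq_zero, neg_inj]
    exact h.windingNumber_eq x hx
  mem_polyInterior_iff x := by
    rw [polyInterior_reversal, polyBoundary_reversal, h.mem_polyInterior_iff]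
    exact and_congr_right fun hx => by rw [windingNumber_reversal hx, neg_ne_zero]
  subset_closure_interior := by
    rw [polyInterior_reversal, polyBoundary_reversal]
    exact h.subset_closure_interior
  subset_closure_exterior := by
    rw [polyBoundary_reversal]
    refine h.subset_closure_exterior.trans (closure_mono fun x hx => ⟨hx.1, ?_⟩)
    rw [windingNumber_reversal hx.1, hx.2, neg_zero]

lemma IsSimplePolygon.hasOrientation_one_or_reversal (hv : IsSimplePolygon v) :
    HasOrientation v 1 ∨ HasOrientation (reversal v) 1 := by
  obtain ⟨σ, hσ⟩ := hv.exists_hasOrientation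
  rcases hσ.sign with rfl | rfl
  · exact .inl hσ
  · exact .inr hσ.reverse

end Reversal

section Split

variable {n : ℕ} [NeZero n] {v : Fin n → Pt} {k₁ k₂ : ℕ} [NeZero k₁] [NeZero k₂]
  {g₁ : Fin k₁ → Fin n} {g₂ : Fin k₂ → Fin n}

/-- The index maps `g₁`, `g₂` describe how a diagonal cuts an `n`-gon into a `k₁`-gon and a
`k₂`-gon: the diagonal is the last edge of the first part and the first edge of the second. -/
structure IsDiagonalSplit (g₁ : Fin k₁ → Fin n) (g₂ : Fin k₂ → Fin n) : Prop where
  three_le_left : 3 ≤ k₁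
  three_le_right : 3 ≤ k₂
  injective_left : Function.Injective g₁
  injective_right : Function.Injective g₂
  map_add_one_left : ∀ i ≠ -1, g₁ (i + 1) = g₁ i + 1
  map_add_one_right : ∀ i ≠ 0, g₂ (i + 1) = g₂ i + 1
  map_zero : g₂ 0 = g₁ 0
  map_one : g₂ 1 = g₁ (-1)
  image_right : (Finset.univ.erase 0).image g₂ = ((Finset.univ.erase (-1)).image g₁)ᶜ

lemma IsDiagonalSplit.windingAngle_eq_add (h : IsDiagonalSplit g₁ g₂) {x : Pt}
    (hx : x ∉ segment ℝ (v (g₁ 0)) (v (g₁ (-1)))) :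
    windingAngle v x = windingAngle (v ∘ g₁) x + windingAngle (v ∘ g₂) x := by
  set f : Fin n → ℝ := fun i => subtendedAngle (v i) (v (i + 1)) x with hf
  have h₁ : windingAngle (v ∘ g₁) x = ∑ i ∈ (Finset.univ.erase (-1)).image g₁, f i +
      subtendedAngle (v (g₁ (-1))) (v (g₁ 0)) x := by
    rw [windingAngle, ← Finset.sum_erase_add _ _ (Finset.mem_univ (-1)),
      Finset.sum_image h.injective_left.injOn]
    simp only [Function.comp_apply, neg_add_cancel]
    congr 1
    exact Finset.sum_congr rfl fun i hi => by
      rw [hf, h.map_add_one_left i (Finset.ne_of_mem_erase hi)]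
  have h₂ : windingAngle (v ∘ g₂) x = ∑ i ∈ ((Finset.univ.erase (-1)).image g₁)ᶜ, f i +
      subtendedAngle (v (g₁ 0)) (v (g₁ (-1))) x := by
    rw [windingAngle, ← Finset.sum_erase_add _ _ (Finset.mem_univ 0), ← h.image_right,
      Finset.sum_image h.injective_right.injOn]
    simp only [Function.comp_apply, zero_add, h.map_zero, h.map_one]
    congr 1
    exact Finset.sum_congr rfl fun i hi => by
      rw [hf, h.map_add_one_right i (Finset.ne_of_mem_erase hi)]
  rw [h₁, h₂, subtendedAngle_swap hx, windingAngle, ← Finset.sum_add_sum_compl]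
  ring

lemma IsDiagonalSplit.windingNumber_eq_add (h : IsDiagonalSplit g₁ g₂) {x : Pt}
    (hx : x ∉ segment ℝ (v (g₁ 0)) (v (g₁ (-1)))) (hxv : x ∉ polyBoundary v)
    (hx₁ : x ∉ polyBoundary (v ∘ g₁)) (hx₂ : x ∉ polyBoundary (v ∘ g₂)) :
    windingNumber v x = windingNumber (v ∘ g₁) x + windingNumber (v ∘ g₂) x := by
  have h := h.windingAngle_eq_add hx
  rw [windingAngle_eq_two_pi_mul hxv, windingAngle_eq_two_pi_mul hx₁,
    windingAngle_eq_two_pi_mul hx₂, ← mul_add] at h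
  exact_mod_cast mul_left_cancel₀ Real.two_pi_pos.ne' h

lemma IsSimplePolygon.comp_of_map_add_one (hv : IsSimplePolygon v) {k : ℕ} [NeZero k] (hk : 3 ≤ k)
    {g : Fin k → Fin n} (hg : Function.Injective g) {l : Fin k}
    (hs : ∀ i ≠ l, g (i + 1) = g i + 1)
    (hd : openSegment ℝ (v (g l)) (v (g (l + 1))) ⊆ polyInterior v) : IsSimplePolygon (v ∘ g) := by
  have hl : ∀ j ≠ l, segment ℝ (v (g l)) (v (g (l + 1))) ∩ segment ℝ (v (g j)) (v (g (j + 1))) ⊆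
      ({v (g l), v (g (l + 1))} ∩ {v (g j), v (g (j + 1))} : Set Pt) := by
    rintro j hj x ⟨hxl, hxj⟩
    rw [hs j hj] at hxj ⊢
    rw [← insert_endpoints_openSegment] at hxl
    have hvert {m : Fin n} (hm : x = v m) : x ∈ ({v (g j), v (g j + 1)} : Set Pt) := by
      rcases hv.eq_or_eq_of_mem_segment (hm ▸ hxj) with rfl | rfl
      · exact .inl hm
      · exact .inr hm
    rcases hxl with hx | hx | hx
    · exact ⟨.inl hx, hvert hx⟩
    · exact ⟨.inr hx, hvert hx⟩
    · exact absurd (segment_subset_polyBoundary v (g j) hxj) (hd hx).1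
  refine ⟨hk, hv.2.1.comp hg, fun i j hij => ?_⟩
  simp only [Function.comp_apply]
  rcases eq_or_ne i l with rfl | hi
  · exact hl j hij.symm
  rcases eq_or_ne j l with rfl | hj
  · rw [Set.inter_comm, Set.inter_comm ({_, _} : Set Pt)]
    exact hl i hi
  · rw [hs i hi, hs j hj]
    exact hv.2.2 _ _ fun h => hij (hg h)

lemma IsDiagonalSplit.isSimplePolygon_left (h : IsDiagonalSplit g₁ g₂) (hv : IsSimplePolygon v)
    (hd : IsInternalDiagonal v (g₁ 0) (g₁ (-1))) : IsSimplePolygon (v ∘ g₁) :=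
  hv.comp_of_map_add_one h.three_le_left h.injective_left h.map_add_one_left
    (by rw [neg_add_cancel]; exact hd.symm)

lemma IsDiagonalSplit.isSimplePolygon_right (h : IsDiagonalSplit g₁ g₂) (hv : IsSimplePolygon v)
    (hd : IsInternalDiagonal v (g₁ 0) (g₁ (-1))) : IsSimplePolygon (v ∘ g₂) :=
  hv.comp_of_map_add_one h.three_le_right h.injective_right h.map_add_one_right
    (by rw [zero_add, h.map_zero, h.map_one]; exact hd)

lemma IsDiagonalSplit.exists_windingNumber_jump (h : IsDiagonalSplit g₁ g₂)
    (hv : IsSimplePolygon v) (hd : IsInternalDiagonal v (g₁ 0) (g₁ (-1))) {σ : ℤ}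
    (hσ : HasOrientation v σ) :
    ∃ x y, (x ∉ polyBoundary (v ∘ g₁) ∧ x ∉ polyBoundary (v ∘ g₂) ∧
        windingNumber (v ∘ g₁) x + windingNumber (v ∘ g₂) x = σ) ∧
      (y ∉ polyBoundary (v ∘ g₁) ∧ y ∉ polyBoundary (v ∘ g₂) ∧
        windingNumber (v ∘ g₁) y + windingNumber (v ∘ g₂) y = σ) ∧
      windingNumber (v ∘ g₂) x = windingNumber (v ∘ g₂) y + 1 := by
  have hm := midpoint_mem_openSegment (𝕜 := ℝ) (v (g₁ 0)) (v (g₁ (-1)))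
  set m := midpoint ℝ (v (g₁ 0)) (v (g₁ (-1)))
  have hm₁ : m ∈ openSegment ℝ ((v ∘ g₁) (-1)) ((v ∘ g₁) (-1 + 1)) := by
    rw [openSegment_symm, neg_add_cancel]
    exact hm
  have hm₂ : m ∈ openSegment ℝ ((v ∘ g₂) 0) ((v ∘ g₂) (0 + 1)) := by
    simpa only [Function.comp_apply, zero_add, h.map_zero, h.map_one] using hm
  obtain ⟨hmv, hmw⟩ := (hσ.mem_polyInterior_iff m).1 (hd hm)
  have hW := (isOpen_windingNumber_eq v σ).mem_nhds
    ⟨hmv, (hσ.windingNumber_eq m hmv).resolve_left hmw⟩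
  obtain ⟨U, hU, hUv, -⟩ := (h.isSimplePolygon_left hv hd).exists_nhds_windingNumber_jump hm₁
  obtain ⟨x, ⟨hxU, hxv, hxσ⟩, y, ⟨hyU, hyv, hyσ⟩, ⟨hx, hx₂⟩, ⟨hy, hy₂⟩, hj⟩ :=
    (h.isSimplePolygon_right hv hd).exists_windingNumber_jump_of_mem_nhds hm₂ (inter_mem hU hW)
  simp only [Function.comp_apply, zero_add, neg_add_cancel, h.map_zero, h.map_one] at hUv hx hy
  rw [orient_swap, neg_pos] at hx
  rw [orient_swap, neg_neg_iff_pos] at hy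
  have hadd {z : Pt} (hz : orient (v (g₁ (-1))) (v (g₁ 0)) z ≠ 0) :=
    h.windingNumber_eq_add (v := v) (x := z)
      (by rw [segment_symm]; exact not_mem_segment_of_orient_ne_zero hz)
  have hx₁ := hUv x hxU hx.ne
  have hy₁ := hUv y hyU hy.ne'
  exact ⟨x, y, ⟨hx₁, hx₂, hxσ ▸ (hadd hx.ne hxv hx₁ hx₂).symm⟩,
    ⟨hy₁, hy₂, hyσ ▸ (hadd hy.ne' hyv hy₁ hy₂).symm⟩, hj⟩

lemma IsDiagonalSplit.sign_eq (h : IsDiagonalSplit g₁ g₂) (hv : IsSimplePolygon v)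
    (hd : IsInternalDiagonal v (g₁ 0) (g₁ (-1))) {σ σ₁ σ₂ : ℤ} (hσ : HasOrientation v σ)
    (hσ₁ : HasOrientation (v ∘ g₁) σ₁) (hσ₂ : HasOrientation (v ∘ g₂) σ₂) : σ₁ = σ ∧ σ₂ = σ := by
  obtain ⟨x, y, ⟨hx₁, hx₂, hxσ⟩, ⟨hy₁, hy₂, hyσ⟩, hj⟩ := h.exists_windingNumber_jump hv hd hσ
  have := hσ₁.windingNumber_eq x hx₁
  have := hσ₁.windingNumber_eq y hy₁
  have := hσ₂.windingNumber_eq x hx₂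
  have := hσ₂.windingNumber_eq y hy₂
  have := hσ.sign
  have := hσ₁.sign
  have := hσ₂.sign
  omega

theorem IsDiagonalSplit.hasOrientation (h : IsDiagonalSplit g₁ g₂) (hv : IsSimplePolygon v)
    (hd : IsInternalDiagonal v (g₁ 0) (g₁ (-1))) {σ : ℤ} (hσ : HasOrientation v σ) :
    HasOrientation (v ∘ g₁) σ ∧ HasOrientation (v ∘ g₂) σ := by
  obtain ⟨σ₁, hσ₁⟩ := (h.isSimplePolygon_left hv hd).exists_hasOrientation
  obtain ⟨σ₂, hσ₂⟩ := (h.isSimplePolygon_right hv hd).exists_hasOrientation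
  obtain ⟨rfl, rfl⟩ := h.sign_eq hv hd hσ hσ₁ hσ₂
  exact ⟨hσ₁, hσ₂⟩

end Split

/-! ### Triangulations of small polygons -/

/-- The triangle `w a`, `w b`, `w c` is nondegenerate, counterclockwise if `σ = 1` and clockwise if
`σ = -1`. -/
def HasTriangleSign {n : ℕ} (σ : ℤ) (w : Fin n → Pt) (a b c : Fin n) : Prop :=
  0 < (σ : ℝ) * orient (w a) (w b) (w c)

lemma HasTriangleSign.rotate {n : ℕ} {σ : ℤ} {w : Fin n → Pt} {a b c : Fin n}
    (h : HasTriangleSign σ w a b c) : HasTriangleSign σ w b c a := by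
  rwa [HasTriangleSign, orient_rotate]

lemma orient_mul_subtendedAngle_pos {a b x : Pt} (h : orient a b x ≠ 0) :
    0 < orient a b x * subtendedAngle a b x := by
  rcases h.lt_or_gt with h | h
  · exact mul_pos_of_neg_of_neg h (subtendedAngle_neg h)
  · exact mul_pos h (subtendedAngle_pos h)

lemma IsSimplePolygon.orient_ne_zero {u : Fin 3 → Pt} (hu : IsSimplePolygon u) :
    orient (u 0) (u 1) (u 2) ≠ 0 := by
  obtain ⟨p, i, hi⟩ := hu.exists_extreme_vertex
  have h := hu.orient_ne_zero_of_extreme hi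
  fin_cases i
  · exact h
  · exact (orient_rotate (u 0) (u 1) (u 2)) ▸ h
  · exact (orient_rotate (u 2) (u 0) (u 1)).symm ▸ h

lemma HasOrientation.hasTriangleSign {u : Fin 3 → Pt} {σ : ℤ} (hu : IsSimplePolygon u)
    (hσ : HasOrientation u σ) : HasTriangleSign σ u 0 1 2 := by
  have hD := hu.orient_ne_zero
  set D := orient (u 0) (u 1) (u 2) with hDdef
  set g : Pt := (1 / 3 : ℝ) • (u 0 + u 1 + u 2) with hg
  have hgi : ∀ i, orient (u i) (u (i + 1)) g = D / 3 := by
    intro i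
    fin_cases i <;> simp [hg, hDdef, orient, det2] <;> ring
  have hne : ∀ i, orient (u i) (u (i + 1)) g ≠ 0 := fun i => by
    rw [hgi]
    exact div_ne_zero hD three_ne_zero
  have hgu : g ∉ polyBoundary u := by
    simp only [polyBoundary, Set.mem_iUnion, not_exists]
    exact fun i => not_mem_segment_of_orient_ne_zero (hne i)
  have hpos : 0 < D / 3 * windingAngle u g := by
    rw [windingAngle, Finset.mul_sum]
    exact Finset.sum_pos (fun i _ => hgi i ▸ orient_mul_subtendedAngle_pos (hne i))
      Finset.univ_nonempty
  rw [windingAngle_eq_two_pi_mul hgu] at hpos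
  rcases hσ.windingNumber_eq g hgu with h | h <;> rw [h] at hpos
  · simp at hpos
  · have h2 : 0 < (2 * Real.pi / 3) * (σ * D) := by linarith
    exact pos_of_mul_pos_right h2 (by positivity)

lemma isDiagonalSplit_four :
    IsDiagonalSplit (![0, 1, 2] : Fin 3 → Fin 4) (![0, 2, 3] : Fin 3 → Fin 4) := by
  constructor <;> decide

lemma isDiagonalSplit_five :
    IsDiagonalSplit (![0, 1, 2] : Fin 3 → Fin 5) (![0, 2, 3, 4] : Fin 4 → Fin 5) := by
  constructor <;> decide

lemma isDiagonalSplit_six_short :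
    IsDiagonalSplit (![0, 1, 2] : Fin 3 → Fin 6) (![0, 2, 3, 4, 5] : Fin 5 → Fin 6) := by
  constructor <;> decide

lemma isDiagonalSplit_six_long :
    IsDiagonalSplit (![0, 1, 2, 3] : Fin 4 → Fin 6) (![0, 3, 4, 5] : Fin 4 → Fin 6) := by
  constructor <;> decide

lemma HasOrientation.exists_triangles_four {v : Fin 4 → Pt} (hv : IsSimplePolygon v) {σ : ℤ}
    (hσ : HasOrientation v σ) :
    (HasTriangleSign σ v 0 1 2 ∧ HasTriangleSign σ v 0 2 3) ∨
      (HasTriangleSign σ v 1 2 3 ∧ HasTriangleSign σ v 0 1 3) := by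
  have hsplit {w : Fin 4 → Pt} (hw : IsSimplePolygon w) (hwσ : HasOrientation w σ)
      (hd : IsInternalDiagonal w 0 2) : HasTriangleSign σ w 0 1 2 ∧ HasTriangleSign σ w 0 2 3 := by
    obtain ⟨h₁, h₂⟩ := isDiagonalSplit_four.hasOrientation hw hd hwσ
    exact ⟨h₁.hasTriangleSign (isDiagonalSplit_four.isSimplePolygon_left hw hd),
      h₂.hasTriangleSign (isDiagonalSplit_four.isSimplePolygon_right hw hd)⟩
  obtain ⟨i, j, hd⟩ := hv.exists_isInternalDiagonal (by decide)
  have hcases : ∀ i j : Fin 4, j ≠ i → j ≠ i + 1 → i ≠ j + 1 →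
      (i = 0 ∧ j = 2 ∨ j = 0 ∧ i = 2) ∨ (i = 1 ∧ j = 3 ∨ j = 1 ∧ i = 3) := by decide
  rcases hcases i j hd.ne hd.ne_add_one hd.symm.ne_add_one with h | h
  · left
    apply hsplit hv hσ
    rcases h with ⟨rfl, rfl⟩ | ⟨rfl, rfl⟩
    exacts [hd, hd.symm]
  · right
    have hd' : IsInternalDiagonal v 1 (1 + 2) := by
      rcases h with ⟨rfl, rfl⟩ | ⟨rfl, rfl⟩
      exacts [hd, hd.symm]
    obtain ⟨h₁, h₂⟩ := hsplit (hv.shift 1) (hσ.shift 1) hd'.shift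
    exact ⟨h₁, (show HasTriangleSign σ v 1 3 0 from h₂).rotate.rotate⟩

lemma HasOrientation.exists_fan_five {v : Fin 5 → Pt} (hv : IsSimplePolygon v) {σ : ℤ}
    (hσ : HasOrientation v σ) :
    ∃ i, HasTriangleSign σ v i (i + 1) (i + 2) ∧ HasTriangleSign σ v i (i + 2) (i + 3) ∧
      HasTriangleSign σ v i (i + 3) (i + 4) := by
  obtain ⟨i, hd⟩ : ∃ i, IsInternalDiagonal v i (i + 2) := by
    obtain ⟨i, j, hd⟩ := hv.exists_isInternalDiagonal (by decide)
    have hcases : ∀ i j : Fin 5, j ≠ i → j ≠ i + 1 → i ≠ j + 1 → j = i + 2 ∨ i = j + 2 := by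
      decide
    rcases hcases i j hd.ne hd.ne_add_one hd.symm.ne_add_one with rfl | rfl
    exacts [⟨i, hd⟩, ⟨j, hd.symm⟩]
  have hw := hv.shift i
  have hd' := hd.shift
  obtain ⟨h₁, h₂⟩ := isDiagonalSplit_five.hasOrientation hw hd' (hσ.shift i)
  have ht : HasTriangleSign σ (cyclicShift v i) 0 1 2 :=
    h₁.hasTriangleSign (isDiagonalSplit_five.isSimplePolygon_left hw hd')
  suffices h : ∃ k, HasTriangleSign σ (cyclicShift v i) k (k + 1) (k + 2) ∧
      HasTriangleSign σ (cyclicShift v i) k (k + 2) (k + 3) ∧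
      HasTriangleSign σ (cyclicShift v i) k (k + 3) (k + 4) by
    obtain ⟨k, hk⟩ := h
    exact ⟨i + k, by simpa only [HasTriangleSign, cyclicShift, add_assoc] using hk⟩
  rcases h₂.exists_triangles_four (isDiagonalSplit_five.isSimplePolygon_right hw hd') with h | h
  · exact ⟨0, ht, h.1, h.2⟩
  · have h024 : HasTriangleSign σ (cyclicShift v i) 0 2 4 := h.2
    exact ⟨2, h.1, h024.rotate, ht.rotate.rotate⟩

/-- The triangulations of a hexagon `w` of orientation `σ` up to rotation: a fan of diagonals at
`w 3`, the zigzags `2-0-3-5` and `0-2-5-3`, and the star around the triangle `1-3-5`. -/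
inductive HexagonTriangulation (σ : ℤ) (w : Fin 6 → Pt) : Prop
  | fan : HasTriangleSign σ w 0 1 3 → HasTriangleSign σ w 1 2 3 → HasTriangleSign σ w 0 3 5 →
      HasTriangleSign σ w 3 4 5 → HexagonTriangulation σ w
  | zig : HasTriangleSign σ w 0 1 2 → HasTriangleSign σ w 0 2 3 → HasTriangleSign σ w 0 3 5 →
      HasTriangleSign σ w 3 4 5 → HexagonTriangulation σ w
  | zag : HasTriangleSign σ w 0 1 2 → HasTriangleSign σ w 0 2 5 → HasTriangleSign σ w 2 3 5 →
      HasTriangleSign σ w 3 4 5 → HexagonTriangulation σ w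
  | star : HasTriangleSign σ w 1 3 5 → HasTriangleSign σ w 1 2 3 → HasTriangleSign σ w 3 4 5 →
      HasTriangleSign σ w 5 0 1 → HexagonTriangulation σ w

lemma HasOrientation.exists_hexagonTriangulation_of_short {w : Fin 6 → Pt} (hw : IsSimplePolygon w)
    {σ : ℤ} (hσ : HasOrientation w σ) (hd : IsInternalDiagonal w 0 2) :
    ∃ k, HexagonTriangulation σ (cyclicShift w k) := by
  obtain ⟨h₁, h₂⟩ := isDiagonalSplit_six_short.hasOrientation hw hd hσ
  have ht : HasTriangleSign σ w 0 1 2 :=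
    h₁.hasTriangleSign (isDiagonalSplit_six_short.isSimplePolygon_left hw hd)
  obtain ⟨k, h⟩ := h₂.exists_fan_five (isDiagonalSplit_six_short.isSimplePolygon_right hw hd)
  fin_cases k
  · obtain ⟨h023, h034, h045⟩ : HasTriangleSign σ w 0 2 3 ∧ HasTriangleSign σ w 0 3 4 ∧
      HasTriangleSign σ w 0 4 5 := h
    exact ⟨3, .fan h034.rotate h045.rotate h023.rotate.rotate ht⟩
  · obtain ⟨h234, h245, h250⟩ : HasTriangleSign σ w 2 3 4 ∧ HasTriangleSign σ w 2 4 5 ∧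
      HasTriangleSign σ w 2 5 0 := h
    exact ⟨5, .fan h250.rotate ht h245.rotate.rotate h234⟩
  · obtain ⟨h345, h350, h302⟩ : HasTriangleSign σ w 3 4 5 ∧ HasTriangleSign σ w 3 5 0 ∧
      HasTriangleSign σ w 3 0 2 := h
    exact ⟨0, .zig ht h302.rotate h350.rotate.rotate h345⟩
  · obtain ⟨h450, h402, h423⟩ : HasTriangleSign σ w 4 5 0 ∧ HasTriangleSign σ w 4 0 2 ∧
      HasTriangleSign σ w 4 2 3 := h
    exact ⟨1, .star h402.rotate.rotate h423.rotate h450 ht⟩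
  · obtain ⟨h502, h523, h534⟩ : HasTriangleSign σ w 5 0 2 ∧ HasTriangleSign σ w 5 2 3 ∧
      HasTriangleSign σ w 5 3 4 := h
    exact ⟨0, .zag ht h502.rotate h523.rotate h534.rotate⟩

lemma HasOrientation.exists_hexagonTriangulation_of_long {w : Fin 6 → Pt} (hw : IsSimplePolygon w)
    {σ : ℤ} (hσ : HasOrientation w σ) (hd : IsInternalDiagonal w 0 3) :
    ∃ k, HexagonTriangulation σ (cyclicShift w k) := by
  obtain ⟨h₁, h₂⟩ := isDiagonalSplit_six_long.hasOrientation hw hd hσ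
  have hleft : (HasTriangleSign σ w 0 1 2 ∧ HasTriangleSign σ w 0 2 3) ∨
      (HasTriangleSign σ w 1 2 3 ∧ HasTriangleSign σ w 0 1 3) :=
    h₁.exists_triangles_four (isDiagonalSplit_six_long.isSimplePolygon_left hw hd)
  have hright : (HasTriangleSign σ w 0 3 4 ∧ HasTriangleSign σ w 0 4 5) ∨
      (HasTriangleSign σ w 3 4 5 ∧ HasTriangleSign σ w 0 3 5) :=
    h₂.exists_triangles_four (isDiagonalSplit_six_long.isSimplePolygon_right hw hd)
  rcases hleft with ⟨h012, h023⟩ | ⟨h123, h013⟩ <;> rcases hright with ⟨h034, h045⟩ | ⟨h345, h035⟩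
  · exact ⟨3, .fan h034.rotate h045.rotate h023.rotate.rotate h012⟩
  · exact ⟨0, .zig h012 h023 h035 h345⟩
  · exact ⟨4, .zag h045.rotate h034.rotate.rotate h013 h123⟩
  · exact ⟨0, .fan h013 h123 h035 h345⟩

theorem HasOrientation.exists_hexagonTriangulation {v : Fin 6 → Pt} (hv : IsSimplePolygon v)
    {σ : ℤ} (hσ : HasOrientation v σ) : ∃ k, HexagonTriangulation σ (cyclicShift v k) := by
  suffices h : ∃ i k, HexagonTriangulation σ (cyclicShift (cyclicShift v i) k) by
    obtain ⟨i, k, hk⟩ := h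
    exact ⟨i + k, cyclicShift_cyclicShift v i k ▸ hk⟩
  obtain ⟨i, j, hd⟩ := hv.exists_isInternalDiagonal (by decide)
  have hcases : ∀ i j : Fin 6, j ≠ i → j ≠ i + 1 → i ≠ j + 1 →
      j = i + 2 ∨ i = j + 2 ∨ j = i + 3 := by decide
  rcases hcases i j hd.ne hd.ne_add_one hd.symm.ne_add_one with rfl | rfl | rfl
  · exact ⟨i, (hσ.shift i).exists_hexagonTriangulation_of_short (hv.shift i)
      hd.shift⟩
  · exact ⟨j, (hσ.shift j).exists_hexagonTriangulation_of_short (hv.shift j)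
      hd.symm.shift⟩
  · exact ⟨i, (hσ.shift i).exists_hexagonTriangulation_of_long (hv.shift i)
      hd.shift⟩

/-! ### Tilings by convex cells -/

lemma HasOrientation.closure_polyInterior {n : ℕ} [NeZero n] {v : Fin n → Pt} {σ : ℤ}
    (h : HasOrientation v σ) : closure (polyInterior v) = polyRegion v := by
  refine Set.Subset.antisymm (fun x hx => ?_)
    (Set.union_subset h.subset_closure_interior subset_closure)
  by_contra hn
  rw [polyRegion, Set.mem_union, not_or, h.mem_polyInterior_iff] at hn
  obtain ⟨y, hy, hyi⟩ := mem_closure_iff.1 hx _ (isOpen_windingNumber_eq v 0)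
    ⟨hn.1, by_contra fun h0 => hn.2 ⟨hn.1, h0⟩⟩
  exact ((h.mem_polyInterior_iff y).1 hyi).2 hy.2

section Cell

variable {k : ℕ} [NeZero k] {u : Fin k → Pt}

/-- The intersection of the open half-planes to the left of the edges of `u`; for a convex
counterclockwise polygon this is its interior. -/
def openCell (u : Fin k → Pt) : Set Pt := {x | ∀ i, 0 < orient (u i) (u (i + 1)) x}

/-- `u` is a counterclockwise convex polygon, possibly with angles equal to 180°. The bound on
the number of vertices is a cheap way to exclude polygons which wind around more than once. -/
structure IsConvexCell (u : Fin k → Pt) : Prop where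
  card_le : k ≤ 4
  ne : ∀ i, u i ≠ u (i + 1)
  orient_nonneg : ∀ i j, 0 ≤ orient (u i) (u (i + 1)) (u j)

lemma isOpen_openCell (u : Fin k → Pt) : IsOpen (openCell u) := by
  rw [openCell, Set.ofPred_forall]
  exact isOpen_iInter_of_finite fun i => isOpen_lt continuous_const (continuous_orient _ _)

lemma not_mem_polyBoundary_of_orient_ne_zero {x : Pt}
    (hx : ∀ i, orient (u i) (u (i + 1)) x ≠ 0) : x ∉ polyBoundary u := fun h =>
  let ⟨i, hi⟩ := Set.mem_iUnion.1 h
  not_mem_segment_of_orient_ne_zero (hx i) hi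

lemma windingNumber_eq_one_of_mem_openCell (hk : k ≤ 4) {x : Pt} (hx : x ∈ openCell u) :
    windingNumber u x = 1 := by
  have hne : (Finset.univ : Finset (Fin k)).Nonempty := ⟨0, Finset.mem_univ _⟩
  have hpos : 0 < windingAngle u x := Finset.sum_pos (fun i _ => subtendedAngle_pos (hx i)) hne
  have hlt : windingAngle u x < 4 * Real.pi := calc
    windingAngle u x < ∑ _i : Fin k, Real.pi := Finset.sum_lt_sum_of_nonempty hne fun i _ =>
      subtendedAngle_lt_pi (not_mem_segment_of_orient_ne_zero (hx i).ne')
    _ = k * Real.pi := by rw [Finset.sum_const, Finset.card_univ, Fintype.card_fin, nsmul_eq_mul]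
    _ ≤ 4 * Real.pi := by gcongr; exact_mod_cast hk
  rw [windingAngle_eq_two_pi_mul (not_mem_polyBoundary_of_orient_ne_zero fun i => (hx i).ne')]
    at hpos hlt
  have hpos' : (0 : ℝ) < windingNumber u x := pos_of_mul_pos_right hpos Real.two_pi_pos.le
  have hlt' : (windingNumber u x : ℝ) < 2 := by nlinarith [Real.pi_pos]
  norm_cast at hpos' hlt'
  omega

lemma windingNumber_eq_zero_of_orient_neg {a b x : Pt} (hu : ∀ j, 0 ≤ orient a b (u j))
    (hx : orient a b x < 0) : windingNumber u x = 0 := by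
  refine windingNumber_eq_zero_of_dot2_pos (u := perp (b - a)) fun j => ?_
  refine (sub_pos.2 (hx.trans_le (hu j))).trans_eq ?_
  simp only [orient_eq, dot2, perp, Prod.fst_sub, Prod.snd_sub]
  ring

lemma IsConvexCell.windingNumber_eq_indicator (hu : IsConvexCell u) {x : Pt}
    (hx : ∀ i, orient (u i) (u (i + 1)) x ≠ 0) :
    windingNumber u x = (openCell u).indicator 1 x := by
  by_cases h : x ∈ openCell u
  · rw [Set.indicator_of_mem h, Pi.one_apply, windingNumber_eq_one_of_mem_openCell hu.card_le h]
  · rw [Set.indicator_of_notMem h]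
    simp only [openCell, Set.mem_ofPred_eq, not_forall, not_lt] at h
    obtain ⟨i, hi⟩ := h
    exact windingNumber_eq_zero_of_orient_neg (hu.orient_nonneg i) (hi.lt_of_ne (hx i))

lemma convex_orient_nonneg (a b : Pt) : Convex ℝ {x | 0 ≤ orient a b x} := by
  intro x hx y hy s t hs ht hst
  rw [Set.mem_ofPred_eq, orient_smul_add_smul _ _ _ _ hst]
  exact add_nonneg (mul_nonneg hs hx) (mul_nonneg ht hy)

lemma IsConvexCell.orient_nonneg_of_mem_convexHull (hu : IsConvexCell u) {x : Pt}
    (hx : x ∈ convexHull ℝ (Set.range u)) (i : Fin k) : 0 ≤ orient (u i) (u (i + 1)) x := by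
  have hsub : convexHull ℝ (Set.range u) ⊆ {x | 0 ≤ orient (u i) (u (i + 1)) x} :=
    convexHull_min (Set.range_subset_iff.2 (hu.orient_nonneg i)) (convex_orient_nonneg _ _)
  exact hsub hx

lemma IsConvexCell.convexHull_subset_closure_openCell (hu : IsConvexCell u)
    (hne : (openCell u).Nonempty) : convexHull ℝ (Set.range u) ⊆ closure (openCell u) := by
  obtain ⟨g, hg⟩ := hne
  refine fun x hx => mem_closure_of_tendsto (tendsto_add_smul_nhdsGT x (g - x)) ?_
  filter_upwards [Ioo_mem_nhdsGT one_pos] with t ht i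
  rw [show x + t • (g - x) = (1 - t) • x + t • g by module,
    orient_smul_add_smul _ _ _ _ (sub_add_cancel 1 t)]
  exact add_pos_of_nonneg_of_pos
    (mul_nonneg (sub_pos.2 ht.2).le (hu.orient_nonneg_of_mem_convexHull hx i)) (mul_pos ht.1 (hg i))

end Cell

section Tiling

variable {n : ℕ} [NeZero n] {v : Fin n → Pt} {ι : Type*} {k : ℕ} [NeZero k] {u : ι → Fin k → Pt}

/-- The points on none of the lines spanned by the edges of the polygons `u c`. -/
def generalPosition (u : ι → Fin k → Pt) : Set Pt :=
  {x | ∀ c i, orient (u c i) (u c (i + 1)) x ≠ 0}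

lemma dense_orient_ne_zero {a b : Pt} (h : a ≠ b) : Dense {x | orient a b x ≠ 0} := by
  intro x
  by_cases hx : orient a b x = 0
  · exact closure_mono (fun y hy => (one_mul (orient a b y) ▸ hy : 0 < orient a b y).ne')
      (mem_closure_openSide one_ne_zero h hx)
  · exact subset_closure hx

lemma dense_generalPosition [Finite ι] (hne : ∀ c i, u c i ≠ u c (i + 1)) :
    Dense (generalPosition u) := by
  have heq : generalPosition u =
      ⋂ p : ι × Fin k, {x | orient (u p.1 p.2) (u p.1 (p.2 + 1)) x ≠ 0} := by
    ext x; simp [generalPosition]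
  rw [heq]
  exact dense_iInter_of_isOpen
    (fun p => isOpen_ne_fun (continuous_orient _ _) continuous_const)
    (fun p => dense_orient_ne_zero (hne _ _))

/-- The convex cells `u c` tile the counterclockwise simple polygon `v`. The last field says that
the boundaries of the cells, as 1-chains, add up to the boundary of `v`: a 1-chain is determined
by its pairing with all antisymmetric functions of the endpoints of an edge. -/
structure PolygonTiling [Fintype ι] (v : Fin n → Pt) (u : ι → Fin k → Pt) : Prop where
  isSimplePolygon : IsSimplePolygon v
  hasOrientation : HasOrientation v 1
  isConvexCell : ∀ c, IsConvexCell (u c)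
  sum_boundary : ∀ A : Pt → Pt → ℝ, (∀ a b, A b a = -A a b) →
    ∑ c, ∑ j, A (u c j) (u c (j + 1)) = ∑ i, A (v i) (v (i + 1))

variable [Fintype ι]

lemma PolygonTiling.dense (T : PolygonTiling v u) : Dense (generalPosition u) :=
  dense_generalPosition fun c => (T.isConvexCell c).ne

lemma PolygonTiling.exists_edge_eq (T : PolygonTiling v u) (i : Fin n) :
    ∃ c j, u c j = v i ∧ u c (j + 1) = v (i + 1) := by
  classical
  by_contra! hno
  set e : Pt → Pt → ℝ := fun a b => if a = v i ∧ b = v (i + 1) then 1 else 0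
  have hsum := T.sum_boundary (fun a b => e a b - e b a) fun a b => (neg_sub _ _).symm
  have hcells : ∑ c, ∑ j, (e (u c j) (u c (j + 1)) - e (u c (j + 1)) (u c j)) ≤ 0 := by
    refine Finset.sum_nonpos fun c _ => Finset.sum_nonpos fun j _ => ?_
    have h0 : e (u c j) (u c (j + 1)) = 0 := if_neg fun h => hno c j h.1 h.2
    have h1 : 0 ≤ e (u c (j + 1)) (u c j) := by positivity
    linarith
  have hedge : ∀ j, e (v j) (v (j + 1)) - e (v (j + 1)) (v j) = if j = i then 1 else 0 := by
    intro j
    have hback : e (v (j + 1)) (v j) = 0 := if_neg fun h => by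
      have h1 := T.isSimplePolygon.2.1 h.1
      have h2 := T.isSimplePolygon.2.1 h.2
      exact add_one_add_one_ne_self T.isSimplePolygon.1 j (h1 ▸ h2.symm)
    rw [hback, sub_zero]
    refine if_congr ⟨fun h => T.isSimplePolygon.2.1 h.1, ?_⟩ rfl rfl
    rintro rfl
    exact ⟨rfl, rfl⟩
  rw [hsum, Finset.sum_congr rfl fun j _ => hedge j, Finset.sum_ite_eq' Finset.univ i,
    if_pos (Finset.mem_univ i)] at hcells
  exact one_pos.not_ge hcells

lemma PolygonTiling.not_mem_polyBoundary (T : PolygonTiling v u) {x : Pt}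
    (hx : x ∈ generalPosition u) : x ∉ polyBoundary v := by
  refine not_mem_polyBoundary_of_orient_ne_zero fun i => ?_
  obtain ⟨c, j, hj, hj'⟩ := T.exists_edge_eq i
  exact hj ▸ hj' ▸ hx c j

lemma PolygonTiling.sum_windingAngle (T : PolygonTiling v u) {x : Pt}
    (hx : x ∈ generalPosition u) : ∑ c, windingAngle (u c) x = windingAngle v x := by
  classical
  set A : Pt → Pt → ℝ := fun a b => if x ∈ segment ℝ a b then 0 else subtendedAngle a b x
  have hanti : ∀ a b, A b a = -A a b := by
    intro a b
    by_cases h : x ∈ segment ℝ a b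
    · rw [show A a b = 0 from if_pos h, show A b a = 0 from if_pos (segment_symm ℝ a b ▸ h),
        neg_zero]
    · rw [show A a b = _ from if_neg h, ← subtendedAngle_swap h]
      exact if_neg (segment_symm ℝ a b ▸ h)
  have hA : ∀ {m : ℕ} [NeZero m] {w : Fin m → Pt}, x ∉ polyBoundary w →
      ∑ i, A (w i) (w (i + 1)) = windingAngle w x := fun hw =>
    Finset.sum_congr rfl fun i _ => if_neg fun h => hw (segment_subset_polyBoundary _ i h)
  rw [← hA (T.not_mem_polyBoundary hx), ← T.sum_boundary A hanti]
  exact Finset.sum_congr rfl fun c _ =>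
    (hA (not_mem_polyBoundary_of_orient_ne_zero (hx c))).symm

lemma PolygonTiling.sum_indicator_openCell (T : PolygonTiling v u) {x : Pt}
    (hx : x ∈ generalPosition u) :
    ∑ c, (openCell (u c)).indicator (1 : Pt → ℤ) x = windingNumber v x := by
  have h := T.sum_windingAngle hx
  rw [windingAngle_eq_two_pi_mul (T.not_mem_polyBoundary hx), Finset.sum_congr rfl fun c _ =>
    windingAngle_eq_two_pi_mul (not_mem_polyBoundary_of_orient_ne_zero (hx c)),
    ← Finset.mul_sum] at h
  have h' := mul_left_cancel₀ Real.two_pi_pos.ne' h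
  norm_cast at h'
  rw [← h']
  exact Finset.sum_congr rfl fun c _ =>
    ((T.isConvexCell c).windingNumber_eq_indicator (hx c)).symm

lemma PolygonTiling.eq_of_mem_openCell (T : PolygonTiling v u) {x : Pt}
    (hx : x ∈ generalPosition u) {c d : ι} (hc : x ∈ openCell (u c)) (hd : x ∈ openCell (u d)) :
    c = d := by
  by_contra hcd
  have hle := Finset.add_le_sum (f := fun c => (openCell (u c)).indicator (1 : Pt → ℤ) x)
    (fun c _ => Set.indicator_nonneg (fun _ _ => zero_le_one) x)
    (Finset.mem_univ c) (Finset.mem_univ d) hcd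
  rw [T.sum_indicator_openCell hx, Set.indicator_of_mem hc, Set.indicator_of_mem hd] at hle
  rcases T.hasOrientation.windingNumber_eq x (T.not_mem_polyBoundary hx) with h | h <;>
    rw [h] at hle <;> norm_num at hle

lemma PolygonTiling.disjoint_openCell (T : PolygonTiling v u) {c d : ι} (hcd : c ≠ d) :
    Disjoint (openCell (u c)) (openCell (u d)) := by
  rw [Set.disjoint_iff_inter_eq_empty, ← Set.not_nonempty_iff_eq_empty]
  intro h
  obtain ⟨y, ⟨hc, hd⟩, hy⟩ := T.dense.inter_open_nonempty _
    ((isOpen_openCell (u c)).inter (isOpen_openCell (u d))) h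
  exact hcd (T.eq_of_mem_openCell hy hc hd)

lemma PolygonTiling.openCell_subset (T : PolygonTiling v u) (c : ι) :
    openCell (u c) ⊆ polyInterior v := by
  intro x hx
  by_contra hn
  have hcl : x ∈ closure {x | x ∉ polyBoundary v ∧ windingNumber v x = 0} := by
    by_cases hb : x ∈ polyBoundary v
    · exact T.hasOrientation.subset_closure_exterior hb
    · rw [T.hasOrientation.mem_polyInterior_iff] at hn
      exact subset_closure ⟨hb, by_contra fun h0 => hn ⟨hb, h0⟩⟩
  obtain ⟨z, hz⟩ := mem_closure_iff.1 hcl _ (isOpen_openCell _) hx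
  obtain ⟨y, ⟨hyc, hy0⟩, hy⟩ := T.dense.inter_open_nonempty _
    ((isOpen_openCell (u c)).inter (isOpen_windingNumber_eq v 0)) ⟨z, hz⟩
  have hle := Finset.single_le_sum (f := fun c => (openCell (u c)).indicator (1 : Pt → ℤ) y)
    (fun c _ => Set.indicator_nonneg (fun _ _ => zero_le_one) y) (Finset.mem_univ c)
  rw [T.sum_indicator_openCell hy, Set.indicator_of_mem hyc, hy0.2] at hle
  exact one_pos.not_ge hle

lemma PolygonTiling.polyInterior_subset (T : PolygonTiling v u) :
    polyInterior v ⊆ closure (⋃ c, openCell (u c)) := by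
  intro x hx
  rw [T.hasOrientation.mem_polyInterior_iff] at hx
  have hx1 : windingNumber v x = 1 := (T.hasOrientation.windingNumber_eq x hx.1).resolve_left hx.2
  refine mem_closure_iff.2 fun U hU hxU => ?_
  obtain ⟨y, ⟨hyU, hy1⟩, hy⟩ := T.dense.inter_open_nonempty _
    (hU.inter (isOpen_windingNumber_eq v 1)) ⟨x, hxU, hx.1, hx1⟩
  refine ⟨y, hyU, by_contra fun hn => ?_⟩
  rw [Set.mem_iUnion, not_exists] at hn
  have hsum := T.sum_indicator_openCell hy
  rw [hy1.2, Finset.sum_eq_zero fun c _ => Set.indicator_of_notMem (hn c) _] at hsum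
  exact zero_ne_one hsum

end Tiling

/-! ### Strictly convex quadrilaterals -/

section Quad

variable {a b c d x : Pt}

lemma strictConvexQuad_iff : StrictConvexQuad a b c d ↔
    0 < orient a b c ∧ 0 < orient b c d ∧ 0 < orient c d a ∧ 0 < orient d a b := by
  have h : ∀ p q r : Pt, det2 (q - p) (r - q) = orient p q r := fun p q r => by
    rw [orient_eq]; simp only [det2, Prod.fst_sub, Prod.snd_sub]; ring
  simp only [StrictConvexQuad, h]

lemma StrictConvexQuad.rotate (h : StrictConvexQuad a b c d) : StrictConvexQuad b c d a :=
  ⟨h.2.1, h.2.2.1, h.2.2.2, h.1⟩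

/-- The vertices of a quadrilateral as a cyclic sequence. -/
def quadVertex (q : Pt × Pt × Pt × Pt) : Fin 4 → Pt :=
  ![q.1, q.2.1, q.2.2.1, q.2.2.2]

lemma coe_quadVerts (q : Pt × Pt × Pt × Pt) :
    (quadVerts q : Set Pt) = Set.range (quadVertex q) := by
  simp only [quadVerts, quadVertex, Finset.coe_insert, Finset.coe_singleton, Matrix.range_cons,
    Matrix.range_empty, Set.union_empty, Set.insert_eq]

lemma quadSet_eq_convexHull_range (q : Pt × Pt × Pt × Pt) :
    quadSet q = convexHull ℝ (Set.range (quadVertex q)) := by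
  rw [← coe_quadVerts]
  simp [quadSet, quadVerts]

lemma isClosed_quadSet (q : Pt × Pt × Pt × Pt) : IsClosed (quadSet q) := by
  rw [quadSet_eq_convexHull_range]
  exact ((Set.finite_range _).isCompact_convexHull (𝕜 := ℝ)).isClosed

lemma StrictConvexQuad.isConvexCell (h : StrictConvexQuad a b c d) :
    IsConvexCell (quadVertex (a, b, c, d)) := by
  have edge : ∀ {a b c d : Pt}, StrictConvexQuad a b c d → a ≠ b ∧
      0 ≤ orient a b a ∧ 0 ≤ orient a b b ∧ 0 ≤ orient a b c ∧ 0 ≤ orient a b d := by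
    intro a b c d h
    have h' := strictConvexQuad_iff.1 h
    refine ⟨?_, (orient_left a b).ge, (orient_right a b).ge, h'.1.le,
      (orient_rotate d a b).symm ▸ h'.2.2.2.le⟩
    rintro rfl
    exact h'.1.ne (by simp [orient, det2])
  obtain ⟨hab, aba, abb, abc, abd⟩ := edge h
  obtain ⟨hbc, bcb, bcc, bcd, bca⟩ := edge h.rotate
  obtain ⟨hcd, cdc, cdd, cda, cdb⟩ := edge h.rotate.rotate
  obtain ⟨hda, dad, daa, dab, dac⟩ := edge h.rotate.rotate.rotate
  refine ⟨le_rfl, fun i => ?_, fun i j => ?_⟩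
  · fin_cases i <;> assumption
  · fin_cases i <;> fin_cases j <;> assumption

lemma orient_centroid (a b c d : Pt) :
    orient a b ((1 / 4 : ℝ) • (a + b + c + d)) = (orient a b c + orient a b d) / 4 := by
  simp only [orient_eq, Prod.smul_fst, Prod.smul_snd, Prod.fst_add, Prod.snd_add, smul_eq_mul]
  ring

lemma StrictConvexQuad.openCell_nonempty (h : StrictConvexQuad a b c d) :
    (openCell (quadVertex (a, b, c, d))).Nonempty := by
  have edge : ∀ {a b c d : Pt}, StrictConvexQuad a b c d →
      0 < orient a b ((1 / 4 : ℝ) • (a + b + c + d)) := by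
    intro a b c d h
    have h' := strictConvexQuad_iff.1 h
    rw [orient_centroid, ← orient_rotate d a b] at *
    linarith [h'.1, h'.2.2.2]
  refine ⟨(1 / 4 : ℝ) • (a + b + c + d), fun i => ?_⟩
  fin_cases i
  · exact edge h
  · rw [show a + b + c + d = b + c + d + a by abel]; exact edge h.rotate
  · rw [show a + b + c + d = c + d + a + b by abel]; exact edge h.rotate.rotate
  · rw [show a + b + c + d = d + a + b + c by abel]; exact edge h.rotate.rotate.rotate

lemma mem_convexHull_of_orient_nonneg (h : 0 < orient a b c) (hab : 0 ≤ orient a b x)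
    (hbc : 0 ≤ orient b c x) (hca : 0 ≤ orient c a x) {s : Set Pt} (ha : a ∈ s) (hb : b ∈ s)
    (hc : c ∈ s) : x ∈ convexHull ℝ s := by
  have hsum := baryCoord_add_add h.ne' x
  have hcomb := baryCoord_smul_add h.ne' x
  refine mem_convexHull_of_exists_fintype ![baryCoord a b c x, baryCoord b c a x, baryCoord c a b x]
    ![a, b, c] (Fin.forall_fin_succ.2 ⟨div_nonneg hbc h.le, Fin.forall_fin_two.2 ⟨?_, ?_⟩⟩)
    (by simpa [Fin.sum_univ_three] using hsum) (by simp [Fin.forall_fin_succ, *])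
    (by simpa [Fin.sum_univ_three] using hcomb)
  · exact div_nonneg hca (orient_rotate a b c ▸ h.le)
  · exact div_nonneg hab (orient_rotate c a b ▸ h.le)

lemma StrictConvexQuad.openCell_subset_quadSet (h : StrictConvexQuad a b c d) :
    openCell (quadVertex (a, b, c, d)) ⊆ quadSet (a, b, c, d) := by
  intro x hx
  have h' := strictConvexQuad_iff.1 h
  have hab : 0 < orient a b x := hx 0
  have hbc : 0 < orient b c x := hx 1
  have hcd : 0 < orient c d x := hx 2
  have hda : 0 < orient d a x := hx 3
  rcases le_total 0 (orient a c x) with hac | hac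
  · exact mem_convexHull_of_orient_nonneg (orient_rotate a c d ▸ h'.2.2.1) hac hcd.le hda.le
      (by simp) (by simp) (by simp)
  · have hca : 0 ≤ orient c a x := by rw [orient_swap]; linarith
    exact mem_convexHull_of_orient_nonneg h'.1 hab.le hbc.le hca (by simp) (by simp) (by simp)

end Quad

section Quadrangulation

variable {n : ℕ} [NeZero n] {v : Fin n → Pt}

/-- The polygon `v` has a strictly convex quadrangulation with at most `m` Steiner points, all of
them interior. -/
def HasConvexQuadrangulation (v : Fin n → Pt) (m : ℕ) : Prop :=
  ∃ (quads : Finset (Pt × Pt × Pt × Pt)) (Spts : Finset Pt),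
    Spts.card ≤ m ∧
    (∀ p ∈ Spts, p ∈ polyInterior v) ∧
    (∀ q ∈ quads, StrictConvexQuad q.1 q.2.1 q.2.2.1 q.2.2.2) ∧
    (⋃ q ∈ quads, quadSet q) = polyRegion v ∧
    (quadSet '' quads).Pairwise (fun A B => interior A ∩ interior B = ∅) ∧
    ((quads.biUnion quadVerts : Finset Pt) : Set Pt) = Set.range v ∪ (Spts : Set Pt)

lemma HasConvexQuadrangulation.mono {m m' : ℕ} (h : HasConvexQuadrangulation v m) (hm : m ≤ m') :
    HasConvexQuadrangulation v m' :=
  let ⟨quads, S, hS, hquads⟩ := h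
  ⟨quads, S, hS.trans hm, hquads⟩

lemma HasConvexQuadrangulation.of_cyclicShift {m : ℕ} {i : Fin n}
    (h : HasConvexQuadrangulation (cyclicShift v i) m) : HasConvexQuadrangulation v m := by
  simpa only [HasConvexQuadrangulation, polyInterior_cyclicShift, polyRegion_cyclicShift,
    range_cyclicShift] using h

lemma HasConvexQuadrangulation.of_reversal {m : ℕ}
    (h : HasConvexQuadrangulation (reversal v) m) : HasConvexQuadrangulation v m := by
  simpa only [HasConvexQuadrangulation, polyInterior_reversal, polyRegion_reversal,
    range_reversal] using h

variable {ι : Type*} [Fintype ι] {q : ι → Pt × Pt × Pt × Pt}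

lemma PolygonTiling.iUnion_quadSet (T : PolygonTiling v fun c => quadVertex (q c))
    (hq : ∀ c, StrictConvexQuad (q c).1 (q c).2.1 (q c).2.2.1 (q c).2.2.2) :
    ⋃ c, quadSet (q c) = polyRegion v := by
  rw [← T.hasOrientation.closure_polyInterior]
  apply Set.Subset.antisymm
  · refine Set.iUnion_subset fun c => ?_
    rw [quadSet_eq_convexHull_range]
    exact ((T.isConvexCell c).convexHull_subset_closure_openCell (hq c).openCell_nonempty).trans
      (closure_mono (T.openCell_subset c))
  · have hclosed : IsClosed (⋃ c, quadSet (q c)) :=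
      isClosed_iUnion_of_finite fun c => isClosed_quadSet _
    have hcells : ⋃ c, openCell (quadVertex (q c)) ⊆ ⋃ c, quadSet (q c) :=
      Set.iUnion_mono fun c => (hq c).openCell_subset_quadSet
    exact closure_minimal (T.polyInterior_subset.trans (closure_minimal hcells hclosed)) hclosed

lemma PolygonTiling.interior_quadSet_inter (T : PolygonTiling v fun c => quadVertex (q c))
    {c d : ι} (hcd : c ≠ d) : interior (quadSet (q c)) ∩ interior (quadSet (q d)) = ∅ := by
  have hcell : ∀ e, ∀ y ∈ generalPosition (fun c => quadVertex (q c)),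
      y ∈ interior (quadSet (q e)) → y ∈ openCell (quadVertex (q e)) := by
    intro e y hy hye i
    have hye' := quadSet_eq_convexHull_range (q e) ▸ interior_subset hye
    exact ((T.isConvexCell e).orient_nonneg_of_mem_convexHull hye' i).lt_of_ne' (hy e i)
  rw [← Set.not_nonempty_iff_eq_empty]
  intro h
  obtain ⟨y, ⟨hc, hd⟩, hy⟩ :=
    T.dense.inter_open_nonempty _ (isOpen_interior.inter isOpen_interior) h
  exact hcd (T.eq_of_mem_openCell hy (hcell c y hy hc) (hcell d y hy hd))

lemma PolygonTiling.hasConvexQuadrangulation (T : PolygonTiling v fun c => quadVertex (q c))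
    (hq : ∀ c, StrictConvexQuad (q c).1 (q c).2.1 (q c).2.2.1 (q c).2.2.2) {S : Finset Pt}
    {m : ℕ} (hm : S.card ≤ m) (hS : ∀ p ∈ S, p ∈ polyInterior v)
    (hverts : ⋃ c, Set.range (quadVertex (q c)) = Set.range v ∪ S) :
    HasConvexQuadrangulation v m := by
  classical
  refine ⟨Finset.univ.image q, S, hm, hS, ?_, ?_, ?_, ?_⟩
  · simpa using hq
  · simpa using T.iUnion_quadSet hq
  · rintro A ⟨a, ha, rfl⟩ B ⟨b, hb, rfl⟩ hAB
    obtain ⟨c, -, rfl⟩ := Finset.mem_image.1 (Finset.mem_coe.1 ha)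
    obtain ⟨d, -, rfl⟩ := Finset.mem_image.1 (Finset.mem_coe.1 hb)
    exact T.interior_quadSet_inter fun hcd => hAB (hcd ▸ rfl)
  · simpa [coe_quadVerts] using hverts

end Quadrangulation

/-! ### Perturbing degenerate quadrilaterals -/

lemma eventually_pos_nhdsGT_zero : ∀ᶠ t : ℝ in 𝓝[>] 0, 0 < t := self_mem_nhdsWithin

lemma eventually_add_mul_pos {x : ℝ} (y : ℝ) (hx : 0 < x) : ∀ᶠ t in 𝓝[>] 0, 0 < x + t * y := by
  have hlim : Tendsto (fun t : ℝ => x + t * y) (𝓝[>] 0) (𝓝 (x + 0 * y)) :=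
    ((tendsto_nhdsWithin_of_tendsto_nhds tendsto_id).mul_const y).const_add x
  exact hlim.eventually_const_lt (by linarith)

lemma eventually_strictConvexQuad_left {o a b d : Pt} {f g : ℝ → Pt}
    (hf : Tendsto f (𝓝[>] 0) (𝓝 a)) (hg : Tendsto g (𝓝[>] 0) (𝓝 b)) (h : 0 < orient o a b)
    (ha : 0 < det2 (a - o) d) (hb : 0 < det2 (b - o) d) :
    ∀ᶠ t in 𝓝[>] 0, StrictConvexQuad o (f t) (g t) (o + t • d) := by
  have hd := tendsto_add_smul_nhdsGT o d
  filter_upwards [eventually_pos_nhdsGT_zero,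
    (tendsto_orient tendsto_const_nhds hf hg).eventually_const_lt h,
    (tendsto_orient hf hg hd).eventually_const_lt (orient_rotate o a b ▸ h),
    (tendsto_det2 (hf.sub_const o) tendsto_const_nhds).eventually_const_lt ha,
    (tendsto_det2 (hg.sub_const o) tendsto_const_nhds).eventually_const_lt hb]
    with t ht hfg hfgd hfd hgd
  refine strictConvexQuad_iff.2 ⟨hfg, hfgd, ?_, ?_⟩
  · rw [orient_rotate, orient_add_smul_self]
    exact mul_pos ht hgd
  · rw [← orient_rotate, orient_add_smul_self]
    exact mul_pos ht hfd

lemma eventually_strictConvexQuad_right {o a b d : Pt} {f g : ℝ → Pt}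
    (hf : Tendsto f (𝓝[>] 0) (𝓝 a)) (hg : Tendsto g (𝓝[>] 0) (𝓝 b)) (h : 0 < orient o a b)
    (ha : 0 < det2 d (a - o)) (hb : 0 < det2 d (b - o)) :
    ∀ᶠ t in 𝓝[>] 0, StrictConvexQuad o (o + t • d) (f t) (g t) := by
  have hd := tendsto_add_smul_nhdsGT o d
  filter_upwards [eventually_pos_nhdsGT_zero,
    (tendsto_orient hd hf hg).eventually_const_lt h,
    (tendsto_orient hf hg tendsto_const_nhds).eventually_const_lt (orient_rotate o a b ▸ h),
    (tendsto_det2 tendsto_const_nhds (hf.sub_const o)).eventually_const_lt ha,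
    (tendsto_det2 tendsto_const_nhds (hg.sub_const o)).eventually_const_lt hb]
    with t ht hdfg hfg hdf hdg
  refine strictConvexQuad_iff.2 ⟨?_, hdfg, hfg, ?_⟩
  · rw [orient_self_add_smul]
    exact mul_pos ht hdf
  · rw [← orient_rotate, orient_self_add_smul]
    exact mul_pos ht hdg

lemma eventually_strictConvexQuad_kite {o m d e : Pt} {q : ℝ → Pt}
    (hq : Tendsto q (𝓝[>] 0) (𝓝 m)) (he : 0 < det2 e (m - o)) (hd : 0 < det2 (m - o) d)
    (hed : 0 < det2 e d) :
    ∀ᶠ t in 𝓝[>] 0, StrictConvexQuad o (o + t • e) (q t) (o + t • d) := by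
  have hopp : ∀ (t : ℝ) (x : Pt), orient (o + t • e) x (o + t • d) =
      t * (det2 e (x - o) + det2 (x - (o + t • e)) d) := by
    intro t x
    simp only [orient_eq, det2, Prod.fst_add, Prod.snd_add, Prod.fst_sub, Prod.snd_sub,
      Prod.smul_fst, Prod.smul_snd, smul_eq_mul]
    ring
  filter_upwards [eventually_pos_nhdsGT_zero,
    (tendsto_det2 tendsto_const_nhds (hq.sub_const o)).eventually_const_lt he,
    (tendsto_det2 (hq.sub_const o) tendsto_const_nhds).eventually_const_lt hd,
    (tendsto_det2 (hq.sub (tendsto_add_smul_nhdsGT o e)) tendsto_const_nhds).eventually_const_lt hd]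
    with t ht heq hqd hqed
  refine strictConvexQuad_iff.2 ⟨?_, ?_, ?_, ?_⟩
  · rw [orient_self_add_smul]
    exact mul_pos ht heq
  · rw [hopp]
    exact mul_pos ht (add_pos heq hqed)
  · rw [orient_rotate, orient_add_smul_self]
    exact mul_pos ht hqd
  · rw [← orient_rotate, orient_self_add_smul, add_sub_cancel_left, det2_smul_right]
    exact mul_pos ht (mul_pos ht hed)

/- To first order in `t` the three vertices on the edge `a b` move independently; the second vertex
stays on the outer side of the chord of its neighbours iff `f` lags behind the average of the
displacements `e` and `d` at the ends. -/
lemma eventually_strictConvexQuad_flat {a b c d e f : Pt} (h : 0 < orient a b c)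
    (hf : 2 * det2 (b - a) f < det2 (b - a) d + det2 (b - a) e) :
    ∀ᶠ t : ℝ in 𝓝[>] 0,
      StrictConvexQuad (a + t • e) (midpoint ℝ a b + t • f) (b + t • d) c := by
  have hchord : ∀ t : ℝ, orient (a + t • e) (midpoint ℝ a b + t • f) (b + t • d) =
      t * ((det2 (b - a) d + det2 (b - a) e) / 2 - det2 (b - a) f
        + t * det2 (f - e) (d - e)) := by
    intro t
    simp only [midpoint_eq_smul_add, invOf_eq_inv, orient_eq, det2, Prod.fst_add, Prod.snd_add,
      Prod.fst_sub, Prod.snd_sub, Prod.smul_fst, Prod.smul_snd, smul_eq_mul]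
    ring
  have hpos : 0 < (det2 (b - a) d + det2 (b - a) e) / 2 - det2 (b - a) f := by linarith
  have ha := tendsto_add_smul_nhdsGT a e
  have hm := tendsto_add_smul_nhdsGT (midpoint ℝ a b) f
  have hb := tendsto_add_smul_nhdsGT b d
  have hc : Tendsto (fun _ : ℝ => c) (𝓝[>] 0) (𝓝 c) := tendsto_const_nhds
  have hmbc : 0 < orient (midpoint ℝ a b) b c := by
    rw [← orient_rotate, orient_midpoint, orient_left, orient_rotate]
    linarith
  have hcam : 0 < orient c a (midpoint ℝ a b) := by
    rw [orient_midpoint, orient_right, ← orient_rotate c a b]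
    linarith
  filter_upwards [eventually_pos_nhdsGT_zero, eventually_add_mul_pos _ hpos,
    (tendsto_orient hm hb hc).eventually_const_lt hmbc,
    (tendsto_orient hb hc ha).eventually_const_lt (orient_rotate a b c ▸ h),
    (tendsto_orient hc ha hm).eventually_const_lt hcam] with t ht hamb hmbc hbca hcam
  refine strictConvexQuad_iff.2 ⟨?_, hmbc, hbca, hcam⟩
  rw [hchord]
  exact mul_pos ht hamb

/-! ### Directions at a vertex -/

lemma mem_openCell_triangle {a b c x : Pt} :
    x ∈ openCell ![a, b, c] ↔ 0 < orient a b x ∧ 0 < orient b c x ∧ 0 < orient c a x :=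
  Fin.forall_fin_succ.trans (and_congr_right' Fin.forall_fin_two)

lemma openCell_triangle_rotate (a b c : Pt) : openCell ![b, c, a] = openCell ![a, b, c] := by
  ext x
  simp only [mem_openCell_triangle]
  tauto

lemma eventually_vertex_add_smul_mem_openCell {o a b d : Pt} (h : 0 < orient o a b)
    (ha : 0 < det2 (a - o) d) (hb : 0 < det2 d (b - o)) :
    ∀ᶠ t : ℝ in 𝓝[>] 0, o + t • d ∈ openCell ![o, a, b] := by
  filter_upwards [eventually_pos_nhdsGT_zero,
    (tendsto_orient tendsto_const_nhds tendsto_const_nhds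
      (tendsto_add_smul_nhdsGT o d)).eventually_const_lt (orient_rotate o a b ▸ h)] with t ht habd
  refine mem_openCell_triangle.2 ⟨?_, habd, ?_⟩
  · rw [orient_add_smul_self]
    exact mul_pos ht ha
  · rw [← orient_rotate, orient_self_add_smul]
    exact mul_pos ht hb

lemma eventually_midpoint_add_smul_mem_openCell {a b c d : Pt} (h : 0 < orient a b c)
    (hd : 0 < det2 (b - a) d) :
    ∀ᶠ t : ℝ in 𝓝[>] 0, midpoint ℝ a b + t • d ∈ openCell ![a, b, c] := by
  have hm := tendsto_add_smul_nhdsGT (midpoint ℝ a b) d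
  have hbc : 0 < orient b c (midpoint ℝ a b) := by
    rw [orient_midpoint, orient_left, orient_rotate]
    linarith
  have hca : 0 < orient c a (midpoint ℝ a b) := by
    rw [orient_midpoint, orient_right, ← orient_rotate c a b]
    linarith
  filter_upwards [eventually_pos_nhdsGT_zero,
    (tendsto_orient tendsto_const_nhds tendsto_const_nhds hm).eventually_const_lt hbc,
    (tendsto_orient tendsto_const_nhds tendsto_const_nhds hm).eventually_const_lt hca]
    with t ht hbcm hcam
  refine mem_openCell_triangle.2 ⟨?_, hbcm, hcam⟩
  rw [orient_add, orient_midpoint, orient_left, orient_right, det2_smul_right]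
  linarith [mul_pos ht hd]

lemma exists_pos_add_mul_pos {x : ℝ} (y : ℝ) (hx : 0 < x) : ∃ δ : ℝ, 0 < δ ∧ 0 < x + δ * y :=
  (eventually_pos_nhdsGT_zero.and (eventually_add_mul_pos y hx)).exists

section Direction

variable {a b c e f : Pt}

/- `d` is sought as a positive combination of `b` and `c`. The last case of `h` is the one in which
both angles `a c` and `b e` may exceed `π`; the bounds on the ratio of the two coefficients are then
compatible by the Plücker relation, because the total angle `a e` is less than `2π`. -/
lemma exists_direction_of_det2 (hab : 0 < det2 a b) (hbc : 0 < det2 b c) (hce : 0 < det2 c e)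
    (h : 0 ≤ det2 a c ∨ 0 ≤ det2 b e ∨ det2 a e < 0) :
    ∃ d, 0 < det2 a d ∧ 0 < det2 b d ∧ 0 < det2 d c ∧ 0 < det2 d e := by
  suffices hst : ∃ s t : ℝ, 0 < s ∧ 0 < t ∧ 0 < s * det2 a b + t * det2 a c ∧
      0 < s * det2 b e + t * det2 c e by
    obtain ⟨s, t, hs, ht, ha, he⟩ := hst
    refine ⟨s • b + t • c, ?_, ?_, ?_, ?_⟩ <;>
      simp only [det2_add_left, det2_add_right, det2_smul_left, det2_smul_right, det2_self,
        mul_zero, zero_add, add_zero]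
    exacts [ha, mul_pos ht hbc, mul_pos hs hbc, he]
  by_cases hac : 0 ≤ det2 a c
  · obtain ⟨δ, hδ, he⟩ := exists_pos_add_mul_pos (det2 b e) hce
    exact ⟨δ, 1, hδ, one_pos, by positivity, by linarith⟩
  by_cases hbe : 0 ≤ det2 b e
  · obtain ⟨δ, hδ, ha⟩ := exists_pos_add_mul_pos (det2 a c) hab
    exact ⟨1, δ, one_pos, hδ, by linarith, by positivity⟩
  have hae : det2 a e < 0 := (h.resolve_left hac).resolve_left hbe
  have hlt : 0 < det2 a b * det2 c e - det2 a c * det2 b e := by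
    linarith [det2_plucker a b c e, mul_neg_of_neg_of_pos hae hbc]
  rw [not_le] at hac hbe
  exact ⟨det2 c e - det2 a c, det2 a b - det2 b e, by linarith, by linarith, by linarith,
    by linarith⟩

lemma exists_common_direction_of_det2 (hab : 0 < det2 a b) (hac : det2 a c < 0)
    (hae : 0 < det2 a e) :
    ∃ d, (0 < det2 a d ∧ 0 < det2 d b) ∧ 0 < det2 c d ∧ 0 < det2 d e := by
  have hca : 0 < det2 c a := by rw [det2_swap]; linarith
  obtain ⟨τ, hτ, hc, he⟩ := (eventually_pos_nhdsGT_zero.and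
    ((eventually_add_mul_pos (det2 c b) hca).and (eventually_add_mul_pos (det2 b e) hae))).exists
  refine ⟨a + τ • b, ⟨?_, ?_⟩, ?_, ?_⟩ <;>
    simp only [det2_add_left, det2_add_right, det2_smul_left, det2_smul_right, det2_self,
      mul_zero, zero_add, add_zero]
  exacts [mul_pos hτ hab, hab, hc, he]

lemma sameRay_of_det2_eq_zero (hca : 0 < det2 c a) (hce : 0 < det2 c e) (hae : det2 a e = 0) :
    SameRay ℝ a e := by
  refine Or.inr (Or.inr ⟨_, _, hce, hca, ?_⟩)
  rw [det2, sub_eq_zero] at hae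
  ext <;> simp only [det2, Prod.smul_fst, Prod.smul_snd, smul_eq_mul]
  · linear_combination c.1 * hae
  · linear_combination c.2 * hae

/- The two cases are symmetric; in each, one of the directions is almost `c` and the other one is
then far enough away from it to be on the correct side. -/
lemma exists_direction_pair_of_det2 (hab : 0 < det2 a b) (hbc : 0 < det2 b c) (hce : 0 < det2 c e)
    (hef : 0 < det2 e f) (h : 0 ≤ det2 a c ∨ 0 ≤ det2 c f) :
    ∃ d d', (0 < det2 b d' ∧ 0 < det2 d' c ∧ 0 < det2 a d') ∧
      (0 < det2 c d ∧ 0 < det2 d e ∧ 0 < det2 d f) ∧ 0 < det2 d' d := by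
  rcases h with hac | hcf
  · obtain ⟨δ, hδ, hδf⟩ := exists_pos_add_mul_pos (det2 c f) hef
    obtain ⟨ε, hε, hεd⟩ := exists_pos_add_mul_pos (det2 b e + δ * det2 b c) hce
    have haε : 0 < det2 a c + ε * det2 a b := by positivity
    refine ⟨e + δ • c, c + ε • b, ⟨?_, ?_, ?_⟩, ⟨?_, ?_, ?_⟩, ?_⟩ <;>
      simp only [det2_add_left, det2_add_right, det2_smul_left, det2_smul_right, det2_self,
        mul_zero, zero_add, add_zero]
    exacts [hbc, mul_pos hε hbc, haε, hce, mul_pos hδ hce, hδf, by linarith]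
  · obtain ⟨δ, hδ, hδa⟩ := exists_pos_add_mul_pos (det2 a c) hab
    obtain ⟨ε, hε, hεd⟩ := exists_pos_add_mul_pos (det2 b e + δ * det2 c e) hbc
    have hεf : 0 < det2 c f + ε * det2 e f := by positivity
    refine ⟨c + ε • e, b + δ • c, ⟨?_, ?_, ?_⟩, ⟨?_, ?_, ?_⟩, ?_⟩ <;>
      simp only [det2_add_left, det2_add_right, det2_smul_left, det2_smul_right, det2_self,
        mul_zero, zero_add, add_zero]
    exacts [mul_pos hδ hbc, hbc, hδa, mul_pos hε hce, hce, hεf, by linarith]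

lemma exists_direction_of_disjoint_openCell {o : Pt} (hab : 0 < orient o a b)
    (hbc : 0 < orient o b c) (hce : 0 < orient o c e)
    (hdisj : Disjoint (openCell ![o, a, b]) (openCell ![o, c, e]))
    (ha : a ∉ segment ℝ e o) (he : e ∉ segment ℝ o a) :
    ∃ d, 0 < det2 (a - o) d ∧ 0 < det2 (b - o) d ∧ 0 < det2 d (c - o) ∧ 0 < det2 d (e - o) := by
  refine exists_direction_of_det2 hab hbc hce (or_iff_not_imp_left.2 fun hac => Or.inr ?_)
  rw [not_le] at hac
  by_contra! hae
  rcases hae.lt_or_eq with hae | hae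
  · obtain ⟨d, ⟨had, hdb⟩, hcd, hde⟩ := exists_common_direction_of_det2 hab hac hae
    obtain ⟨t, hab', hce'⟩ := ((eventually_vertex_add_smul_mem_openCell hab had hdb).and
      (eventually_vertex_add_smul_mem_openCell hce hcd hde)).exists
    exact Set.disjoint_left.1 hdisj hab' hce'
  · have hray : SameRay ℝ (a -ᵥ o) (e -ᵥ o) :=
      sameRay_of_det2_eq_zero (by rw [det2_swap]; exact neg_pos.2 hac) hce hae.symm
    rcases wbtw_total_of_sameRay_vsub_left hray with h | h
    · exact ha (segment_symm ℝ o e ▸ mem_segment_iff_wbtw.2 h)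
    · exact he (mem_segment_iff_wbtw.2 h)

lemma IsSimplePolygon.exists_direction {n : ℕ} [NeZero n] {v : Fin n → Pt}
    (hv : IsSimplePolygon v) (i : Fin n) (hb : 0 < orient (v (i + 1)) (v (i + 1 + 1)) b)
    (hbc : 0 < orient (v (i + 1)) b c) (hc : 0 < orient (v (i + 1)) c (v i))
    (hdisj : Disjoint (openCell ![v (i + 1), v (i + 1 + 1), b]) (openCell ![v (i + 1), c, v i])) :
    ∃ d, 0 < det2 (v (i + 1 + 1) - v (i + 1)) d ∧ 0 < det2 (b - v (i + 1)) d ∧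
      0 < det2 d (c - v (i + 1)) ∧ 0 < det2 d (v i - v (i + 1)) := by
  have hne : ∀ j : Fin n, j + 1 ≠ j := add_one_ne_self (Nat.le_of_succ_le hv.1)
  have hne' : i + 1 + 1 ≠ i := add_one_add_one_ne_self hv.1 i
  exact exists_direction_of_disjoint_openCell hb hbc hc hdisj
    (fun h => (hv.eq_or_eq_of_mem_segment h).elim hne' (hne (i + 1)))
    (fun h => (hv.eq_or_eq_of_mem_segment h).elim (hne i).symm hne'.symm)

end Direction

/-! ### Tilings of a hexagon -/

section Hexagon

variable {w : Fin 6 → Pt} {p q r : Pt}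

lemma isConvexCell_triangle {u : Fin 3 → Pt} (h : 0 < orient (u 0) (u 1) (u 2)) :
    IsConvexCell u := by
  have edge : ∀ {a b c : Pt}, 0 < orient a b c →
      a ≠ b ∧ 0 ≤ orient a b a ∧ 0 ≤ orient a b b ∧ 0 ≤ orient a b c := by
    intro a b c h
    refine ⟨?_, (orient_left a b).ge, (orient_right a b).ge, h.le⟩
    rintro rfl
    exact h.ne (by simp [orient, det2])
  obtain ⟨h01, h010, h011, h012⟩ := edge h
  obtain ⟨h12, h121, h122, h120⟩ := edge (orient_rotate (u 0) (u 1) (u 2) ▸ h)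
  obtain ⟨h20, h202, h200, h201⟩ := edge (orient_rotate (u 2) (u 0) (u 1) ▸ h)
  refine ⟨by norm_num, fun i => ?_, fun i j => ?_⟩
  · fin_cases i <;> assumption
  · fin_cases i <;> fin_cases j <;> assumption

lemma sum_univ_edges_three (A : Pt → Pt → ℝ) (u : Fin 3 → Pt) :
    ∑ j, A (u j) (u (j + 1)) = A (u 0) (u 1) + A (u 1) (u 2) + A (u 2) (u 0) :=
  Fin.sum_univ_three _

lemma sum_univ_edges_four (A : Pt → Pt → ℝ) (a b c d : Pt) :
    ∑ j, A (quadVertex (a, b, c, d) j) (quadVertex (a, b, c, d) (j + 1)) =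
      A a b + A b c + A c d + A d a :=
  Fin.sum_univ_four _

lemma sum_univ_edges_six (A : Pt → Pt → ℝ) (w : Fin 6 → Pt) :
    ∑ i, A (w i) (w (i + 1)) =
      A (w 0) (w 1) + A (w 1) (w 2) + A (w 2) (w 3) + A (w 3) (w 4) + A (w 4) (w 5) +
        A (w 5) (w 0) :=
  Fin.sum_univ_six _

lemma polygonTiling_of_triangles {ι : Type*} [Fintype ι] {u : ι → Fin 3 → Pt}
    (hw : IsSimplePolygon w) (hσ : HasOrientation w 1)
    (hu : ∀ c, 0 < orient (u c 0) (u c 1) (u c 2))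
    (hsum : ∀ A : Pt → Pt → ℝ, (∀ a b, A b a = -A a b) →
      ∑ c, (A (u c 0) (u c 1) + A (u c 1) (u c 2) + A (u c 2) (u c 0)) =
        A (w 0) (w 1) + A (w 1) (w 2) + A (w 2) (w 3) + A (w 3) (w 4) + A (w 4) (w 5) +
          A (w 5) (w 0)) :
    PolygonTiling w u where
  isSimplePolygon := hw
  hasOrientation := hσ
  isConvexCell c := isConvexCell_triangle (hu c)
  sum_boundary A hA := by
    rw [sum_univ_edges_six, ← hsum A hA]
    exact Finset.sum_congr rfl fun c _ => sum_univ_edges_three A _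

lemma polygonTiling_of_quads {ι : Type*} [Fintype ι] {q : ι → Pt × Pt × Pt × Pt}
    (hw : IsSimplePolygon w) (hσ : HasOrientation w 1)
    (hq : ∀ c, StrictConvexQuad (q c).1 (q c).2.1 (q c).2.2.1 (q c).2.2.2)
    (hsum : ∀ A : Pt → Pt → ℝ, (∀ a b, A b a = -A a b) →
      ∑ c, (A (q c).1 (q c).2.1 + A (q c).2.1 (q c).2.2.1 + A (q c).2.2.1 (q c).2.2.2 +
          A (q c).2.2.2 (q c).1) =
        A (w 0) (w 1) + A (w 1) (w 2) + A (w 2) (w 3) + A (w 3) (w 4) + A (w 4) (w 5) +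
          A (w 5) (w 0)) :
    PolygonTiling w fun c => quadVertex (q c) where
  isSimplePolygon := hw
  hasOrientation := hσ
  isConvexCell c := (hq c).isConvexCell
  sum_boundary A hA := by
    rw [sum_univ_edges_six, ← hsum A hA]
    exact Finset.sum_congr rfl fun c _ => sum_univ_edges_four A _ _ _ _

lemma range_hexagon (w : Fin 6 → Pt) : Set.range w = {w 0, w 1, w 2, w 3, w 4, w 5} := by
  ext x
  simp [Fin.exists_fin_succ, eq_comm]

lemma hasConvexQuadrangulation_two (hw : IsSimplePolygon w) (hσ : HasOrientation w 1)
    (hp : p ∈ polyInterior w) (hr : r ∈ polyInterior w)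
    (h₀ : StrictConvexQuad (w 0) (w 1) (w 2) p) (h₁ : StrictConvexQuad p (w 2) (w 3) r)
    (h₂ : StrictConvexQuad r (w 3) (w 4) (w 5)) (h₃ : StrictConvexQuad r (w 5) (w 0) p) :
    HasConvexQuadrangulation w 2 := by
  classical
  set quad : Fin 4 → Pt × Pt × Pt × Pt := ![(w 0, w 1, w 2, p), (p, w 2, w 3, r),
    (r, w 3, w 4, w 5), (r, w 5, w 0, p)]
  have hquad : ∀ c, StrictConvexQuad (quad c).1 (quad c).2.1 (quad c).2.2.1 (quad c).2.2.2 :=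
    Fin.forall_fin_succ.2 ⟨h₀, Fin.forall_fin_succ.2 ⟨h₁, Fin.forall_fin_two.2 ⟨h₂, h₃⟩⟩⟩
  refine (polygonTiling_of_quads hw hσ hquad fun A hA => ?_).hasConvexQuadrangulation hquad
    (S := {p, r}) Finset.card_le_two (by simp [hp, hr]) ?_
  · simp only [quad, Fin.sum_univ_four, Matrix.cons_val]
    linarith [hA (w 2) p, hA p (w 0), hA (w 3) r, hA r p, hA (w 5) r]
  · ext x
    simp only [range_hexagon, ← coe_quadVerts, quadVerts, quad, Finset.coe_insert,
      Finset.coe_singleton, Set.mem_iUnion, Set.mem_insert_iff, Set.mem_singleton_iff,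
      Fin.exists_fin_succ, Matrix.cons_val_zero, Matrix.cons_val_succ, Matrix.cons_val_fin_one,
      exists_const, Set.union_insert, Set.union_singleton]
    tauto

lemma hasConvexQuadrangulation_three (hw : IsSimplePolygon w) (hσ : HasOrientation w 1)
    (hp : p ∈ polyInterior w) (hq : q ∈ polyInterior w) (hr : r ∈ polyInterior w)
    (h₀ : StrictConvexQuad (w 1) (w 2) (w 3) p) (h₁ : StrictConvexQuad (w 3) (w 4) (w 5) r)
    (h₂ : StrictConvexQuad (w 3) r q p) (h₃ : StrictConvexQuad r (w 5) (w 0) q)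
    (h₄ : StrictConvexQuad q (w 0) (w 1) p) : HasConvexQuadrangulation w 3 := by
  classical
  set quad : Fin 5 → Pt × Pt × Pt × Pt := ![(w 1, w 2, w 3, p), (w 3, w 4, w 5, r),
    (w 3, r, q, p), (r, w 5, w 0, q), (q, w 0, w 1, p)]
  have hquad : ∀ c, StrictConvexQuad (quad c).1 (quad c).2.1 (quad c).2.2.1 (quad c).2.2.2 :=
    Fin.forall_fin_succ.2 ⟨h₀, Fin.forall_fin_succ.2 ⟨h₁, Fin.forall_fin_succ.2 ⟨h₂,
      Fin.forall_fin_two.2 ⟨h₃, h₄⟩⟩⟩⟩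
  refine (polygonTiling_of_quads hw hσ hquad fun A hA => ?_).hasConvexQuadrangulation hquad
    (S := {p, q, r}) Finset.card_le_three (by simp [hp, hq, hr]) ?_
  · simp only [quad, Fin.sum_univ_five, Matrix.cons_val]
    linarith [hA (w 3) p, hA p (w 1), hA (w 5) r, hA r (w 3), hA r q, hA q p, hA (w 0) q]
  · ext x
    simp only [range_hexagon, ← coe_quadVerts, quadVerts, quad, Finset.coe_insert,
      Finset.coe_singleton, Set.mem_iUnion, Set.mem_insert_iff, Set.mem_singleton_iff,
      Fin.exists_fin_succ, Matrix.cons_val_zero, Matrix.cons_val_succ, Matrix.cons_val_fin_one,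
      exists_const, Set.union_insert, Set.union_singleton]
    tauto

end Hexagon

/-! ### Quadrangulations from triangulations -/

section Triangulated

variable {w : Fin 6 → Pt}

lemma polygonTiling_zig (hw : IsSimplePolygon w) (hσ : HasOrientation w 1)
    (h012 : 0 < orient (w 0) (w 1) (w 2)) (h023 : 0 < orient (w 0) (w 2) (w 3))
    (h035 : 0 < orient (w 0) (w 3) (w 5)) (h345 : 0 < orient (w 3) (w 4) (w 5)) :
    PolygonTiling w ![![w 0, w 1, w 2], ![w 0, w 2, w 3], ![w 0, w 3, w 5],
      ![w 3, w 4, w 5]] := by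
  refine polygonTiling_of_triangles hw hσ (Fin.forall_fin_succ.2 ⟨h012, Fin.forall_fin_succ.2
    ⟨h023, Fin.forall_fin_two.2 ⟨h035, h345⟩⟩⟩) fun A hA => ?_
  simp only [Fin.sum_univ_four, Matrix.cons_val]
  linarith [hA (w 0) (w 2), hA (w 0) (w 3), hA (w 3) (w 5)]

lemma polygonTiling_zag (hw : IsSimplePolygon w) (hσ : HasOrientation w 1)
    (h012 : 0 < orient (w 0) (w 1) (w 2)) (h025 : 0 < orient (w 0) (w 2) (w 5))
    (h235 : 0 < orient (w 2) (w 3) (w 5)) (h345 : 0 < orient (w 3) (w 4) (w 5)) :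
    PolygonTiling w ![![w 0, w 1, w 2], ![w 0, w 2, w 5], ![w 2, w 3, w 5],
      ![w 3, w 4, w 5]] := by
  refine polygonTiling_of_triangles hw hσ (Fin.forall_fin_succ.2 ⟨h012, Fin.forall_fin_succ.2
    ⟨h025, Fin.forall_fin_two.2 ⟨h235, h345⟩⟩⟩) fun A hA => ?_
  simp only [Fin.sum_univ_four, Matrix.cons_val]
  linarith [hA (w 0) (w 2), hA (w 2) (w 5), hA (w 3) (w 5)]

lemma polygonTiling_fan (hw : IsSimplePolygon w) (hσ : HasOrientation w 1)
    (h013 : 0 < orient (w 0) (w 1) (w 3)) (h123 : 0 < orient (w 1) (w 2) (w 3))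
    (h035 : 0 < orient (w 0) (w 3) (w 5)) (h345 : 0 < orient (w 3) (w 4) (w 5)) :
    PolygonTiling w ![![w 0, w 1, w 3], ![w 1, w 2, w 3], ![w 0, w 3, w 5],
      ![w 3, w 4, w 5]] := by
  refine polygonTiling_of_triangles hw hσ (Fin.forall_fin_succ.2 ⟨h013, Fin.forall_fin_succ.2
    ⟨h123, Fin.forall_fin_two.2 ⟨h035, h345⟩⟩⟩) fun A hA => ?_
  simp only [Fin.sum_univ_four, Matrix.cons_val]
  linarith [hA (w 1) (w 3), hA (w 0) (w 3), hA (w 3) (w 5)]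

lemma polygonTiling_star (hw : IsSimplePolygon w) (hσ : HasOrientation w 1)
    (h135 : 0 < orient (w 1) (w 3) (w 5)) (h123 : 0 < orient (w 1) (w 2) (w 3))
    (h345 : 0 < orient (w 3) (w 4) (w 5)) (h501 : 0 < orient (w 5) (w 0) (w 1)) :
    PolygonTiling w ![![w 1, w 3, w 5], ![w 1, w 2, w 3], ![w 3, w 4, w 5],
      ![w 5, w 0, w 1]] := by
  refine polygonTiling_of_triangles hw hσ (Fin.forall_fin_succ.2 ⟨h135, Fin.forall_fin_succ.2
    ⟨h123, Fin.forall_fin_two.2 ⟨h345, h501⟩⟩⟩) fun A hA => ?_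
  simp only [Fin.sum_univ_four, Matrix.cons_val]
  linarith [hA (w 1) (w 3), hA (w 3) (w 5), hA (w 5) (w 1)]

lemma hasConvexQuadrangulation_of_zig (hw : IsSimplePolygon w) (hσ : HasOrientation w 1)
    (h012 : 0 < orient (w 0) (w 1) (w 2)) (h023 : 0 < orient (w 0) (w 2) (w 3))
    (h035 : 0 < orient (w 0) (w 3) (w 5)) (h345 : 0 < orient (w 3) (w 4) (w 5)) :
    HasConvexQuadrangulation w 2 := by
  have T := polygonTiling_zig hw hσ h012 h023 h035 h345
  have h302 : 0 < orient (w 3) (w 0) (w 2) := orient_rotate (w 3) (w 0) (w 2) ▸ h023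
  have h350 : 0 < orient (w 3) (w 5) (w 0) := orient_rotate (w 0) (w 3) (w 5) ▸ h035
  have hdisj₀ : Disjoint (openCell ![w 0, w 1, w 2]) (openCell ![w 0, w 3, w 5]) :=
    T.disjoint_openCell (c := 0) (d := 2) (by decide)
  have hdisj₃ : Disjoint (openCell ![w 3, w 4, w 5]) (openCell ![w 3, w 0, w 2]) := by
    rw [← openCell_triangle_rotate (w 3) (w 0)]
    exact T.disjoint_openCell (c := 3) (d := 1) (by decide)
  obtain ⟨d, h1d, h2d, hd3, hd5⟩ := hw.exists_direction 5 h012 h023 h035 hdisj₀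
  obtain ⟨e, h4e, h5e, he0, he2⟩ := hw.exists_direction 2 h345 h350 h302 hdisj₃
  obtain ⟨t, hp, hr, q₀, q₁, q₂, q₃⟩ :=
    ((eventually_vertex_add_smul_mem_openCell h023 h2d hd3).and <|
      (eventually_vertex_add_smul_mem_openCell h350 h5e he0).and <|
      (eventually_strictConvexQuad_left tendsto_const_nhds tendsto_const_nhds h012 h1d h2d).and <|
      (eventually_strictConvexQuad_right (tendsto_add_smul_nhdsGT (w 0) d) tendsto_const_nhds h302
        he0 he2).and <|
      (eventually_strictConvexQuad_left tendsto_const_nhds tendsto_const_nhds h345 h4e h5e).and <|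
      eventually_strictConvexQuad_right (tendsto_add_smul_nhdsGT (w 3) e) tendsto_const_nhds h035
        hd3 hd5).exists
  rw [openCell_triangle_rotate] at hr
  exact hasConvexQuadrangulation_two hw hσ (T.openCell_subset 1 hp) (T.openCell_subset 2 hr) q₀
    q₁.rotate.rotate q₂.rotate.rotate.rotate q₃.rotate.rotate

lemma hasConvexQuadrangulation_of_zag (hw : IsSimplePolygon w) (hσ : HasOrientation w 1)
    (h012 : 0 < orient (w 0) (w 1) (w 2)) (h025 : 0 < orient (w 0) (w 2) (w 5))
    (h235 : 0 < orient (w 2) (w 3) (w 5)) (h345 : 0 < orient (w 3) (w 4) (w 5)) :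
    HasConvexQuadrangulation w 2 := by
  have T := polygonTiling_zag hw hσ h012 h025 h235 h345
  have h201 : 0 < orient (w 2) (w 0) (w 1) := orient_rotate (w 2) (w 0) (w 1) ▸ h012
  have h250 : 0 < orient (w 2) (w 5) (w 0) := orient_rotate (w 0) (w 2) (w 5) ▸ h025
  have h502 : 0 < orient (w 5) (w 0) (w 2) := orient_rotate (w 5) (w 0) (w 2) ▸ h025
  have h523 : 0 < orient (w 5) (w 2) (w 3) := orient_rotate (w 5) (w 2) (w 3) ▸ h235
  have h534 : 0 < orient (w 5) (w 3) (w 4) := orient_rotate (w 5) (w 3) (w 4) ▸ h345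
  have hdisj₂ : Disjoint (openCell ![w 2, w 3, w 5]) (openCell ![w 2, w 0, w 1]) := by
    rw [← openCell_triangle_rotate (w 2) (w 0)]
    exact T.disjoint_openCell (c := 2) (d := 0) (by decide)
  have hdisj₅ : Disjoint (openCell ![w 5, w 0, w 2]) (openCell ![w 5, w 3, w 4]) := by
    rw [← openCell_triangle_rotate (w 5) (w 0), ← openCell_triangle_rotate (w 5) (w 3)]
    exact T.disjoint_openCell (c := 1) (d := 3) (by decide)
  obtain ⟨d, h3d, h5d, hd0, hd1⟩ := hw.exists_direction 1 h235 h250 h201 hdisj₂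
  obtain ⟨e, h0e, h2e, he3, he4⟩ := hw.exists_direction 4 h502 h523 h534 hdisj₅
  obtain ⟨t, hp, hr, q₀, q₁, q₂, q₃⟩ :=
    ((eventually_vertex_add_smul_mem_openCell h250 h5d hd0).and <|
      (eventually_vertex_add_smul_mem_openCell h523 h2e he3).and <|
      (eventually_strictConvexQuad_right tendsto_const_nhds tendsto_const_nhds h201 hd0 hd1).and <|
      (eventually_strictConvexQuad_left tendsto_const_nhds (tendsto_add_smul_nhdsGT (w 5) e) h235
        h3d h5d).and <|
      (eventually_strictConvexQuad_right tendsto_const_nhds tendsto_const_nhds h534 he3 he4).and <|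
      eventually_strictConvexQuad_left tendsto_const_nhds (tendsto_add_smul_nhdsGT (w 2) d) h502
        h0e h2e).exists
  rw [openCell_triangle_rotate] at hp
  rw [← openCell_triangle_rotate] at hr
  exact hasConvexQuadrangulation_two hw hσ (T.openCell_subset 1 hp) (T.openCell_subset 2 hr)
    q₀.rotate.rotate q₁.rotate.rotate.rotate q₂.rotate q₃.rotate.rotate.rotate

lemma eventually_strictConvexQuad_of_outer {a b c d e x : Pt} (hc : 0 < orient a b c)
    (hx : 0 < orient b a x) (hbe : 0 < det2 (b - a) e) (hxe : 0 < det2 (x - a) e)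
    (hda : 0 < det2 d (a - b)) (hdx : 0 < det2 d (x - b)) :
    ∀ᶠ t : ℝ in 𝓝[>] 0, midpoint ℝ a b + t • (x - b) ∈ openCell ![b, a, x] ∧
      StrictConvexQuad (a + t • e) (midpoint ℝ a b + t • (x - b)) (b + t • d) c ∧
      StrictConvexQuad a x (midpoint ℝ a b + t • (x - b)) (a + t • e) ∧
      StrictConvexQuad b (b + t • d) (midpoint ℝ a b + t • (x - b)) x := by
  have hq := tendsto_add_smul_nhdsGT (midpoint ℝ a b) (x - b)
  have hax : 0 < orient a x (midpoint ℝ a b) := by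
    rw [orient_midpoint, orient_left, orient_rotate b]
    linarith
  have hbx : 0 < orient b (midpoint ℝ a b) x := by
    rw [← orient_rotate, ← orient_rotate, orient_midpoint, orient_right,
      ← orient_rotate x]
    linarith
  have hme : 0 < det2 (midpoint ℝ a b - a) e := by
    rw [det2_midpoint_sub_left]
    linarith
  have hdm : 0 < det2 d (midpoint ℝ a b - b) := by
    rw [midpoint_comm, det2_swap, det2_midpoint_sub_left, det2_swap]
    linarith
  have hxb : 0 < det2 (a - b) (x - b) := hx
  have hlag : 2 * det2 (b - a) (x - b) < det2 (b - a) d + det2 (b - a) e := by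
    rw [det2_sub_rev_left _ _ (x - b), det2_sub_rev_left _ _ d, ← det2_swap _ d]
    linarith
  refine .and ?_ <| (eventually_strictConvexQuad_flat hc hlag).and <|
    (eventually_strictConvexQuad_left tendsto_const_nhds hq hax hxe hme).and <|
      eventually_strictConvexQuad_right hq tendsto_const_nhds hbx hdm hdx
  exact midpoint_comm (R := ℝ) b a ▸ eventually_midpoint_add_smul_mem_openCell hx hxb

lemma hasConvexQuadrangulation_of_star (hw : IsSimplePolygon w) (hσ : HasOrientation w 1)
    (h135 : 0 < orient (w 1) (w 3) (w 5)) (h123 : 0 < orient (w 1) (w 2) (w 3))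
    (h345 : 0 < orient (w 3) (w 4) (w 5)) (h501 : 0 < orient (w 5) (w 0) (w 1)) :
    HasConvexQuadrangulation w 3 := by
  have T := polygonTiling_star hw hσ h135 h123 h345 h501
  have h150 : 0 < orient (w 1) (w 5) (w 0) := orient_rotate (w 1) (w 5) (w 0) ▸ h501
  have h513 : 0 < orient (w 5) (w 1) (w 3) := orient_rotate (w 5) (w 1) (w 3) ▸ h135
  have h534 : 0 < orient (w 5) (w 3) (w 4) := orient_rotate (w 5) (w 3) (w 4) ▸ h345
  have hdisj₁ : Disjoint (openCell ![w 1, w 2, w 3]) (openCell ![w 1, w 5, w 0]) := by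
    rw [← openCell_triangle_rotate (w 1) (w 5)]
    exact T.disjoint_openCell (c := 1) (d := 3) (by decide)
  have hdisj₅ : Disjoint (openCell ![w 5, w 0, w 1]) (openCell ![w 5, w 3, w 4]) := by
    rw [← openCell_triangle_rotate (w 5) (w 3)]
    exact T.disjoint_openCell (c := 3) (d := 2) (by decide)
  obtain ⟨d, h2d, h3d, hd5, hd0⟩ : ∃ d, 0 < det2 (w 2 - w 1) d ∧ 0 < det2 (w 3 - w 1) d ∧
      0 < det2 d (w 5 - w 1) ∧ 0 < det2 d (w 0 - w 1) :=
    hw.exists_direction 0 h123 h135 h150 hdisj₁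
  obtain ⟨e, h0e, h1e, he3, he4⟩ : ∃ e, 0 < det2 (w 0 - w 5) e ∧ 0 < det2 (w 1 - w 5) e ∧
      0 < det2 e (w 3 - w 5) ∧ 0 < det2 e (w 4 - w 5) :=
    hw.exists_direction 4 h501 h513 h534 hdisj₅
  obtain ⟨t, hp, hr, q₀, q₁, hq, q₂, q₃, q₄⟩ :=
    ((eventually_vertex_add_smul_mem_openCell h135 h3d hd5).and <|
      (eventually_vertex_add_smul_mem_openCell h513 h1e he3).and <|
      (eventually_strictConvexQuad_left tendsto_const_nhds tendsto_const_nhds h123 h2d h3d).and <|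
      (eventually_strictConvexQuad_right tendsto_const_nhds tendsto_const_nhds h534 he3 he4).and <|
      eventually_strictConvexQuad_of_outer h513 h150 h1e h0e hd5 hd0).exists
  rw [← openCell_triangle_rotate] at hr hq
  exact hasConvexQuadrangulation_three hw hσ (T.openCell_subset 0 hp) (T.openCell_subset 3 hq)
    (T.openCell_subset 0 hr) q₀ q₁.rotate.rotate q₂.rotate.rotate.rotate q₃.rotate.rotate.rotate
    q₄.rotate.rotate

/- `f` is a small multiple of `x - o`: small enough not to outrun `d`, while any positive multiple
moves away from the side to which `e` points. -/
lemma exists_eventually_strictConvexQuad_of_diagonal {o b x y d e : Pt} (hx : 0 < orient o b x)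
    (hy : 0 < orient b o y) (he : 0 < det2 e (b - o)) (hd : 0 < det2 (b - o) d)
    (hed : 0 < det2 e d) :
    ∃ f, ∀ᶠ t : ℝ in 𝓝[>] 0, midpoint ℝ o b + t • f ∈ openCell ![o, b, x] ∧
      StrictConvexQuad o (o + t • e) (midpoint ℝ o b + t • f) (o + t • d) ∧
      StrictConvexQuad b (midpoint ℝ o b + t • f) (o + t • e) y ∧
      StrictConvexQuad (o + t • d) (midpoint ℝ o b + t • f) b x := by
  obtain ⟨κ, hκ, hκd⟩ := exists_pos_add_mul_pos (-2 * orient o b x) hd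
  have hbf : det2 (b - o) (κ • (x - o)) = κ * orient o b x := det2_smul_right _ _ _
  have hbf_pos : 0 < det2 (b - o) (κ • (x - o)) := hbf ▸ mul_pos hκ hx
  have hem : 0 < det2 e (midpoint ℝ o b - o) := by
    rw [det2_swap, det2_midpoint_sub_left, det2_swap]
    linarith
  have hmd : 0 < det2 (midpoint ℝ o b - o) d := by
    rw [det2_midpoint_sub_left]
    linarith
  have hfd : 2 * det2 (b - o) (κ • (x - o)) < det2 (b - o) 0 + det2 (b - o) d := by
    rw [hbf, det2_zero_right]
    linarith
  have hfe : 2 * det2 (o - b) (κ • (x - o)) < det2 (o - b) e + det2 (o - b) 0 := by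
    rw [det2_sub_rev_left, det2_sub_rev_left o b e, ← det2_swap _ e, det2_zero_right]
    linarith
  have hflat_e := eventually_strictConvexQuad_flat hy hfe
  have hflat_d := eventually_strictConvexQuad_flat hx hfd
  simp only [smul_zero, add_zero, midpoint_comm b o] at hflat_e hflat_d
  exact ⟨κ • (x - o), (eventually_midpoint_add_smul_mem_openCell hx hbf_pos).and <|
    (eventually_strictConvexQuad_kite (tendsto_add_smul_nhdsGT _ _) hem hmd hed).and <|
      hflat_e.and hflat_d⟩

lemma det2_nonneg_or_nonneg_of_disjoint_openCell {o a b c e f : Pt} (hab : 0 < orient o a b)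
    (hbc : 0 < orient o b c) (hce : 0 < orient o c e) (hef : 0 < orient o e f)
    (hdisj : Disjoint (openCell ![o, a, b]) (openCell ![o, e, f])) :
    0 ≤ det2 (a - o) (c - o) ∨ 0 ≤ det2 (c - o) (f - o) := by
  by_contra! h
  have had : 0 < det2 (a - o) (o - c) := by
    rw [det2_swap, det2_sub_rev_left, neg_neg, det2_swap]
    exact neg_pos.2 h.1
  have hdb : 0 < det2 (o - c) (b - o) := by
    rw [det2_sub_rev_left, ← det2_swap]
    exact hbc
  have hed : 0 < det2 (e - o) (o - c) := by
    rw [det2_swap, det2_sub_rev_left, neg_neg]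
    exact hce
  have hdf : 0 < det2 (o - c) (f - o) := by
    rw [det2_sub_rev_left]
    exact neg_pos.2 h.2
  obtain ⟨t, habt, heft⟩ := ((eventually_vertex_add_smul_mem_openCell hab had hdb).and
    (eventually_vertex_add_smul_mem_openCell hef hed hdf)).exists
  exact Set.disjoint_left.1 hdisj habt heft

lemma hasConvexQuadrangulation_of_fan (hw : IsSimplePolygon w) (hσ : HasOrientation w 1)
    (h013 : 0 < orient (w 0) (w 1) (w 3)) (h123 : 0 < orient (w 1) (w 2) (w 3))
    (h035 : 0 < orient (w 0) (w 3) (w 5)) (h345 : 0 < orient (w 3) (w 4) (w 5)) :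
    HasConvexQuadrangulation w 3 := by
  have T := polygonTiling_fan hw hσ h013 h123 h035 h345
  have h350 : 0 < orient (w 3) (w 5) (w 0) := orient_rotate (w 0) (w 3) (w 5) ▸ h035
  have h301 : 0 < orient (w 3) (w 0) (w 1) := orient_rotate (w 3) (w 0) (w 1) ▸ h013
  have h312 : 0 < orient (w 3) (w 1) (w 2) := orient_rotate (w 3) (w 1) (w 2) ▸ h123
  have hdisj : Disjoint (openCell ![w 3, w 4, w 5]) (openCell ![w 3, w 1, w 2]) := by
    rw [← openCell_triangle_rotate (w 3) (w 1)]
    exact T.disjoint_openCell (c := 3) (d := 1) (by decide)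
  obtain ⟨d, e, ⟨h5e, he0, h4e⟩, ⟨h0d, hd1, hd2⟩, hed⟩ :=
    exists_direction_pair_of_det2 h345 h350 h301 h312
      (det2_nonneg_or_nonneg_of_disjoint_openCell h345 h350 h301 h312 hdisj)
  obtain ⟨f, hf⟩ := exists_eventually_strictConvexQuad_of_diagonal h301 h035 he0 h0d hed
  obtain ⟨t, hp, hr, q₀, q₁, hq, q₂, q₃, q₄⟩ :=
    ((eventually_vertex_add_smul_mem_openCell h301 h0d hd1).and <|
      (eventually_vertex_add_smul_mem_openCell h350 h5e he0).and <|
      (eventually_strictConvexQuad_right tendsto_const_nhds tendsto_const_nhds h312 hd1 hd2).and <|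
      (eventually_strictConvexQuad_left tendsto_const_nhds tendsto_const_nhds h345 h4e h5e).and
      hf).exists
  rw [openCell_triangle_rotate] at hr
  rw [← openCell_triangle_rotate] at hp hq
  exact hasConvexQuadrangulation_three hw hσ (T.openCell_subset 0 hp) (T.openCell_subset 0 hq)
    (T.openCell_subset 2 hr) q₀.rotate.rotate q₁ q₂ q₃.rotate.rotate q₄.rotate

end Triangulated

lemma HexagonTriangulation.hasConvexQuadrangulation {w : Fin 6 → Pt} (h : HexagonTriangulation 1 w)
    (hw : IsSimplePolygon w) (hσ : HasOrientation w 1) : HasConvexQuadrangulation w 3 := by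
  rcases h with ⟨h₀, h₁, h₂, h₃⟩ | ⟨h₀, h₁, h₂, h₃⟩ | ⟨h₀, h₁, h₂, h₃⟩ | ⟨h₀, h₁, h₂, h₃⟩ <;>
    simp only [HasTriangleSign, Int.cast_one, one_mul] at h₀ h₁ h₂ h₃
  · exact hasConvexQuadrangulation_of_fan hw hσ h₀ h₁ h₂ h₃
  · exact (hasConvexQuadrangulation_of_zig hw hσ h₀ h₁ h₂ h₃).mono (by norm_num)
  · exact (hasConvexQuadrangulation_of_zag hw hσ h₀ h₁ h₂ h₃).mono (by norm_num)
  · exact hasConvexQuadrangulation_of_star hw hσ h₀ h₁ h₂ h₃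

lemma HasOrientation.hasConvexQuadrangulation_three {v : Fin 6 → Pt} (hv : IsSimplePolygon v)
    (hσ : HasOrientation v 1) : HasConvexQuadrangulation v 3 := by
  obtain ⟨k, htri⟩ := hσ.exists_hexagonTriangulation hv
  exact (htri.hasConvexQuadrangulation (hv.shift k) (hσ.shift k)).of_cyclicShift

theorem hexagon_convex_quadrangulation_three_steiner_general (v : Fin 6 → Pt)
    (hsimple : IsSimplePolygon v) : HasConvexQuadrangulation v 3 :=
  hsimple.hasOrientation_one_or_reversal.elim
    (fun h => h.hasConvexQuadrangulation_three hsimple)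
    fun h => (h.hasConvexQuadrangulation_three hsimple.reverse).of_reversal

/-- Theorem 6 (theorem:hexquad).  Every simple hexagon can be partitioned into strictly
convex quadrilaterals using at most 3 Steiner points placed in its interior: the vertex
set of the decomposition consists of the 6 hexagon vertices plus at most 3 interior
points. -/
theorem hexagon_convex_quadrangulation_three_steiner (v : Fin 6 → Pt)
    (hsimple : IsSimplePolygon v) (hccw : IsCCW v) :
    ∃ (quads : Finset (Pt × Pt × Pt × Pt)) (Spts : Finset Pt),
      Spts.card ≤ 3 ∧
      (∀ p ∈ Spts, p ∈ polyInterior v) ∧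
      (∀ q ∈ quads, StrictConvexQuad q.1 q.2.1 q.2.2.1 q.2.2.2) ∧
      (⋃ q ∈ quads, quadSet q) = polyRegion v ∧
      (quadSet '' quads).Pairwise (fun A B => interior A ∩ interior B = ∅) ∧
      ((quads.biUnion quadVerts : Finset Pt) : Set Pt) = Set.range v ∪ (Spts : Set Pt) :=
  hexagon_convex_quadrangulation_three_steiner_general v hsimple
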